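/- Let X and Y be Borel subsets of the Cantor space 2^ω such that the subspaces X and Y are homogeneous and X ∉ Δ, Y ∉ Δ. Then the following are equivalent: (1) X and Y are homeomorphic; (2) X ≡_W Y and either both X and Y are first category (meager in themselves) or both X and Y are Baire spaces. -/

import Mathlib

open Set

abbrev Cantor := ℕ → Bool

def UpwardClosed (S : Set Cantor) : Prop :=
  ∀ x ∈ S, ∀ y : Cantor, (∀ n, x n = true → y n = true) → y ∈ S

def DownwardClosed (R : Set Cantor) : Prop :=
  ∀ y ∈ R, ∀ x : Cantor, (∀ n, x n = true → y n = true) → x ∈ R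

def ClosedUnderFinMod (S : Set Cantor) : Prop :=
  ∀ x ∈ S, ∀ y : Cantor, {n | x n ≠ y n}.Finite → y ∈ S

def IsSemifilter (S : Set Cantor) : Prop :=
  (fun _ => false) ∉ S ∧ (fun _ => true) ∈ S ∧ UpwardClosed S ∧ ClosedUnderFinMod S

def IsSemiideal (R : Set Cantor) : Prop :=
  (fun _ => false) ∈ R ∧ (fun _ => true) ∉ R ∧ DownwardClosed R ∧ ClosedUnderFinMod R

def ClosedUnderInter (S : Set Cantor) : Prop :=
  ∀ x ∈ S, ∀ y ∈ S, (fun n => x n && y n) ∈ S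

def IsFilterOnOmega (F : Set Cantor) : Prop := IsSemifilter F ∧ ClosedUnderInter F

def IsHomogeneous (X : Type*) [TopologicalSpace X] : Prop :=
  ∀ x y : X, ∃ h : X ≃ₜ X, h x = y

def IsFsigma (A : Set Cantor) : Prop :=
  ∃ F : ℕ → Set Cantor, (∀ n, IsClosed (F n)) ∧ A = ⋃ n, F n

def DOmegaSigmaTwo (X : Set Cantor) : Prop :=
  ∃ A : ℕ → Set Cantor, (∀ n, IsFsigma (A n)) ∧ Monotone A ∧
    X = ⋃ n ∈ {n : ℕ | Odd n}, (A n \ ⋃ m < n, A m)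

def InDelta (X : Set Cantor) : Prop := DOmegaSigmaTwo X ∧ DOmegaSigmaTwo Xᶜ

def WadgeLe (A B : Set Cantor) : Prop :=
  ∃ f : Cantor → Cantor, Continuous f ∧ A = f ⁻¹' B

def WadgeEquiv (A B : Set Cantor) : Prop := WadgeLe A B ∧ WadgeLe B A

def CompletelyMetrizable (X : Type*) [t : TopologicalSpace X] : Prop :=
  ∃ m : MetricSpace X, m.toUniformSpace.toTopologicalSpace = t ∧
    @CompleteSpace X m.toUniformSpace

def FirstCategory (X : Type*) [TopologicalSpace X] : Prop :=
  ∃ f : ℕ → Set X, (∀ n, interior (closure (f n)) = ∅) ∧ (Set.univ : Set X) = ⋃ n, f n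

def CantorFin : Set Cantor := {x | {n | x n = true}.Finite}

def BorelSet (X : Set Cantor) : Prop := @MeasurableSet Cantor (borel Cantor) X

/-!
Martin's coverings show that Borel games are determined, so for Borel `X` and `Y` either `X` reduces
continuously to `Y` or `Y` to the complement of `X`. By Lavrentiev's theorem, homeomorphisms of `Y`
extend to partial continuous maps with `Gδ` domains. If `Y` is homogeneous and not in `Δ`, such maps
can be composed infinitely often in the manner of Martin and Monk, and a reduction of `Y` to its
complement, even one defined only up to a set in `Δ`, would produce a Borel subset of the Cantor
space in which membership switches whenever a single coordinate is changed, contrary to the Baire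
property. Hence homeomorphic spaces are Wadge equivalent.

Conversely, the same rigidity shows that if `X ≤_W Y`, then `X`, coded redundantly by marked words,
still reduces to `Y` inside any clopen piece of the closure of `Y`. Since the codes leave room to
separate points, `X` reduces injectively to `Y` inside each such piece (Harrington). If `X` and `Y`
are both meagre, or both comeagre, in their closures, the meagre sides are covered by countably many
closed nowhere dense sets; a back-and-forth construction, extending homeomorphisms between closed
nowhere dense sets as Knaster and Reichbach do, matches these covers by a homeomorphism of the
closures which carries `X` onto `Y`. A homogeneous space is either meagre in itself or Baire.
-/

universe u

/-! ### Games and coverings -/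

/-- The space of plays of an infinite game without terminal positions. `Agree n x y` says that the
first `n` moves of `x` and `y` coincide; the positions of length `n` are the `Agree n`-classes. -/
structure GameSpace : Type (u + 1) where
  Play : Type u
  Agree : ℕ → Play → Play → Prop
  agree_refl : ∀ n x, Agree n x x
  agree_symm : ∀ {n x y}, Agree n x y → Agree n y x
  agree_trans : ∀ {n x y z}, Agree n x y → Agree n y z → Agree n x z
  agree_pred : ∀ {n x y}, Agree (n + 1) x y → Agree n x y
  agree_zero : ∀ x y, Agree 0 x y
  eq_of_agree : ∀ {x y}, (∀ n, Agree n x y) → x = y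
  exists_limit : ∀ s : ℕ → Play, (∀ n, Agree n (s n) (s (n + 1))) → ∃ x, ∀ n, Agree n x (s n)
  nonempty : Nonempty Play

namespace GameSpace

variable {G : GameSpace.{u}} {m n : ℕ} {x y z : G.Play}

instance : Nonempty G.Play := G.nonempty

theorem Agree.refl (n : ℕ) (x : G.Play) : G.Agree n x x := G.agree_refl n x

theorem Agree.symm (h : G.Agree n x y) : G.Agree n y x := G.agree_symm h

theorem Agree.trans (h : G.Agree n x y) (h' : G.Agree n y z) : G.Agree n x z := G.agree_trans h h'

theorem Agree.mono (h : G.Agree n x y) (hmn : m ≤ n) : G.Agree m x y := by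
  induction n, hmn using Nat.le_induction with
  | base => exact h
  | succ n _ ih => exact ih (G.agree_pred h)

theorem Agree.pred (h : G.Agree (n + 1) x y) : G.Agree n x y := G.agree_pred h

/-- The positions of length `n`, as a quotient of the plays. -/
def agreeSetoid (G : GameSpace.{u}) (n : ℕ) : Setoid G.Play :=
  ⟨G.Agree n, .refl n, .symm, .trans⟩

/-- A play chosen among those that extend the position of length `n` of `x`. -/
noncomputable def rep (G : GameSpace.{u}) (n : ℕ) (x : G.Play) : G.Play :=
  (Quotient.mk (G.agreeSetoid n) x).out

theorem rep_agree (n : ℕ) (x : G.Play) : G.Agree n (G.rep n x) x :=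
  Quotient.exact (s := G.agreeSetoid n) (Quotient.out_eq _)

theorem Agree.rep_eq (h : G.Agree n x y) : G.rep n x = G.rep n y := by
  rw [rep, rep, Quotient.sound (s := G.agreeSetoid n) h]

theorem rep_rep (h : m ≤ n) (x : G.Play) : G.rep m (G.rep n x) = G.rep m x :=
  ((rep_agree n x).mono h).rep_eq

/-- Sets of positions; `W n x` says that the position of length `n` of `x` belongs to `W`. -/
abbrev PosSet (G : GameSpace.{u}) := ℕ → G.Play → Prop

/-- `W n x` depends only on the position of length `n` of `x`. -/
def PosSet.Saturated (W : PosSet G) : Prop := ∀ ⦃n x y⦄, G.Agree n x y → W n x → W n y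

theorem exists_forall_posSet {R : PosSet G} {N : ℕ} (hR : R.Saturated)
    (hpred : ∀ n y, N ≤ n → R (n + 1) y → R n y)
    (hsucc : ∀ n y, N ≤ n → R n y → ∃ z, G.Agree n z y ∧ R (n + 1) z)
    (hn : N ≤ n) (hx : R n x) : ∃ z, G.Agree n z x ∧ ∀ m, N ≤ m → R m z := by
  have hsucc' : ∀ i y, ∃ z, n ≤ i → R i y → G.Agree i z y ∧ R (i + 1) z := by
    intro i y
    by_cases h : n ≤ i ∧ R i y
    · exact (hsucc i y (hn.trans h.1) h.2).imp fun z hz _ _ => hz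
    · exact ⟨x, fun h1 h2 => (h ⟨h1, h2⟩).elim⟩
  choose next hnext using hsucc'
  let t : ℕ → G.Play := fun i => Nat.rec x (fun i y => next (n + i) y) i
  have ht : ∀ i, R (n + i) (t i) := fun i => by
    induction i with
    | zero => exact hx
    | succ i ih => exact (hnext _ _ (by omega) ih).2
  obtain ⟨z, hz⟩ := G.exists_limit (fun i => t (i - n)) fun i => by
    rcases lt_or_ge i n with h | h
    · rw [Nat.sub_eq_zero_of_le h.le, Nat.sub_eq_zero_of_le h]
      exact .refl _ _
    · obtain ⟨l, rfl⟩ := Nat.exists_eq_add_of_le h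
      rw [Nat.add_sub_cancel_left, add_assoc, Nat.add_sub_cancel_left]
      exact (hnext _ _ (by omega) (ht l)).1.symm
  have hup : ∀ m, n ≤ m → R m z := fun m hm => by
    obtain ⟨l, rfl⟩ := Nat.exists_eq_add_of_le hm
    have hl := hz (n + l)
    rw [Nat.add_sub_cancel_left] at hl
    exact hR hl.symm (ht l)
  refine ⟨z, by simpa [t] using hz n, fun m hm => ?_⟩
  rcases le_total n m with h | h
  · exact hup m h
  · exact Nat.decreasingInduction' (P := fun i => R i z)
      (fun i _ hi ih => hpred i z (hm.trans hi) ih) h (hup n le_rfl)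

/-- Closedness in the topology whose basic open sets are the sets of plays through a position. -/
def IsClosedSet (G : GameSpace.{u}) (A : Set G.Play) : Prop :=
  ∀ x ∉ A, ∃ n, ∀ y, G.Agree n y x → y ∉ A

/-- Membership of a play in `A` depends only on its first `N` moves. -/
def DecidedAt (G : GameSpace.{u}) (N : ℕ) (A : Set G.Play) : Prop :=
  ∀ x y, G.Agree N x y → (x ∈ A ↔ y ∈ A)

end GameSpace

open GameSpace

/-- A rule prescribing a next move at every position, in the form of a play `move n x` that extends
the position of length `n` of `x`; only the first `n + 1` moves of `move n x` matter. Such a rule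
serves both players: player `b : Fin 2` uses it in the rounds `n` with `n % 2 = b`. -/
structure Strategy (G : GameSpace.{u}) where
  move : ℕ → G.Play → G.Play
  move_agree : ∀ n x, G.Agree n (move n x) x
  move_congr : ∀ {n x y}, G.Agree n x y → G.Agree (n + 1) (move n x) (move n y)

namespace Strategy

variable {G : GameSpace.{u}} {n : ℕ}

open Classical in
/-- The strategy that evaluates `g` at chosen representatives of positions, ignoring its value when
it does not extend the position. -/
noncomputable def ofMove (g : ℕ → G.Play → G.Play) : Strategy G where
  move n x := if G.Agree n (g n (G.rep n x)) (G.rep n x) then g n (G.rep n x) else G.rep n x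
  move_agree n x := by
    split_ifs with h
    · exact h.trans (rep_agree n x)
    · exact rep_agree n x
  move_congr h := by
    rw [h.rep_eq]
    exact .refl _ _

noncomputable instance : Nonempty (Strategy G) := ⟨ofMove fun _ x => x⟩

theorem ofMove_move {g : ℕ → G.Play → G.Play} {x : G.Play} (h : G.Agree n (g n (G.rep n x)) x) :
    (ofMove g).move n x = g n (G.rep n x) :=
  if_pos (h.trans (rep_agree n x).symm)

theorem ofMove_move_congr {g g' : ℕ → G.Play → G.Play}
    (h : ∀ x, G.Agree (n + 1) (g n x) (g' n x)) (x : G.Play) :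
    G.Agree (n + 1) ((ofMove g).move n x) ((ofMove g').move n x) := by
  have hg := h (G.rep n x)
  have hiff : G.Agree n (g n (G.rep n x)) (G.rep n x) ↔ G.Agree n (g' n (G.rep n x)) (G.rep n x) :=
    ⟨hg.pred.symm.trans, hg.pred.trans⟩
  by_cases hx : G.Agree n (g n (G.rep n x)) (G.rep n x)
  · simpa only [ofMove, if_pos hx, if_pos (hiff.1 hx)] using hg
  · simpa only [ofMove, if_neg hx, if_neg (mt hiff.2 hx)] using .refl _ _

/-- In the play `x`, player `b` follows `σ`. -/
def Consistent (σ : Strategy G) (b : Fin 2) (x : G.Play) : Prop :=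
  ∀ n : ℕ, n % 2 = b → G.Agree (n + 1) x (σ.move n x)

/-- `σ` and `τ` prescribe the same moves in the first `n` rounds. -/
def AgreeBelow (n : ℕ) (σ τ : Strategy G) : Prop :=
  ∀ m < n, ∀ x, G.Agree (m + 1) (σ.move m x) (τ.move m x)

namespace AgreeBelow

variable {σ τ υ : Strategy G}

theorem refl (n : ℕ) (σ : Strategy G) : AgreeBelow n σ σ := fun _ _ _ => .refl _ _

theorem mono {m : ℕ} (h : AgreeBelow n σ τ) (hmn : m ≤ n) : AgreeBelow m σ τ :=
  fun i hi x => h i (hi.trans_le hmn) x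

theorem symm (h : AgreeBelow n σ τ) : AgreeBelow n τ σ := fun i hi x => (h i hi x).symm

theorem trans (h : AgreeBelow n σ τ) (h' : AgreeBelow n τ υ) : AgreeBelow n σ υ :=
  fun i hi x => (h i hi x).trans (h' i hi x)

end AgreeBelow

end Strategy

/-- Martin's coverings: `H` plays the role of a game that maps onto `G`, is identical to `G` for the
first `k` moves, and from which strategies can be pushed forward continuously (`push_congr`) in such
a way that plays consistent with the pushed strategy lift. -/
structure Covering (k : ℕ) (H G : GameSpace.{u}) where
  proj : H.Play → G.Play
  proj_agree : ∀ {n x y}, H.Agree n x y → G.Agree n (proj x) (proj y)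
  agree_of_proj : ∀ {n x y}, n ≤ k → G.Agree n (proj x) (proj y) → H.Agree n x y
  exists_proj_agree : ∀ x, ∃ x', G.Agree k (proj x') x
  push : Fin 2 → Strategy H → Strategy G
  push_congr : ∀ b {n σ τ}, σ.AgreeBelow n τ → (push b σ).AgreeBelow n (push b τ)
  push_move : ∀ b σ, ∀ m < k, ∀ x, G.Agree (m + 1) ((push b σ).move m (proj x)) (proj (σ.move m x))
  exists_lift : ∀ b σ x, (push b σ).Consistent b x → ∃ x', proj x' = x ∧ σ.Consistent b x'

namespace Covering

/-- Composition of coverings. -/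
def trans {k : ℕ} {J H G : GameSpace.{u}} (c : Covering k J H) (d : Covering k H G) :
    Covering k J G where
  proj x := d.proj (c.proj x)
  proj_agree h := d.proj_agree (c.proj_agree h)
  agree_of_proj hn h := c.agree_of_proj hn (d.agree_of_proj hn h)
  exists_proj_agree x := by
    obtain ⟨y, hy⟩ := d.exists_proj_agree x
    obtain ⟨z, hz⟩ := c.exists_proj_agree y
    exact ⟨z, (d.proj_agree hz).trans hy⟩
  push b σ := d.push b (c.push b σ)
  push_congr b _ _ _ h := d.push_congr b (c.push_congr b h)
  push_move b σ m hm x :=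
    (d.push_move b _ m hm _).trans (d.proj_agree (c.push_move b σ m hm x))
  exists_lift b σ x h := by
    obtain ⟨y, rfl, hc⟩ := d.exists_lift b _ x h
    obtain ⟨z, rfl, hc'⟩ := c.exists_lift b _ y hc
    exact ⟨z, rfl, hc'⟩

/-- An `l`-covering is a `k`-covering for every `k ≤ l`. -/
def mono {k l : ℕ} {H G : GameSpace.{u}} (c : Covering l H G) (h : k ≤ l) : Covering k H G where
  __ := c
  agree_of_proj hn := c.agree_of_proj (hn.trans h)
  exists_proj_agree x := (c.exists_proj_agree x).imp fun _ hy => hy.mono h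
  push_move b σ m hm := c.push_move b σ m (hm.trans_le h)

/-- The covering turns `A` into a clopen set decided at a finite stage. -/
def Unravels {k : ℕ} {H G : GameSpace.{u}} (c : Covering k H G) (A : Set G.Play) : Prop :=
  ∃ N, H.DecidedAt N (c.proj ⁻¹' A)

end Covering

namespace GameSpace

variable {G : GameSpace.{u}}

/-- Positions from which player `b` can force the play into a position in `W`. -/
inductive Forces (b : Fin 2) (W : PosSet G) : PosSet G
  | base {n x} : W n x → Forces b W n x
  | own {n : ℕ} {x y} : n % 2 = b → G.Agree n y x → Forces b W (n + 1) y → Forces b W n x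
  | opp {n : ℕ} {x} : n % 2 ≠ b → (∀ y, G.Agree n y x → Forces b W (n + 1) y) → Forces b W n x

variable {b : Fin 2} {W : PosSet G} {m n : ℕ} {x y z : G.Play}

theorem Forces.saturated (hW : W.Saturated) : PosSet.Saturated (Forces b W) := by
  intro n x y hxy h
  cases h with
  | base h => exact .base (hW hxy h)
  | own hn hz h => exact .own hn (hz.trans hxy) h
  | opp hn h => exact .opp hn fun z hz => h z (hz.trans hxy.symm)

theorem exists_not_forces_succ (hn : n % 2 ≠ b) (h : ¬ Forces b W n x) :
    ∃ z, G.Agree n z x ∧ ¬ Forces b W (n + 1) z := by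
  by_contra! hall
  exact h (.opp hn hall)

/-- From the position of length `n` of `x` on, `σ` makes player `b` reach `W`. -/
def Reaches (b : Fin 2) (W : PosSet G) (n : ℕ) (x : G.Play) (σ : Strategy G) : Prop :=
  ∀ y, G.Agree n y x → (∀ m : ℕ, n ≤ m → m % 2 = b → G.Agree (m + 1) y (σ.move m y)) →
    ∃ i, n ≤ i ∧ W i y

end GameSpace

namespace Strategy

variable {G : GameSpace.{u}} {b : Fin 2} {W : PosSet G} {m n : ℕ} {x y z : G.Play}

open Classical in
/-- Play towards `z` in round `n`, then follow the strategy that `ω` attaches to the position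
reached. -/
noncomputable def redirect (n : ℕ) (z : G.Play) (ω : G.Play → Strategy G) : Strategy G :=
  ofMove fun m y => if m ≤ n then z else (ω (G.rep (n + 1) y)).move m y

theorem redirect_move_self {ω : G.Play → Strategy G} (h : G.Agree n z y) :
    (redirect n z ω).move n y = z := by
  rw [redirect, ofMove_move] <;> simp only [le_refl, if_true, h]

theorem redirect_move_of_lt {ω : G.Play → Strategy G} (h : n < m) :
    G.Agree (m + 1) ((redirect n z ω).move m y) ((ω (G.rep (n + 1) y)).move m y) := by
  have hmove : ∀ y, (ω (G.rep (n + 1) (G.rep m y))).move m (G.rep m y) =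
      (ω (G.rep (n + 1) y)).move m (G.rep m y) := fun y => by rw [rep_rep h]
  rw [redirect, ofMove_move] <;> simp only [h.not_ge, if_false, hmove]
  · exact (ω _).move_congr (rep_agree m y)
  · exact ((ω _).move_agree m _).trans (rep_agree m y)

theorem reaches_redirect {ω : G.Play → Strategy G} (hz : G.Agree n z x)
    (h : ∀ y, G.Agree n y x → (n % 2 = b → G.Agree (n + 1) y z) → Reaches b W (n + 1) y (ω y)) :
    Reaches b W n x (redirect n z ω) := by
  intro y hy hfollow
  have hrep : G.Agree (n + 1) (G.rep (n + 1) y) y := rep_agree _ y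
  have hmove : n % 2 = b → G.Agree (n + 1) (G.rep (n + 1) y) z := fun hn =>
    hrep.trans (redirect_move_self (hz.trans hy.symm) ▸ hfollow n le_rfl hn)
  obtain ⟨i, hi, hw⟩ := h _ (hrep.pred.trans hy) hmove y hrep.symm fun m hm hmb =>
    (hfollow m (by omega) hmb).trans (redirect_move_of_lt hm)
  exact ⟨i, by omega, hw⟩

end Strategy

namespace GameSpace

variable {G : GameSpace.{u}} {b : Fin 2} {W : PosSet G} {n : ℕ} {x : G.Play}

theorem Forces.exists_reaches (hW : W.Saturated) (h : Forces b W n x) :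
    ∃ σ, Reaches b W n x σ := by
  induction h with
  | @base n x h => exact ⟨Classical.arbitrary _, fun y hy _ => ⟨n, le_rfl, hW hy.symm h⟩⟩
  | @own n x z hn hz _ ih =>
    obtain ⟨ω, hω⟩ := ih
    exact ⟨.redirect n z fun _ => ω, Strategy.reaches_redirect hz fun y _ hyz y' hy' =>
      hω y' (hy'.trans (hyz hn))⟩
  | @opp n x _ _ ih =>
    choose! ω hω using ih
    exact ⟨.redirect n x ω, Strategy.reaches_redirect (.refl _ _) fun y hy _ => hω y hy⟩

theorem exists_forall_not_forces (hW : W.Saturated) (h0 : ∀ x, ¬ Forces b W 0 x) :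
    ∃ σ : Strategy G, ∀ y, (∀ m : ℕ, m % 2 ≠ b → G.Agree (m + 1) y (σ.move m y)) →
      ∀ n, ¬ Forces b W n y := by
  have escape : ∀ (n : ℕ) x, ∃ z, n % 2 ≠ b → ¬ Forces b W n x →
      G.Agree n z x ∧ ¬ Forces b W (n + 1) z := fun n x => by
    by_cases h : n % 2 ≠ b ∧ ¬ Forces b W n x
    · exact (exists_not_forces_succ h.1 h.2).imp fun _ hz _ _ => hz
    · exact ⟨x, fun h1 h2 => (h ⟨h1, h2⟩).elim⟩
  choose g hg using escape
  have hsat := Forces.saturated (b := b) hW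
  refine ⟨.ofMove g, fun y hy n => ?_⟩
  induction n with
  | zero => exact h0 y
  | succ n ih =>
    by_cases hn : n % 2 = b
    · exact fun h => ih (.own hn (.refl _ _) h)
    · obtain ⟨hagree, hnot⟩ := hg n (G.rep n y) hn fun h => ih (hsat (rep_agree n y) h)
      have hmove := hy n hn
      rw [Strategy.ofMove_move (hagree.trans (rep_agree n y))] at hmove
      exact fun h => hnot (hsat hmove h)

/-- One of the players has a winning strategy in the game where player `0` wants to end in `A`. -/
def Determined (G : GameSpace.{u}) (A : Set G.Play) : Prop :=
  (∃ σ : Strategy G, ∀ x, σ.Consistent 0 x → x ∈ A) ∨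
    ∃ σ : Strategy G, ∀ x, σ.Consistent 1 x → x ∉ A

theorem DecidedAt.determined {N : ℕ} {A : Set G.Play} (hA : G.DecidedAt N A) : G.Determined A := by
  let W : PosSet G := fun n x => n = N ∧ x ∈ A
  have hW : W.Saturated := by
    rintro n x y h ⟨rfl, hx⟩
    exact ⟨rfl, (hA x y h).1 hx⟩
  by_cases h : ∃ x, Forces 0 W 0 x
  · obtain ⟨x, hx⟩ := h
    obtain ⟨σ, hσ⟩ := hx.exists_reaches hW
    refine .inl ⟨σ, fun y hy => ?_⟩
    obtain ⟨i, -, -, hi⟩ := hσ y (G.agree_zero _ _) fun m _ hm => hy m hm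
    exact hi
  · obtain ⟨σ, hσ⟩ := exists_forall_not_forces hW (not_exists.1 h)
    exact .inr ⟨σ, fun y hy hA =>
      hσ y (fun m hm => hy m (Nat.mod_two_ne_zero.1 hm)) N (.base ⟨rfl, hA⟩)⟩

theorem _root_.Covering.Unravels.determined {k : ℕ} {H : GameSpace.{u}} {c : Covering k H G}
    {A : Set G.Play} (h : c.Unravels A) : G.Determined A := by
  obtain ⟨N, hN⟩ := h
  rcases hN.determined with ⟨σ, hσ⟩ | ⟨σ, hσ⟩
  · refine .inl ⟨c.push 0 σ, fun x hx => ?_⟩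
    obtain ⟨y, rfl, hy⟩ := c.exists_lift 0 σ x hx
    exact hσ y hy
  · refine .inr ⟨c.push 1 σ, fun x hx => ?_⟩
    obtain ⟨y, rfl, hy⟩ := c.exists_lift 1 σ x hx
    exact hσ y hy

/-- A game whose plays project to plays of `G`, such as the stages of an iterated unravelling. -/
structure GameOver (G : GameSpace.{u}) where
  game : GameSpace.{u}
  proj : game.Play → G.Play
  proj_agree : ∀ {n x y}, game.Agree n x y → G.Agree n (proj x) (proj y)

/-- Martin's inductive hypothesis: `A` can be unravelled, by a covering that fixes arbitrarily many
moves, even after other sets have been unravelled. -/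
def UniversallyUnravelable (G : GameSpace.{u}) (A : Set G.Play) : Prop :=
  ∀ (H : GameOver G) (k : ℕ),
    ∃ (J : GameSpace.{u}) (c : Covering k J H.game), c.Unravels (H.proj ⁻¹' A)

namespace UniversallyUnravelable

variable {A : Set G.Play}

theorem compl (h : G.UniversallyUnravelable A) : G.UniversallyUnravelable Aᶜ := by
  intro H k
  obtain ⟨J, c, N, hN⟩ := h H k
  exact ⟨J, c, N, fun x y hxy => not_congr (hN x y hxy)⟩

theorem determined (h : G.UniversallyUnravelable A) : G.Determined A :=
  let ⟨_, _, hc⟩ := h ⟨G, id, id⟩ 0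
  hc.determined

end UniversallyUnravelable

end GameSpace

/-! ### Inverse limits of coverings -/

/-- Iterate the bonding maps `d` of an inverse sequence. -/
def iterProj {F : ℕ → Type u} (d : ∀ i, F (i + 1) → F i) {i a : ℕ} (h : i ≤ a) : F a → F i :=
  Nat.leRec (motive := fun a _ => F a → F i) id (fun a _ f y => f (d a y)) h

section IterProj

variable {F : ℕ → Type u} (d : ∀ i, F (i + 1) → F i) {i a : ℕ}

theorem iterProj_self (y : F i) : iterProj d le_rfl y = y := by
  rw [iterProj, Nat.leRec_self, id]

theorem iterProj_succ (h : i ≤ a) (y : F (a + 1)) :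
    iterProj d (Nat.le_succ_of_le h) y = iterProj d h (d a y) := by
  rw [iterProj, Nat.leRec_succ _ _ h, iterProj]

theorem map_iterProj (h : i + 1 ≤ a) (y : F a) :
    d i (iterProj d h y) = iterProj d (Nat.le_of_succ_le h) y := by
  induction a, h using Nat.le_induction with
  | base => rw [iterProj_self, iterProj_succ d le_rfl, iterProj_self]
  | succ a ha ih => rw [iterProj_succ d ha, ih, iterProj_succ d (Nat.le_of_succ_le ha)]

end IterProj

/-- An inverse sequence of games in which the `i`-th bonding map fixes the first `k + i` moves. -/
structure CoveringTower (k : ℕ) where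
  game : ℕ → GameSpace.{u}
  cov : ∀ i, Covering (k + i) (game (i + 1)) (game i)

namespace CoveringTower

variable {k : ℕ} (T : CoveringTower.{u} k) {b : Fin 2} {i j m n : ℕ}

/-- The projection of the `a`-th game of the tower to the `i`-th one. -/
def proj {i a : ℕ} (h : i ≤ a) : (T.game a).Play → (T.game i).Play :=
  iterProj (F := fun i => (T.game i).Play) (fun i => (T.cov i).proj) h

theorem agree_proj (h : i ≤ j) {x y : (T.game j).Play} (hxy : (T.game j).Agree n x y) :
    (T.game i).Agree n (T.proj h x) (T.proj h y) := by
  induction j, h using Nat.le_induction with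
  | base => rwa [proj, iterProj_self, iterProj_self]
  | succ a ha ih =>
    rw [proj, iterProj_succ _ ha, iterProj_succ _ ha]
    exact ih ((T.cov a).proj_agree hxy)

theorem exists_approximate_thread (j : ℕ) (x : (T.game j).Play) :
    ∃ u : ∀ i, (T.game i).Play, u j = x ∧
      ∀ i, j ≤ i → (T.game i).Agree (k + i) ((T.cov i).proj (u (i + 1))) (u i) := by
  choose v hv using fun i => (T.cov i).exists_proj_agree
  let u : ∀ i, (T.game i).Play := fun i => if h : j ≤ i then
    Nat.leRec (motive := fun i _ => (T.game i).Play) x (fun a _ y => v a y) h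
    else Classical.arbitrary _
  refine ⟨u, by simp only [u, le_refl, dif_pos, Nat.leRec_self], fun i hi => ?_⟩
  have hu : u (i + 1) = v i (u i) := by
    simp only [u, hi, Nat.le_succ_of_le hi, dif_pos, Nat.leRec_succ _ _ hi]
  exact hu ▸ hv i _

theorem exists_thread (j : ℕ) (x : (T.game j).Play) :
    ∃ y : ∀ i, (T.game i).Play, (∀ i, (T.cov i).proj (y (i + 1)) = y i) ∧
      (T.game j).Agree (k + j) (y j) x := by
  obtain ⟨u, rfl, hu⟩ := T.exists_approximate_thread j x
  have hstep : ∀ i a (hi : i ≤ a), j ≤ a →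
      (T.game i).Agree (k + a) (T.proj (Nat.le_succ_of_le hi) (u (a + 1))) (T.proj hi (u a)) := by
    intro i a hi hj
    rw [proj, iterProj_succ _ hi]
    exact T.agree_proj hi (hu a hj)
  choose y hy using fun i => (T.game i).exists_limit
    (fun n => T.proj (by omega) (u (i + j + n))) fun n =>
      ((hstep i (i + j + n) (by omega) (by omega)).mono (by omega)).symm
  have hlim : ∀ i n a (h : i + j + n ≤ a),
      (T.game i).Agree n (y i) (T.proj (by omega) (u a)) := by
    intro i n a h
    induction a, h using Nat.le_induction with
    | base => exact hy i n
    | succ a ha ih => exact ih.trans ((hstep i a (by omega) (by omega)).mono (by omega)).symm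
  have hbase : ∀ a (h : j ≤ a), (T.game j).Agree (k + j) (T.proj h (u a)) (u j) := by
    intro a h
    induction a, h using Nat.le_induction with
    | base => rw [proj, iterProj_self]; exact .refl _ _
    | succ a ha ih => exact ((hstep j a ha ha).mono (by omega)).trans ih
  refine ⟨y, fun i => (T.game i).eq_of_agree fun n => ?_, ?_⟩
  · have h := (T.cov i).proj_agree (hlim (i + 1) n (i + 1 + j + n) le_rfl)
    rw [proj, map_iterProj (F := fun i => (T.game i).Play) (fun i => (T.cov i).proj)] at h
    exact h.trans (hlim i n _ (by omega)).symm
  · exact (hlim j (k + j) _ le_rfl).trans (hbase _ _)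

/-- The inverse limit of a tower of coverings. -/
def limit : GameSpace.{u} where
  Play := {x : ∀ i, (T.game i).Play // ∀ i, (T.cov i).proj (x (i + 1)) = x i}
  Agree n x y := ∀ i, (T.game i).Agree n (x.1 i) (y.1 i)
  agree_refl _ _ _ := .refl _ _
  agree_symm h i := (h i).symm
  agree_trans h h' i := (h i).trans (h' i)
  agree_pred h i := (h i).pred
  agree_zero _ _ i := (T.game i).agree_zero _ _
  eq_of_agree h := Subtype.ext (funext fun i => (T.game i).eq_of_agree fun n => h n i)
  exists_limit s hs := by
    choose x hx using fun i => (T.game i).exists_limit (fun n => (s n).1 i) fun n => hs n i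
    refine ⟨⟨x, fun i => (T.game i).eq_of_agree fun n => ?_⟩, fun n i => hx i n⟩
    have h := (T.cov i).proj_agree (hx (i + 1) n)
    rw [(s n).2 i] at h
    exact h.trans (hx i n).symm
  nonempty :=
    let ⟨y, hy, _⟩ := T.exists_thread 0 (Classical.arbitrary _)
    ⟨⟨y, hy⟩⟩

variable {T}

theorem agree_of_agree_apply (hn : n ≤ k + j) {x y : T.limit.Play}
    (h : (T.game j).Agree n (x.1 j) (y.1 j)) : T.limit.Agree n x y := by
  intro i
  rcases le_total j i with hi | hi
  · induction i, hi using Nat.le_induction with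
    | base => exact h
    | succ i hi ih =>
      rw [← x.2 i, ← y.2 i] at ih
      exact (T.cov i).agree_of_proj (by omega) ih
  · refine Nat.decreasingInduction (motive := fun i _ => (T.game i).Agree n (x.1 i) (y.1 i))
      (fun i _ ih => ?_) h hi
    rw [← x.2 i, ← y.2 i]
    exact (T.cov i).proj_agree ih

/-- A point of the limit whose `j`-th coordinate starts like `x` for `k + j` moves. -/
noncomputable def extend (j : ℕ) (x : (T.game j).Play) : T.limit.Play :=
  ⟨(T.exists_thread j x).choose, (T.exists_thread j x).choose_spec.1⟩

theorem extend_agree (j : ℕ) (x : (T.game j).Play) :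
    (T.game j).Agree (k + j) ((extend j x).1 j) x :=
  (T.exists_thread j x).choose_spec.2

open Classical in
/-- The strategy induced by `σ` in the `j`-th game, which is identical to the limit game in the
rounds below `k + j`; the later rounds are filled in arbitrarily. -/
noncomputable def truncate (σ : Strategy T.limit) (j : ℕ) : Strategy (T.game j) :=
  .ofMove fun m x => if m < k + j then (σ.move m (extend j x)).1 j else x

theorem truncate_move (σ : Strategy T.limit) (hm : m < k + j) (x : T.limit.Play) :
    (T.game j).Agree (m + 1) ((truncate σ j).move m (x.1 j)) ((σ.move m x).1 j) := by
  have hx : T.limit.Agree m (extend j ((T.game j).rep m (x.1 j))) x :=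
    agree_of_agree_apply hm.le (((extend_agree j _).mono hm.le).trans (rep_agree m _))
  rw [truncate, Strategy.ofMove_move] <;> simp only [hm, if_true]
  · exact σ.move_congr hx j
  · exact ((σ.move_agree m _).trans hx) j

theorem truncate_congr {σ τ : Strategy T.limit} (h : σ.AgreeBelow n τ) :
    (truncate σ j).AgreeBelow n (truncate τ j) := by
  refine fun m hm => Strategy.ofMove_move_congr fun x => ?_
  split_ifs
  · exact h m hm _ j
  · exact .refl _ _

/-- Push a strategy of the `j`-th game down to the `i`-th one. -/
def push (b : Fin 2) (h : i ≤ j) : Strategy (T.game j) → Strategy (T.game i) :=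
  iterProj (F := fun i => Strategy (T.game i)) (fun i => (T.cov i).push b) h

theorem push_self (σ : Strategy (T.game i)) : push b le_rfl σ = σ := iterProj_self _ _

theorem push_congr (h : i ≤ j) {σ τ : Strategy (T.game j)} (hσ : σ.AgreeBelow n τ) :
    (push b h σ).AgreeBelow n (push b h τ) := by
  induction j, h using Nat.le_induction with
  | base => rwa [push_self, push_self]
  | succ a ha ih =>
    rw [push, iterProj_succ _ ha, iterProj_succ _ ha]
    exact ih ((T.cov a).push_congr b hσ)

theorem push_truncate_succ (σ : Strategy T.limit) (j : ℕ) :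
    ((T.cov j).push b (truncate σ (j + 1))).AgreeBelow (k + j) (truncate σ j) := by
  intro m hm x
  have hx : (T.game j).Agree m ((extend j x).1 j) x := (extend_agree j x).mono hm.le
  have hpush := (T.cov j).push_move b (truncate σ (j + 1)) m hm ((extend j x).1 (j + 1))
  have hσ := (T.cov j).proj_agree (truncate_move σ (show m < k + (j + 1) by omega) (extend j x))
  rw [(extend j x).2 j] at hpush
  rw [(σ.move m (extend j x)).2 j] at hσ
  exact (((Strategy.move_congr _ hx).symm.trans hpush).trans hσ).trans
    ((truncate_move σ hm _).symm.trans (Strategy.move_congr _ hx))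

theorem push_truncate_agreeBelow (σ : Strategy T.limit) {j' : ℕ} (hi : i ≤ j) (hj : j ≤ j') :
    (push b (hi.trans hj) (truncate σ j')).AgreeBelow (k + j) (push b hi (truncate σ j)) := by
  induction j', hj using Nat.le_induction with
  | base => exact .refl _ _
  | succ a ha ih =>
    refine .trans ?_ ih
    rw [push, iterProj_succ _ (hi.trans ha)]
    exact push_congr (hi.trans ha) ((push_truncate_succ σ a).mono (by omega))

/-- The strategy induced by `σ` in the `i`-th game: its moves in round `m` are pushed down from a
game in which the rounds up to `m` are those of the limit. -/
noncomputable def limitPush (b : Fin 2) (σ : Strategy T.limit) (i : ℕ) : Strategy (T.game i) where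
  move m := (push b (by omega : i ≤ i + m + 1) (truncate σ (i + m + 1))).move m
  move_agree m := (push b (by omega : i ≤ i + m + 1) (truncate σ (i + m + 1))).move_agree m
  move_congr {m _ _} := (push b (by omega : i ≤ i + m + 1) (truncate σ (i + m + 1))).move_congr

theorem limitPush_agreeBelow (σ : Strategy T.limit) (hi : i ≤ j) :
    (limitPush b σ i).AgreeBelow (k + j) (push b hi (truncate σ j)) := by
  intro m hm x
  rcases le_total j (i + m + 1) with h | h
  · exact push_truncate_agreeBelow σ hi h m hm x
  · exact (push_truncate_agreeBelow σ (by omega) h).symm m (by omega) x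

theorem limitPush_move (σ : Strategy T.limit) (hm : m < k + j) (x : T.limit.Play) :
    (T.game j).Agree (m + 1) ((limitPush b σ j).move m (x.1 j)) ((σ.move m x).1 j) := by
  have h := limitPush_agreeBelow (b := b) σ (le_refl j)
  rw [push_self] at h
  exact (h m hm _).trans (truncate_move σ hm x)

theorem push_limitPush_succ (σ : Strategy T.limit) (i n : ℕ) :
    ((T.cov i).push b (limitPush b σ (i + 1))).AgreeBelow n (limitPush b σ i) := by
  have hi : i + 1 ≤ i + 1 + n := by omega
  have hpush := (T.cov i).push_congr b (limitPush_agreeBelow (b := b) σ hi)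
  rw [push, map_iterProj (F := fun i => Strategy (T.game i)) (fun i => (T.cov i).push b)] at hpush
  exact (hpush.trans (limitPush_agreeBelow σ (Nat.le_of_succ_le hi)).symm).mono (by omega)

theorem exists_lift_limitPush (σ : Strategy T.limit) (x : (T.game 0).Play)
    (hx : (limitPush b σ 0).Consistent b x) : ∃ y : T.limit.Play, y.1 0 = x ∧ σ.Consistent b y := by
  have lift : ∀ i (y : (T.game i).Play), (limitPush b σ i).Consistent b y →
      ∃ z, (T.cov i).proj z = y ∧ (limitPush b σ (i + 1)).Consistent b z := fun i y hy =>
    (T.cov i).exists_lift b _ y fun n hn =>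
      (hy n hn).trans (push_limitPush_succ σ i (n + 1) n (by omega) y).symm
  choose g hg hg' using lift
  let u : ∀ i, {y : (T.game i).Play // (limitPush b σ i).Consistent b y} := fun i =>
    Nat.rec ⟨x, hx⟩ (fun i y => ⟨g i y.1 y.2, hg' i y.1 y.2⟩) i
  let y : T.limit.Play := ⟨fun i => (u i).1, fun i => hg i _ _⟩
  refine ⟨y, rfl, fun m hm => agree_of_agree_apply (j := m + 1) (by omega) ?_⟩
  exact ((u (m + 1)).2 m hm).trans (limitPush_move σ (by omega) y)

variable (T)

/-- The limit of a tower of coverings covers its first game. -/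
noncomputable def covering : Covering k T.limit (T.game 0) where
  proj x := x.1 0
  proj_agree h := h 0
  agree_of_proj hn h := agree_of_agree_apply (j := 0) hn h
  exists_proj_agree x := ⟨extend 0 x, extend_agree 0 x⟩
  push b σ := limitPush b σ 0
  push_congr _ _ _ _ h _ hm x := push_congr (Nat.zero_le _) (truncate_congr h) _ hm x
  push_move _ σ _ hm x := limitPush_move σ hm x
  exists_lift _ σ x hx := exists_lift_limitPush σ x hx

end CoveringTower

/-! ### The cover game of a closed set -/

section CoverGame

variable {G : GameSpace.{u}}

/-- The positions of plays in `A`. -/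
def InTree (A : Set G.Play) : PosSet G := fun n y => ∃ a ∈ A, G.Agree n a y

theorem InTree.saturated (A : Set G.Play) : PosSet.Saturated (InTree A) :=
  fun _ _ _ h ⟨a, ha, hax⟩ => ⟨a, ha, hax.trans h⟩

/-- `S` is a quasistrategy of player `0` from the position of length `K + 1` of `x` on. -/
structure IsProposal (K : ℕ) (S : PosSet G) (x : G.Play) : Prop where
  saturated : S.Saturated
  base : S (K + 1) x
  pred : ∀ n y, K + 1 ≤ n → S (n + 1) y → S n y
  forall_succ : ∀ n y z, K + 1 ≤ n → n % 2 = 1 → S n y → G.Agree n z y → S (n + 1) z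
  exists_succ : ∀ n y, K + 1 ≤ n → n % 2 = 0 → S n y → ∃ z, G.Agree n z y ∧ S (n + 1) z

/-- `R` is a quasistrategy of player `1` from rounds `K + 2` on, in the game restricted to `S`, that
stays in the tree of `A`. -/
structure IsAcceptance (A : Set G.Play) (K : ℕ) (S R : PosSet G) : Prop where
  saturated : R.Saturated
  sub : ∀ n y, R n y → S n y ∧ InTree A n y
  pred : ∀ n y, K + 2 ≤ n → R (n + 1) y → R n y
  exists_succ : ∀ n y, K + 2 ≤ n → n % 2 = 1 → R n y → ∃ z, G.Agree n z y ∧ R (n + 1) z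
  forall_succ : ∀ n y z, K + 2 ≤ n → n % 2 = 0 → R n y → G.Agree n z y → S (n + 1) z →
    R (n + 1) z

/-- The position of length `m ≥ K + 2` of a play shows that it respects `S` and leaves `A`. -/
def Escapes (A : Set G.Play) (K : ℕ) (S : PosSet G) : PosSet G :=
  fun m x => K + 2 ≤ m ∧ S m x ∧ ¬ InTree A m x

theorem Escapes.saturated {A : Set G.Play} {K : ℕ} {S : PosSet G} (hS : S.Saturated) :
    (Escapes A K S).Saturated :=
  fun _ _ _ h ⟨hm, hs, ht⟩ => ⟨hm, hS h hs, fun ht' => ht (InTree.saturated A h.symm ht')⟩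

/-- Player `1` answers the quasistrategy `S` either with a length at which `x` will have left the
tree of `A` (`inl`), or with a quasistrategy `R` that keeps the play inside this tree (`inr`). -/
def LegalReply (A : Set G.Play) (K : ℕ) (S : PosSet G) : ℕ ⊕ PosSet G → G.Play → Prop
  | .inl m, x => Escapes A K S m x
  | .inr R, x => IsAcceptance A K S R ∧ ∀ n, K + 2 ≤ n → R n x

variable {A : Set G.Play} {K : ℕ} {S R : PosSet G} {n : ℕ} {x y : G.Play}

namespace IsProposal

theorem congr (hS : IsProposal K S x) (h : G.Agree (K + 1) x y) : IsProposal K S y :=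
  { hS with base := hS.saturated h hS.base }

theorem exists_agree_succ (hS : IsProposal K S x) (hn : K + 1 ≤ n) (hy : S n y) :
    ∃ z, G.Agree n z y ∧ S (n + 1) z := by
  rcases Nat.mod_two_eq_zero_or_one n with h | h
  · exact hS.exists_succ n y hn h hy
  · exact ⟨y, .refl _ _, hS.forall_succ n y y hn h hy (.refl _ _)⟩

theorem univ (x : G.Play) : IsProposal K (fun _ _ => True) x where
  saturated _ _ _ _ _ := trivial
  base := trivial
  pred _ _ _ _ := trivial
  forall_succ _ _ _ _ _ _ _ := trivial
  exists_succ _ y _ _ _ := ⟨y, .refl _ _, trivial⟩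

end IsProposal

theorem IsAcceptance.exists_forall (hR : IsAcceptance A K S R) (hS : IsProposal K S x)
    (hn : K + 2 ≤ n) (hy : R n y) : ∃ z, G.Agree n z y ∧ ∀ m, K + 2 ≤ m → R m z := by
  refine exists_forall_posSet hR.saturated hR.pred (fun m z hm hz => ?_) hn hy
  rcases Nat.mod_two_eq_zero_or_one m with h | h
  · obtain ⟨w, hw, hSw⟩ := hS.exists_succ m z (by omega) h (hR.sub _ _ hz).1
    exact ⟨w, hw, hR.forall_succ m z w hm h hz hw hSw⟩
  · exact hR.exists_succ m z hm h hz

variable (A K) in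
/-- A play of the game that unravels the closed set `A`: a play of `G` in which player `0` announces
a quasistrategy `tree` in round `K` and player `1` answers it in round `K + 1`. -/
structure CoverPlay where
  play : G.Play
  tree : PosSet G
  reply : ℕ ⊕ PosSet G
  proposal : IsProposal K tree play
  legal : LegalReply A K tree reply play

namespace CoverPlay

theorem escapes (a : CoverPlay A K) {m : ℕ} (h : a.reply = .inl m) :
    Escapes A K a.tree m a.play := by
  have hlegal := a.legal
  rw [h] at hlegal
  exact hlegal

theorem accepts (a : CoverPlay A K) (h : a.reply = .inr R) :
    IsAcceptance A K a.tree R ∧ ∀ n, K + 2 ≤ n → R n a.play := by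
  have hlegal := a.legal
  rw [h] at hlegal
  exact hlegal

theorem exists_of_escapes (hS : IsProposal K S x) {m : ℕ} (h : Escapes A K S m x) :
    ∃ a : CoverPlay A K, a.play = x ∧ a.tree = S ∧ a.reply = .inl m :=
  ⟨⟨x, S, .inl m, hS, h⟩, rfl, rfl, rfl⟩

theorem exists_of_accepts (hS : IsProposal K S x) (hR : IsAcceptance A K S R)
    (h : ∀ n, K + 2 ≤ n → R n x) :
    ∃ a : CoverPlay A K, a.play = x ∧ a.tree = S ∧ a.reply = .inr R :=
  ⟨⟨x, S, .inr R, hS, hR, h⟩, rfl, rfl, rfl⟩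

theorem exists_of_proposal (hS : IsProposal K S x) :
    ∃ a : CoverPlay A K, G.Agree (K + 1) a.play x ∧ a.tree = S := by
  by_cases h : ∃ y m, G.Agree (K + 1) y x ∧ Escapes A K S m y
  · obtain ⟨y, m, hy, hm⟩ := h
    exact ⟨⟨y, S, .inl m, hS.congr hy.symm, hm⟩, hy, rfl⟩
  · have hmem : ∀ y m, G.Agree (K + 1) y x → K + 2 ≤ m → S m y → InTree A m y :=
      fun y m hy hm hs => by_contra fun ht => h ⟨y, m, hy, hm, hs, ht⟩
    let R : PosSet G := fun n y => K + 2 ≤ n ∧ G.Agree (K + 1) y x ∧ S n y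
    have hR : IsAcceptance A K S R :=
      { saturated := fun n y z hyz ⟨hn, hy, hs⟩ =>
          ⟨hn, (hyz.mono (by omega)).symm.trans hy, hS.saturated hyz hs⟩
        sub := fun n y ⟨hn, hy, hs⟩ => ⟨hs, hmem y n hy hn hs⟩
        pred := fun n y hn ⟨_, hy, hs⟩ => ⟨hn, hy, hS.pred _ _ (by omega) hs⟩
        exists_succ := fun n y hn _ ⟨_, hy, hs⟩ => by
          obtain ⟨z, hz, hsz⟩ := hS.exists_agree_succ (by omega) hs
          exact ⟨z, hz, by omega, (hz.mono (by omega)).trans hy, hsz⟩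
        forall_succ := fun n y z hn _ ⟨_, hy, _⟩ hz hsz =>
          ⟨by omega, (hz.mono (by omega)).trans hy, hsz⟩ }
    obtain ⟨z, hz, hsz⟩ := hS.exists_agree_succ le_rfl hS.base
    obtain ⟨w, hw, hRw⟩ := hR.exists_forall hS le_rfl (show R (K + 2) z from ⟨le_rfl, hz, hsz⟩)
    have hwx := hw.pred.trans hz
    exact ⟨⟨w, S, .inr R, hS.congr hwx.symm, hR, hRw⟩, hwx, rfl⟩

theorem exists_agree (x : G.Play) : ∃ a : CoverPlay A K, G.Agree (K + 1) a.play x :=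
  (exists_of_proposal (.univ x)).imp fun _ h => h.1

instance : Nonempty (CoverPlay A K) := (exists_agree (Classical.arbitrary G.Play)).nonempty

/-- Two plays agree up to length `n`; an announced escape length `m` counts as a promise about the
position of length `m`, which is thus already fixed by the answer. -/
def Agree (n : ℕ) (a b : CoverPlay A K) : Prop :=
  G.Agree n a.play b.play ∧ (K + 1 ≤ n → a.tree = b.tree) ∧
    (K + 2 ≤ n → a.reply = b.reply ∧ ∀ m, a.reply = .inl m → G.Agree m a.play b.play)

theorem exists_limit (s : ℕ → CoverPlay A K) (hs : ∀ n, Agree n (s n) (s (n + 1))) :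
    ∃ a : CoverPlay A K, ∀ n, Agree n a (s n) := by
  obtain ⟨x, hx⟩ := G.exists_limit (fun n => (s n).play) fun n => (hs n).1
  have htree : ∀ n, K + 1 ≤ n → (s n).tree = (s (K + 1)).tree := fun n hn => by
    induction n, hn using Nat.le_induction with
    | base => rfl
    | succ n hn ih => rw [← (hs n).2.1 hn, ih]
  have hreply : ∀ n, K + 2 ≤ n → (s n).reply = (s (K + 2)).reply := fun n hn => by
    induction n, hn using Nat.le_induction with
    | base => rfl
    | succ n hn ih => rw [← ((hs n).2.2 hn).1, ih]
  have hpromise : ∀ m n, (s (K + 2)).reply = .inl m → K + 2 ≤ n → G.Agree m x (s n).play := by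
    intro m n h hn
    have hsn : ∀ l, n ≤ l → G.Agree m (s n).play (s l).play := fun l hl => by
      induction l, hl using Nat.le_induction with
      | base => exact .refl _ _
      | succ l hl ih =>
        exact ih.trans (((hs l).2.2 (hn.trans hl)).2 m ((hreply l (hn.trans hl)).trans h))
    exact ((hx (n + m)).mono (by omega)).trans (hsn (n + m) (by omega)).symm
  have hS := (s (K + 1)).proposal.congr (hx _).symm
  have hlegal : LegalReply A K (s (K + 1)).tree (s (K + 2)).reply x := by
    rcases ho : (s (K + 2)).reply with m | R
    · have he := (s (K + 2)).escapes ho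
      rw [htree (K + 2) (by omega)] at he
      exact Escapes.saturated hS.saturated (hpromise m _ ho le_rfl).symm he
    · have hR := ((s (K + 2)).accepts ho).1
      refine ⟨htree (K + 2) (by omega) ▸ hR, fun n hn => ?_⟩
      exact hR.saturated (hx n).symm (((s n).accepts ((hreply n hn).trans ho)).2 n hn)
  exact ⟨⟨x, _, _, hS, hlegal⟩, fun n => ⟨hx n, fun hn => (htree n hn).symm,
    fun hn => ⟨(hreply n hn).symm, fun m h => hpromise m n h hn⟩⟩⟩

end CoverPlay

variable (A K) in
/-- Martin's game unravelling a closed set `A` without changing the first `K` rounds. -/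
def coverGame : GameSpace.{u} where
  Play := CoverPlay A K
  Agree := CoverPlay.Agree
  agree_refl _ _ := ⟨.refl _ _, fun _ => rfl, fun _ => ⟨rfl, fun _ _ => .refl _ _⟩⟩
  agree_symm h := ⟨h.1.symm, fun hn => (h.2.1 hn).symm, fun hn => ⟨(h.2.2 hn).1.symm,
    fun m hm => ((h.2.2 hn).2 m ((h.2.2 hn).1.trans hm)).symm⟩⟩
  agree_trans h h' := ⟨h.1.trans h'.1, fun hn => (h.2.1 hn).trans (h'.2.1 hn), fun hn =>
    ⟨(h.2.2 hn).1.trans (h'.2.2 hn).1, fun m hm => ((h.2.2 hn).2 m hm).trans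
      ((h'.2.2 hn).2 m ((h.2.2 hn).1 ▸ hm))⟩⟩
  agree_pred h := ⟨h.1.pred, fun hn => h.2.1 (by omega), fun hn => h.2.2 (by omega)⟩
  agree_zero _ _ := ⟨G.agree_zero _ _, fun h => by omega, fun h => by omega⟩
  eq_of_agree {a b} h := by
    have hplay := G.eq_of_agree fun n => (h n).1
    have htree := (h (K + 1)).2.1 le_rfl
    have hreply := ((h (K + 2)).2.2 le_rfl).1
    cases a
    cases b
    simp_all only
  exists_limit := CoverPlay.exists_limit
  nonempty := inferInstanceAs (Nonempty (CoverPlay A K))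

theorem CoverPlay.play_mem_iff (hA : G.IsClosedSet A) (a : CoverPlay A K) :
    a.play ∈ A ↔ ∃ R, a.reply = .inr R := by
  rcases ho : a.reply with m | R
  · simpa only [reduceCtorEq, exists_false, iff_false] using
      fun h => (a.escapes ho).2.2 ⟨a.play, h, .refl _ _⟩
  · simp only [Sum.inr.injEq, exists_eq', iff_true]
    by_contra hx
    obtain ⟨n, hn⟩ := hA _ hx
    obtain ⟨hR, hplay⟩ := a.accepts ho
    obtain ⟨y, hy, hagree⟩ := (hR.sub _ _ (hplay (n + (K + 2)) (by omega))).2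
    exact hn y (hagree.mono (by omega)) hy

theorem coverGame_decidedAt (hA : G.IsClosedSet A) :
    (coverGame A K).DecidedAt (K + 2) {a | CoverPlay.play a ∈ A} := fun a b h =>
  have hreply : CoverPlay.reply a = CoverPlay.reply b := (h.2.2 le_rfl).1
  (CoverPlay.play_mem_iff hA a).trans (hreply ▸ (CoverPlay.play_mem_iff hA b).symm)

end CoverGame

section Phases

variable {G : GameSpace.{u}} {b : Fin 2} {W : PosSet G} {N n i j : ℕ} {x y : G.Play}

/-- From length `N` on, player `b` has had no chance to force the play into `W`. -/
def Avoids (b : Fin 2) (W : PosSet G) (N : ℕ) : PosSet G :=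
  fun n y => N ≤ n ∧ ∀ m, N ≤ m → m ≤ n → ¬ Forces b W m y

namespace Avoids

theorem saturated (hW : W.Saturated) : PosSet.Saturated (Avoids b W N) :=
  fun _ _ _ h ⟨hn, hy⟩ => ⟨hn, fun m hm hmn hF =>
    hy m hm hmn (Forces.saturated hW (h.mono hmn).symm hF)⟩

theorem pred (hn : N ≤ n) (h : Avoids b W N (n + 1) y) : Avoids b W N n y :=
  ⟨hn, fun m hm hmn => h.2 m hm (by omega)⟩

theorem not_forces (h : Avoids b W N n y) : ¬ Forces b W n y := h.2 n h.1 le_rfl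

theorem succ (hW : W.Saturated) (h : Avoids b W N n y) (hx : G.Agree n x y)
    (hF : ¬ Forces b W (n + 1) x) : Avoids b W N (n + 1) x := by
  refine ⟨h.1.trans n.le_succ, fun m hm hmn => ?_⟩
  rcases hmn.lt_or_eq with hlt | rfl
  · exact (saturated hW hx.symm h).2 m hm (Nat.lt_succ_iff.1 hlt)
  · exact hF

theorem forall_succ (hW : W.Saturated) (hn : n % 2 = b) (h : Avoids b W N n y)
    (hx : G.Agree n x y) : Avoids b W N (n + 1) x :=
  h.succ hW hx fun hF => h.not_forces (.own hn hx hF)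

theorem exists_succ (hW : W.Saturated) (hn : n % 2 ≠ b) (h : Avoids b W N n y) :
    ∃ x, G.Agree n x y ∧ Avoids b W N (n + 1) x :=
  (exists_not_forces_succ hn h.not_forces).imp fun _ hx => ⟨hx.1, h.succ hW hx.1 hx.2⟩

end Avoids

open Classical in
/-- The move of a player `b` who plays `hit i` once `W` has been reached at length `i`, forces the
play into `W` when that has become possible at some length `≥ N`, and plays `calm` otherwise. -/
noncomputable def phaseMove (b : Fin 2) (W : PosSet G) (N n : ℕ) (x : G.Play) (hit : ℕ → G.Play)
    (calm : G.Play) : G.Play :=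
  if h : ∃ i ≤ n, W i x then hit (Nat.find h)
  else if h : ∃ j, N ≤ j ∧ j ≤ n ∧ Forces b W j x then
    (Classical.epsilon (Reaches b W (Nat.find h) (G.rep (Nat.find h) x))).move n x
  else calm

theorem phaseMove_congr {hit hit' : ℕ → G.Play} {calm calm' : G.Play}
    (hhit : ∀ i, G.Agree (n + 1) (hit i) (hit' i)) (hcalm : G.Agree (n + 1) calm calm') :
    G.Agree (n + 1) (phaseMove b W N n x hit calm) (phaseMove b W N n x hit' calm') := by
  unfold phaseMove
  split_ifs
  · exact hhit _
  · exact .refl _ _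
  · exact hcalm

theorem phaseMove_of_hit (hW : W.Saturated) (hy : G.Agree n y x) (hx : W i x) (hi : i ≤ n)
    (hmin : ∀ i' < i, ¬ W i' x) (hit : ℕ → G.Play) (calm : G.Play) :
    phaseMove b W N n y hit calm = hit i := by
  classical
  have h : ∃ i ≤ n, W i y := ⟨i, hi, hW (hy.mono hi).symm hx⟩
  rw [phaseMove, dif_pos h]
  congr 1
  exact (Nat.find_eq_iff _).2 ⟨⟨hi, hW (hy.mono hi).symm hx⟩, fun i' hi' h' =>
    hmin i' hi' (hW (hy.mono h'.1) h'.2)⟩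

theorem phaseMove_of_forces (hW : W.Saturated) (hy : G.Agree n y x) (hx : ∀ i, ¬ W i x)
    (hNj : N ≤ j) (hjn : j ≤ n) (hj : Forces b W j x)
    (hmin : ∀ j' < j, N ≤ j' → ¬ Forces b W j' x) (hit : ℕ → G.Play) (calm : G.Play) :
    phaseMove b W N n y hit calm = (Classical.epsilon (Reaches b W j (G.rep j x))).move n y := by
  classical
  have hsat := Forces.saturated (b := b) hW
  have hnot : ¬ ∃ i ≤ n, W i y := fun ⟨i, hi, h⟩ => hx i (hW (hy.mono hi) h)
  have hjy : N ≤ j ∧ j ≤ n ∧ Forces b W j y := ⟨hNj, hjn, hsat (hy.mono hjn).symm hj⟩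
  have h : ∃ j, N ≤ j ∧ j ≤ n ∧ Forces b W j y := ⟨j, hjy⟩
  have hfind : Nat.find h = j := (Nat.find_eq_iff h).2 ⟨hjy, fun j' hj' h' =>
    hmin j' hj' h'.1 (hsat (hy.mono h'.2.1) h'.2.2)⟩
  rw [phaseMove, dif_neg hnot, dif_pos h]
  simp only [hfind, (hy.mono hjn).rep_eq]

theorem phaseMove_of_not_forces (hW : W.Saturated) (hN : ∀ i x, W i x → N ≤ i)
    (hy : G.Agree n y x) (hx : ∀ j, N ≤ j → ¬ Forces b W j x) (hit : ℕ → G.Play) (calm : G.Play) :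
    phaseMove b W N n y hit calm = calm := by
  have hnot : ¬ ∃ i ≤ n, W i y := fun ⟨i, hi, h⟩ =>
    hx i (hN _ _ h) (.base (hW (hy.mono hi) h))
  have hnot' : ¬ ∃ j, N ≤ j ∧ j ≤ n ∧ Forces b W j y := fun ⟨j, hNj, hj, h⟩ =>
    hx j hNj (Forces.saturated hW (hy.mono hj) h)
  rw [phaseMove, dif_neg hnot, dif_neg hnot']

variable {g : ℕ → G.Play → G.Play} {hit : ℕ → ℕ → G.Play} {calm : ℕ → G.Play}

theorem not_forces_of_phaseMove (hW : W.Saturated) (hx : (Strategy.ofMove g).Consistent b x)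
    (hg : ∀ n : ℕ, N ≤ n → n % 2 = b →
      g n (G.rep n x) = phaseMove b W N n (G.rep n x) (hit n) (calm n))
    (hnot : ∀ i, ¬ W i x) (hj : N ≤ j) : ¬ Forces b W j x := by
  classical
  intro hF
  have hex : ∃ j, N ≤ j ∧ Forces b W j x := ⟨j, hj, hF⟩
  obtain ⟨hNl, hl⟩ := Nat.find_spec hex
  have hmin : ∀ j' < Nat.find hex, N ≤ j' → ¬ Forces b W j' x := fun j' hj' h h' =>
    Nat.find_min hex hj' ⟨h, h'⟩
  set l := Nat.find hex
  have hrep := (G.rep_agree l x).symm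
  set ω := Classical.epsilon (Reaches b W l (G.rep l x))
  have hω : Reaches b W l (G.rep l x) ω :=
    Classical.epsilon_spec ((Forces.saturated hW hrep hl).exists_reaches hW)
  obtain ⟨i, -, hi⟩ := hω x hrep fun m hm hmb => by
    have hgm : g m (G.rep m x) = ω.move m (G.rep m x) :=
      (hg m (hNl.trans hm) hmb).trans
        (phaseMove_of_forces hW (G.rep_agree m x) hnot hNl hm hl hmin _ _)
    have hmove := hx m hmb
    rw [Strategy.ofMove_move (hgm ▸ (ω.move_agree m _).trans (G.rep_agree m x)), hgm] at hmove
    exact hmove.trans (ω.move_congr (G.rep_agree m x))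
  exact hnot i hi

theorem hit_or_calm (hW : W.Saturated) (hN : ∀ i x, W i x → N ≤ i)
    (hx : (Strategy.ofMove g).Consistent b x)
    (hg : ∀ n : ℕ, N ≤ n → n % 2 = b →
      g n (G.rep n x) = phaseMove b W N n (G.rep n x) (hit n) (calm n)) :
    (∃ i, W i x ∧ ∀ n : ℕ, i ≤ n → n % 2 = b → g n (G.rep n x) = hit n i) ∨
      (∀ j, N ≤ j → ¬ Forces b W j x) ∧
        ∀ n : ℕ, N ≤ n → n % 2 = b → g n (G.rep n x) = calm n := by
  classical
  by_cases h : ∃ i, W i x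
  · have hi := Nat.find_spec h
    refine .inl ⟨Nat.find h, hi, fun n hn hnb => ?_⟩
    rw [hg n ((hN _ _ hi).trans hn) hnb]
    exact phaseMove_of_hit hW (G.rep_agree n x) hi hn (fun _ => Nat.find_min h) _ _
  · have hF : ∀ j, N ≤ j → ¬ Forces b W j x := fun j =>
      not_forces_of_phaseMove hW hx hg (not_exists.1 h)
    refine .inr ⟨hF, fun n hn hnb => ?_⟩
    rw [hg n hn hnb]
    exact phaseMove_of_not_forces hW hN (G.rep_agree n x) hF _ _

end Phases

section Shadow

variable {G : GameSpace.{u}} {A : Set G.Play} {K n m : ℕ} {S R : PosSet G} {x : G.Play}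
  {P : CoverPlay A K → Prop} {σ τ : Strategy (coverGame A K)}

/-- The response of `σ` to a play of the cover game over the position of length `n` of `x` that
satisfies `P`. -/
noncomputable def shadow (P : CoverPlay A K → Prop) (σ : Strategy (coverGame A K)) (n : ℕ)
    (x : G.Play) : CoverPlay A K :=
  σ.move n (Classical.epsilon (α := CoverPlay A K) fun a => G.Agree n a.play x ∧ P a)

/-- The plays with quasistrategy `S` and answer `o`. -/
def Commits (S : PosSet G) (o : ℕ ⊕ PosSet G) (a : CoverPlay A K) : Prop :=
  a.tree = S ∧ a.reply = o

/-- `P` determines the position of length `n` in the cover game over each position in `G`. -/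
def Pins (n : ℕ) (P : CoverPlay A K → Prop) : Prop :=
  ∀ a b, P a → P b → G.Agree n a.play b.play → CoverPlay.Agree n a b

theorem pins_of_le (hn : n ≤ K) : Pins n P :=
  fun _ _ _ _ h => ⟨h, fun hn' => by omega, fun hn' => by omega⟩

theorem pins_tree : Pins (K + 1) fun a : CoverPlay A K => a.tree = S :=
  fun _ _ ha hb h => ⟨h, fun _ => ha.trans hb.symm, fun hn => by omega⟩

theorem pins_commits {o : ℕ ⊕ PosSet G} (ho : ∀ m, o = .inl m → m ≤ n) :
    Pins n (Commits (A := A) (K := K) S o) :=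
  fun _ _ ha hb h => ⟨h, fun _ => ha.1.trans hb.1.symm, fun _ => ⟨ha.2.trans hb.2.symm,
    fun m hm => h.mono (ho m (ha.2.symm.trans hm))⟩⟩

theorem shadow_congr (h : σ.AgreeBelow n τ) (hm : m < n) :
    CoverPlay.Agree (m + 1) (shadow P σ m x) (shadow P τ m x) :=
  h m hm _

theorem Pins.shadow_agree (hP : Pins n P) {a : CoverPlay A K} (ha : G.Agree n a.play x)
    (hPa : P a) : CoverPlay.Agree (n + 1) (shadow P σ n x) (σ.move n a) := by
  obtain ⟨hagree, hPb⟩ := Classical.epsilon_spec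
    (p := fun a : CoverPlay A K => G.Agree n a.play x ∧ P a) ⟨a, ha, hPa⟩
  exact σ.move_congr (G := coverGame A K) (hP _ a hPb hPa (hagree.trans ha.symm))

theorem Pins.ofMove_move_agree {g : ℕ → G.Play → G.Play} (hP : Pins n P)
    (hg : g n (G.rep n x) = (shadow P σ n (G.rep n x)).play) {a : CoverPlay A K}
    (ha : G.Agree n a.play x) (hPa : P a) :
    G.Agree (n + 1) ((Strategy.ofMove g).move n x) (σ.move n a : CoverPlay A K).play := by
  have hagree := (hP.shadow_agree (σ := σ) (ha.trans (G.rep_agree n x).symm) hPa).1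
  rw [Strategy.ofMove_move, hg]
  · exact hagree
  · rw [hg]
    exact hagree.pred.trans ((σ.move_agree n a).1.trans ha)

theorem Pins.agree_of_consistent {g : ℕ → G.Play → G.Play} {b : Fin 2} (hP : Pins n P)
    (hx : (Strategy.ofMove g).Consistent b x) (hn : n % 2 = b)
    (hg : g n (G.rep n x) = (shadow P σ n (G.rep n x)).play) {a : CoverPlay A K}
    (ha : G.Agree n a.play x) (hPa : P a) :
    G.Agree (n + 1) x (σ.move n a : CoverPlay A K).play :=
  (hx n hn).trans (hP.ofMove_move_agree hg ha hPa)

theorem CoverPlay.agree_move_of_ne (a : CoverPlay A K) (hn : n ≠ K) (hn' : n ≠ K + 1)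
    (h : G.Agree (n + 1) a.play (σ.move n a : CoverPlay A K).play) :
    (coverGame A K).Agree (n + 1) a (σ.move n a) :=
  have hmove : CoverPlay.Agree n a (σ.move n a) := (σ.move_agree n a).symm
  ⟨h, fun _ => hmove.2.1 (by omega), fun _ => hmove.2.2 (by omega)⟩

theorem CoverPlay.move_agree_promise (a : CoverPlay A K) (ha : a.reply = .inl m) (hn : K + 2 ≤ n) :
    G.Agree m a.play (σ.move n a : CoverPlay A K).play :=
  have hmove : CoverPlay.Agree n a (σ.move n a) := (σ.move_agree n a).symm
  (hmove.2.2 hn).2 m ha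

theorem IsAcceptance.exists_coverPlay {b : Fin 2} (hS : IsProposal K S x)
    (hR : IsAcceptance A K S R) (hbase : R (K + 2) x)
    (hopp : ∀ n : ℕ, K + 2 ≤ n → n % 2 ≠ b → R n x → R (n + 1) x)
    (hown : ∀ n : ℕ, K + 2 ≤ n → n % 2 = b → ∀ a : CoverPlay A K, G.Agree n a.play x →
      Commits S (.inr R) a → G.Agree (n + 1) x (σ.move n a : CoverPlay A K).play) :
    ∃ a : CoverPlay A K, a.play = x ∧ Commits S (.inr R) a := by
  refine CoverPlay.exists_of_accepts hS hR fun n hn => ?_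
  induction n, hn using Nat.le_induction with
  | base => exact hbase
  | succ n hn ih =>
    by_cases hnb : n % 2 = b
    · obtain ⟨z, hz, hRz⟩ := hR.exists_forall hS hn ih
      obtain ⟨a, rfl, ha⟩ :=
        CoverPlay.exists_of_accepts (hS.congr (hz.mono (by omega)).symm) hR hRz
      have hmove : CoverPlay.Agree n (σ.move n a) a := σ.move_agree n a
      have haccepts := CoverPlay.accepts _ (((hmove.2.2 hn).1).trans ha.2)
      exact hR.saturated (hown n hn hnb a hz ha).symm (haccepts.2 (n + 1) (by omega))
    · exact hopp n hn hnb ih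

end Shadow

section PlayerZero

variable {G : GameSpace.{u}} {A : Set G.Play} {K n m : ℕ} {S : PosSet G} {x : G.Play}
  {σ τ : Strategy (coverGame A K)}

/-- The quasistrategy that player `0`, following `σ`, announces in round `K` of the cover game. -/
noncomputable def announced (σ : Strategy (coverGame A K)) (x : G.Play) : PosSet G :=
  (shadow (fun _ => True) σ K x).tree

theorem tree_move_eq_announced {a : CoverPlay A K} (ha : G.Agree K a.play x) :
    (σ.move K a : CoverPlay A K).tree = announced σ x :=
  (((pins_of_le le_rfl).shadow_agree ha trivial).2.1 le_rfl).symm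

theorem announced_congr (h : σ.AgreeBelow n τ) (hn : K < n) : announced σ x = announced τ x :=
  (shadow_congr h hn).2.1 le_rfl

theorem announced_rep (hn : K ≤ n) : announced σ (G.rep n x) = announced σ x := by
  obtain ⟨a, ha⟩ := CoverPlay.exists_agree (A := A) (K := K) x
  rw [← tree_move_eq_announced ha.pred,
    tree_move_eq_announced (ha.pred.trans ((G.rep_agree n x).mono hn).symm)]

variable (A K S) in
/-- The quasistrategy by which player `1` accepts `S` when player `0` cannot force an escape from
`A`. -/
def safeReply : PosSet G := fun n y => S n y ∧ Avoids 0 (Escapes A K S) (K + 2) n y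

theorem isAcceptance_safeReply (hS : IsProposal K S x) :
    IsAcceptance A K S (safeReply A K S) :=
  have hW := Escapes.saturated (A := A) (K := K) hS.saturated
  { saturated := fun _ _ _ h hy => ⟨hS.saturated h hy.1, Avoids.saturated hW h hy.2⟩
    sub := fun n y hy => ⟨hy.1, by_contra fun ht => hy.2.not_forces (.base ⟨hy.2.1, hy.1, ht⟩)⟩
    pred := fun n y hn hy => ⟨hS.pred n y (by omega) hy.1, hy.2.pred hn⟩
    exists_succ := fun n y hn hodd hy => by
      obtain ⟨z, hz, hFz⟩ := hy.2.exists_succ hW (by simp [hodd])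
      exact ⟨z, hz, hS.forall_succ n y z (by omega) hodd hy.1 hz, hFz⟩
    forall_succ := fun n y z _ heven hy hz hSz => ⟨hSz, hy.2.forall_succ hW heven hz⟩ }

/-- Player `0`'s moves in `G` when `σ` is pushed down: up to round `K` they copy `σ`; afterwards
player `0` tries to leave the tree of `A` within the announced quasistrategy, letting `σ` answer to
the escape if this succeeds, and to the acceptance `safeReply` as long as it cannot be forced. -/
noncomputable def pushZero (σ : Strategy (coverGame A K)) (n : ℕ) (x : G.Play) : G.Play :=
  if n ≤ K then (shadow (fun _ => True) σ n x).play
  else phaseMove 0 (Escapes A K (announced σ x)) (K + 2) n x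
    (fun i => (shadow (Commits (announced σ x) (.inl i)) σ n x).play)
    (shadow (Commits (announced σ x) (.inr (safeReply A K (announced σ x)))) σ n x).play

theorem pushZero_of_le (hn : n ≤ K) : pushZero σ n x = (shadow (fun _ => True) σ n x).play :=
  if_pos hn

theorem pushZero_congr (h : σ.AgreeBelow n τ) (hm : m < n) (x : G.Play) :
    G.Agree (m + 1) (pushZero σ m x) (pushZero τ m x) := by
  unfold pushZero
  split_ifs with hK
  · exact (shadow_congr h hm).1
  · rw [announced_congr h (by omega)]
    exact phaseMove_congr (fun _ => (shadow_congr h hm).1) (shadow_congr h hm).1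

theorem consistent_zero (hK : K % 2 = 0) {a : CoverPlay A K}
    (ha : (Strategy.ofMove (pushZero σ)).Consistent 0 a.play)
    (htree : a.tree = announced σ a.play)
    (hlate : ∀ n, K + 2 ≤ n → n % 2 = 0 →
      G.Agree (n + 1) a.play (σ.move n a : CoverPlay A K).play) :
    σ.Consistent (G := coverGame A K) 0 a := by
  intro n (hn : n % 2 = 0)
  have hplay : G.Agree (n + 1) a.play (σ.move n a : CoverPlay A K).play := by
    by_cases hnK : n ≤ K
    · exact (pins_of_le hnK).agree_of_consistent ha hn (pushZero_of_le hnK) (.refl _ _) trivial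
    · exact hlate n (by omega) hn
  by_cases hnK : n = K
  · subst hnK
    exact ⟨hplay, fun _ => htree.trans (tree_move_eq_announced (.refl _ _)).symm, fun h => by omega⟩
  · exact a.agree_move_of_ne hnK (by omega) hplay

theorem exists_lift_pushZero (hK : K % 2 = 0) (σ : Strategy (coverGame A K)) (x : G.Play)
    (hx : (Strategy.ofMove (pushZero σ)).Consistent 0 x) :
    ∃ a : CoverPlay A K, a.play = x ∧ σ.Consistent (G := coverGame A K) 0 a := by
  obtain ⟨c, hc⟩ := CoverPlay.exists_agree (A := A) (K := K) x
  have hS : IsProposal K (announced σ x) x := by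
    rw [← tree_move_eq_announced hc.pred]
    exact (σ.move K c : CoverPlay A K).proposal.congr ((pins_of_le le_rfl).agree_of_consistent hx hK
      (pushZero_of_le le_rfl) hc.pred trivial).symm
  have hpush : ∀ n : ℕ, K + 2 ≤ n → n % 2 = (0 : Fin 2) → pushZero σ n (G.rep n x) = _ :=
    fun n hn _ => by rw [pushZero, if_neg (by omega), announced_rep (by omega)]
  rcases hit_or_calm (Escapes.saturated hS.saturated) (fun i y h => h.1) hx hpush with
    ⟨i, hi, hhit⟩ | ⟨hnot, hcalm⟩
  · obtain ⟨a, rfl, ha⟩ := CoverPlay.exists_of_escapes hS hi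
    refine ⟨a, rfl, consistent_zero hK hx ha.1 fun n hn heven => ?_⟩
    rcases lt_or_ge n i with hni | hni
    · exact (a.move_agree_promise ha.2 hn).mono hni
    · exact (pins_commits fun m hm => Sum.inl_injective hm ▸ hni).agree_of_consistent hx heven
        (hhit n hni heven) (.refl _ _) ha
  · have havoid : ∀ n, K + 2 ≤ n → Avoids 0 (Escapes A K (announced σ x)) (K + 2) n x :=
      fun n hn => ⟨hn, fun j hj _ => hnot j hj⟩
    have hlate : ∀ n : ℕ, K + 2 ≤ n → n % 2 = (0 : Fin 2) → ∀ a : CoverPlay A K,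
        G.Agree n a.play x → Commits (announced σ x) (.inr (safeReply A K (announced σ x))) a →
        G.Agree (n + 1) x (σ.move n a : CoverPlay A K).play := fun n hn heven a ha hcommit =>
      (pins_commits fun m hm => by cases hm).agree_of_consistent hx heven (hcalm n hn heven) ha
        hcommit
    obtain ⟨a, rfl, ha⟩ := (isAcceptance_safeReply hS).exists_coverPlay hS
      ⟨hS.forall_succ _ _ _ le_rfl (by omega) hS.base (.refl _ _), havoid _ le_rfl⟩
      (fun n hn hodd hy => ⟨hS.forall_succ n x x (by omega) (Nat.mod_two_ne_zero.1 hodd) hy.1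
        (.refl _ _), havoid _ (by omega)⟩) hlate
    exact ⟨a, rfl, consistent_zero hK hx ha.1 fun n hn heven => hlate n hn heven a (.refl _ _) ha⟩

end PlayerZero

section PlayerOne

variable {G : GameSpace.{u}} {A : Set G.Play} {K n m i : ℕ} {W S R : PosSet G} {x y : G.Play}
  {σ τ : Strategy (coverGame A K)} {a : CoverPlay A K}

/-- `σ` answers the quasistrategy of `a` by announcing an escape through the position of length `m`
of `x`. -/
def Predicts (σ : Strategy (coverGame A K)) (m : ℕ) (x : G.Play) (a : CoverPlay A K) : Prop :=
  (σ.move (K + 1) a : CoverPlay A K).reply = .inl m ∧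
    G.Agree m (σ.move (K + 1) a : CoverPlay A K).play x

/-- The positions through which player `1`, following `σ`, would announce an escape. -/
def Predicted (σ : Strategy (coverGame A K)) : PosSet G := fun m x => ∃ a, Predicts σ m x a

theorem predicted_saturated : (Predicted σ).Saturated :=
  fun _ _ _ h ⟨a, ha⟩ => ⟨a, ha.1, ha.2.trans h⟩

theorem Predicts.le (h : Predicts σ m x a) : K + 2 ≤ m := (CoverPlay.escapes _ h.1).1

theorem Predicts.of_agreeBelow (hστ : σ.AgreeBelow n τ) (hn : K + 1 < n) (h : Predicts σ m x a) :
    Predicts τ m x a :=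
  have hmove : CoverPlay.Agree (K + 2) (σ.move (K + 1) a) (τ.move (K + 1) a) := hστ (K + 1) hn a
  have hreply := hmove.2.2 le_rfl
  ⟨hreply.1.symm.trans h.1, (hreply.2 m h.1).symm.trans h.2⟩

theorem predicts_congr (hστ : σ.AgreeBelow n τ) (hn : K + 1 < n) : Predicts σ = Predicts τ := by
  ext m x a
  exact ⟨.of_agreeBelow hστ hn, .of_agreeBelow hστ.symm hn⟩

theorem isProposal_avoids (hW : W.Saturated) (hx : ¬ Forces 1 W (K + 1) x) :
    IsProposal K (Avoids 1 W (K + 1)) x where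
  saturated := Avoids.saturated hW
  base := ⟨le_rfl, fun m hm hm' => le_antisymm hm' hm ▸ hx⟩
  pred _ _ hn hy := hy.pred hn
  forall_succ _ _ _ _ hodd hy hz := hy.forall_succ hW hodd hz
  exists_succ _ _ _ heven hy := hy.exists_succ hW (by simp [heven])

/-- The quasistrategy of player `0` that keeps player `1` from forcing a predicted escape. -/
def safeTree (σ : Strategy (coverGame A K)) : PosSet G := Avoids 1 (Predicted σ) (K + 1)

theorem tree_move_succ (a : CoverPlay A K) : (σ.move (K + 1) a : CoverPlay A K).tree = a.tree :=
  have hmove : CoverPlay.Agree (K + 1) (σ.move (K + 1) a) a := σ.move_agree (K + 1) a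
  hmove.2.1 le_rfl

theorem exists_reply_safeTree (ha : a.tree = safeTree σ) :
    ∃ R, (σ.move (K + 1) a : CoverPlay A K).reply = .inr R := by
  rcases ho : (σ.move (K + 1) a : CoverPlay A K).reply with m | R
  · have hsafe := (CoverPlay.escapes _ ho).2.1
    rw [tree_move_succ, ha] at hsafe
    exact (hsafe.not_forces (.base ⟨a, ho, .refl _ _⟩)).elim
  · exact ⟨R, rfl⟩

/-- The answer of `σ` to `safeTree σ`. -/
noncomputable def safeAnswer (σ : Strategy (coverGame A K)) (x : G.Play) : ℕ ⊕ PosSet G :=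
  (shadow (fun a => a.tree = safeTree σ) σ (K + 1) (G.rep (K + 1) x)).reply

theorem reply_eq_safeAnswer (ha : G.Agree (K + 1) a.play x) (htree : a.tree = safeTree σ) :
    (σ.move (K + 1) a : CoverPlay A K).reply = safeAnswer σ x :=
  ((pins_tree.shadow_agree (ha.trans (G.rep_agree _ x).symm) htree).2.2 le_rfl).1.symm

/-- A quasistrategy against which `σ` announces the escape through the position of length `i`
of `x`, if there is any. -/
noncomputable def predictedTree (σ : Strategy (coverGame A K)) (i : ℕ) (x : G.Play) : PosSet G :=
  (Classical.epsilon (Predicts σ i (G.rep i x))).tree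

/-- Player `1`'s moves in `G` when `σ` is pushed down: up to round `K` they copy `σ`; afterwards
player `1` tries to reach an escape that `σ` announces against some quasistrategy, imagining that
player `0` has announced such a quasistrategy if this succeeds, and `safeTree σ` as long as it
cannot be forced. -/
noncomputable def pushOne (σ : Strategy (coverGame A K)) (n : ℕ) (x : G.Play) : G.Play :=
  if n ≤ K then (shadow (fun _ => True) σ n x).play
  else phaseMove 1 (Predicted σ) (K + 1) n x
    (fun i => (shadow (Commits (predictedTree σ i x) (.inl i)) σ n x).play)
    (if n = K + 1 then (shadow (fun a => a.tree = safeTree σ) σ n x).play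
      else (shadow (Commits (safeTree σ) (safeAnswer σ x)) σ n x).play)

theorem pushOne_of_le (hn : n ≤ K) : pushOne σ n x = (shadow (fun _ => True) σ n x).play :=
  if_pos hn

theorem pushOne_congr (h : σ.AgreeBelow n τ) (hm : m < n) (x : G.Play) :
    G.Agree (m + 1) (pushOne σ m x) (pushOne τ m x) := by
  unfold pushOne
  split_ifs with hK hm'
  · exact (shadow_congr h hm).1
  all_goals
    have hpredicts := predicts_congr h (by omega)
    have hpredicted : Predicted σ = Predicted τ := by unfold Predicted; rw [hpredicts]
    have hsafe : safeTree σ = safeTree τ := by unfold safeTree; rw [hpredicted]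
    have htree : ∀ i, predictedTree σ i x = predictedTree τ i x := fun i => by
      unfold predictedTree
      rw [hpredicts]
    have hanswer : safeAnswer σ x = safeAnswer τ x := by
      unfold safeAnswer
      rw [hsafe]
      exact ((shadow_congr h (by omega)).2.2 le_rfl).1
    simp only [hpredicted, htree, hsafe, hanswer]
    exact phaseMove_congr (fun _ => (shadow_congr h hm).1) (shadow_congr h hm).1

theorem consistent_one (hK : K % 2 = 0) (ha : (Strategy.ofMove (pushOne σ)).Consistent 1 a.play)
    (hreply : (σ.move (K + 1) a : CoverPlay A K).reply = a.reply)
    (hpromise : ∀ m, a.reply = .inl m → G.Agree m a.play (σ.move (K + 1) a : CoverPlay A K).play)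
    (hlate : ∀ n, K + 1 ≤ n → n % 2 = 1 →
      G.Agree (n + 1) a.play (σ.move n a : CoverPlay A K).play) :
    σ.Consistent (G := coverGame A K) 1 a := by
  intro n (hn : n % 2 = 1)
  have hplay : G.Agree (n + 1) a.play (σ.move n a : CoverPlay A K).play := by
    by_cases hnK : n ≤ K
    · exact (pins_of_le hnK).agree_of_consistent ha hn (pushOne_of_le hnK) (.refl _ _) trivial
    · exact hlate n (by omega) hn
  by_cases hnK : n = K + 1
  · subst hnK
    exact ⟨hplay, fun _ => (tree_move_succ a).symm, fun _ => ⟨hreply.symm, hpromise⟩⟩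
  · exact a.agree_move_of_ne (by omega) hnK hplay

theorem exists_lift_of_predicted (hK : K % 2 = 0)
    (hx : (Strategy.ofMove (pushOne σ)).Consistent 1 x) (hi : Predicted σ i x)
    (hhit : ∀ n : ℕ, i ≤ n → n % 2 = (1 : Fin 2) → pushOne σ n (G.rep n x) =
      (shadow (Commits (predictedTree σ i x) (.inl i)) σ n (G.rep n x)).play) :
    ∃ a : CoverPlay A K, a.play = x ∧ σ.Consistent (G := coverGame A K) 1 a := by
  obtain ⟨hreply, hplay⟩ : Predicts σ i (G.rep i x) _ :=
    Classical.epsilon_spec (predicted_saturated (G.rep_agree i x).symm hi)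
  set c := Classical.epsilon (Predicts σ i (G.rep i x))
  replace hplay := hplay.trans (G.rep_agree i x)
  have hescapes := CoverPlay.escapes _ hreply
  have hS := CoverPlay.proposal (σ.move (K + 1) c)
  rw [tree_move_succ] at hescapes hS
  have hiK : K + 2 ≤ i := hescapes.1
  obtain ⟨a, rfl, ha⟩ := CoverPlay.exists_of_escapes (hS.congr (hplay.mono (by omega)))
    (Escapes.saturated hS.saturated hplay hescapes)
  have hcx : G.Agree (K + 1) c.play a.play :=
    (σ.move_agree (K + 1) c).1.symm.trans (hplay.mono (by omega))
  have hmove : CoverPlay.Agree (K + 2) (σ.move (K + 1) c) (σ.move (K + 1) a) :=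
    σ.move_congr (G := coverGame A K) (pins_tree c a rfl ha.1 hcx)
  obtain ⟨hreply', hpromise⟩ := hmove.2.2 le_rfl
  have hai : G.Agree i a.play (σ.move (K + 1) a : CoverPlay A K).play :=
    hplay.symm.trans (hpromise i hreply)
  refine ⟨a, rfl, consistent_one hK hx (hreply'.symm.trans (hreply.trans ha.2.symm))
    (fun m hm => Sum.inl_injective (ha.2.symm.trans hm) ▸ hai) fun n hn hodd => ?_⟩
  rcases lt_or_ge n i with hni | hni
  · rcases hn.eq_or_lt with rfl | hlt
    · exact hai.mono hni
    · exact (a.move_agree_promise ha.2 hlt).mono hni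
  · exact (pins_commits fun m hm => Sum.inl_injective hm ▸ hni).agree_of_consistent hx hodd
      (hhit n hni hodd) (.refl _ _) ha

theorem exists_lift_of_not_forces (hK : K % 2 = 0)
    (hx : (Strategy.ofMove (pushOne σ)).Consistent 1 x)
    (hnot : ∀ j, K + 1 ≤ j → ¬ Forces 1 (Predicted σ) j x)
    (hcalm : ∀ n : ℕ, K + 1 ≤ n → n % 2 = (1 : Fin 2) → pushOne σ n (G.rep n x) =
      if n = K + 1 then (shadow (fun a => a.tree = safeTree σ) σ n (G.rep n x)).play
      else (shadow (Commits (safeTree σ) (safeAnswer σ x)) σ n (G.rep n x)).play) :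
    ∃ a : CoverPlay A K, a.play = x ∧ σ.Consistent (G := coverGame A K) 1 a := by
  have hS : IsProposal K (safeTree σ) x :=
    isProposal_avoids predicted_saturated (hnot _ le_rfl)
  have hfirst : ∀ a : CoverPlay A K, G.Agree (K + 1) a.play x → a.tree = safeTree σ →
      G.Agree (K + 2) x (σ.move (K + 1) a : CoverPlay A K).play := fun a ha htree => by
    have hodd : (K + 1) % 2 = 1 := by omega
    exact pins_tree.agree_of_consistent hx hodd
      ((hcalm _ le_rfl hodd).trans (if_pos rfl)) ha htree
  obtain ⟨c, hcx, hc⟩ := CoverPlay.exists_of_proposal (A := A) hS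
  obtain ⟨R, hreply⟩ := exists_reply_safeTree hc
  have hanswer : safeAnswer σ x = .inr R := (reply_eq_safeAnswer hcx hc).symm.trans hreply
  obtain ⟨hR, hRc⟩ := CoverPlay.accepts _ hreply
  rw [tree_move_succ, hc] at hR
  have hlate : ∀ n : ℕ, K + 2 ≤ n → n % 2 = (1 : Fin 2) → ∀ a : CoverPlay A K,
      G.Agree n a.play x → Commits (safeTree σ) (.inr R) a →
      G.Agree (n + 1) x (σ.move n a : CoverPlay A K).play := fun n hn hodd a ha hcommit =>
    (pins_commits fun m hm => by cases hm).agree_of_consistent hx hodd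
      ((hcalm n (by omega) hodd).trans (by rw [if_neg (by omega), hanswer])) ha hcommit
  obtain ⟨a, rfl, ha⟩ := hR.exists_coverPlay hS
    (hR.saturated (hfirst c hcx hc).symm (hRc _ le_rfl))
    (fun n hn heven hy => hR.forall_succ n x x hn (by simpa using heven) hy (.refl _ _)
      ⟨by omega, fun j hj _ => hnot j hj⟩) hlate
  refine ⟨a, rfl, consistent_one hK hx ?_ (fun m hm => by simp [ha.2] at hm) fun n hn hodd => ?_⟩
  · rw [reply_eq_safeAnswer (.refl _ _) ha.1, hanswer, ha.2]
  · rcases hn.eq_or_lt with rfl | hlt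
    · exact hfirst a (.refl _ _) ha.1
    · exact hlate n hlt hodd a (.refl _ _) ha

theorem exists_lift_pushOne (hK : K % 2 = 0) (σ : Strategy (coverGame A K)) (x : G.Play)
    (hx : (Strategy.ofMove (pushOne σ)).Consistent 1 x) :
    ∃ a : CoverPlay A K, a.play = x ∧ σ.Consistent (G := coverGame A K) 1 a := by
  have hpush : ∀ n : ℕ, K + 1 ≤ n → n % 2 = (1 : Fin 2) → pushOne σ n (G.rep n x) = _ :=
    fun n hn _ => by rw [pushOne, if_neg (by omega), safeAnswer, rep_rep hn]
  have hle : ∀ i y, Predicted σ i y → K + 1 ≤ i := fun i y ⟨_, h⟩ => (Nat.le_succ _).trans h.le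
  rcases hit_or_calm predicted_saturated hle hx hpush with ⟨i, hi, hhit⟩ | ⟨hnot, hcalm⟩
  · refine exists_lift_of_predicted hK hx hi fun n hn hodd => ?_
    rw [hhit n hn hodd, predictedTree, predictedTree, rep_rep hn]
  · exact exists_lift_of_not_forces hK hx hnot hcalm

end PlayerOne

section ClosedUnravelling

variable {G : GameSpace.{u}} {A : Set G.Play} {K : ℕ}

theorem CoverPlay.push_move_agree {g : ℕ → G.Play → G.Play} {σ : Strategy (coverGame A K)} {m : ℕ}
    (hm : m ≤ K) (hg : ∀ x, g m x = (shadow (fun _ => True) σ m x).play) (a : CoverPlay A K) :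
    G.Agree (m + 1) ((Strategy.ofMove g).move m a.play) (σ.move m a : CoverPlay A K).play :=
  (pins_of_le hm).ofMove_move_agree (hg _) (.refl _ _) trivial

variable (A) in
/-- Martin's covering of a game by the cover game of `A`. -/
noncomputable def coverGameCovering (hK : K % 2 = 0) : Covering K (coverGame A K) G where
  proj := CoverPlay.play
  proj_agree h := h.1
  agree_of_proj hn h := pins_of_le (P := fun _ => True) hn _ _ trivial trivial h
  exists_proj_agree x := (CoverPlay.exists_agree x).imp fun _ h => h.pred
  push b σ := .ofMove (if b = 0 then pushZero σ else pushOne σ)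
  push_congr b n σ τ h m hm x := by
    split_ifs
    · exact Strategy.ofMove_move_congr (pushZero_congr h hm) x
    · exact Strategy.ofMove_move_congr (pushOne_congr h hm) x
  push_move b σ m hm a := by
    split_ifs
    · exact CoverPlay.push_move_agree hm.le (fun _ => pushZero_of_le hm.le) a
    · exact CoverPlay.push_move_agree hm.le (fun _ => pushOne_of_le hm.le) a
  exists_lift b σ x hx := by
    match b with
    | 0 => exact exists_lift_pushZero hK σ x hx
    | 1 => exact exists_lift_pushOne hK σ x hx

end ClosedUnravelling

namespace GameSpace

variable {G : GameSpace.{u}}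

theorem IsClosedSet.exists_unravels {A : Set G.Play} (hA : G.IsClosedSet A) (k : ℕ) :
    ∃ (J : GameSpace.{u}) (c : Covering k J G), c.Unravels A :=
  ⟨coverGame A (2 * k), (coverGameCovering A (by omega)).mono (by omega), 2 * k + 2,
    coverGame_decidedAt hA⟩

namespace UniversallyUnravelable

theorem of_isClosedSet {A : Set G.Play} (hA : G.IsClosedSet A) : G.UniversallyUnravelable A := by
  intro H k
  have hpre : H.game.IsClosedSet (H.proj ⁻¹' A) := fun x hx =>
    (hA _ hx).imp fun _ hn y hy => hn _ (H.proj_agree hy)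
  exact hpre.exists_unravels k

theorem iUnion {A : ℕ → Set G.Play} (hA : ∀ i, G.UniversallyUnravelable (A i)) :
    G.UniversallyUnravelable (⋃ i, A i) := by
  intro H k
  choose J c N hN using fun (s : GameOver G) (i : ℕ) => hA i s (k + i)
  let stage : ℕ → GameOver G := fun i => Nat.rec H
    (fun i s => ⟨J s i, fun x => s.proj ((c s i).proj x),
      fun h => s.proj_agree ((c s i).proj_agree h)⟩) i
  let T : CoveringTower.{u} k := ⟨fun i => (stage i).game, fun i => c (stage i) i⟩
  have hproj : ∀ i (x : T.limit.Play), (stage i).proj (x.1 i) = H.proj (x.1 0) := by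
    intro i
    induction i with
    | zero => exact fun x => rfl
    | succ i ih => exact fun x => by rw [← ih x, ← x.2 i]
  have hproj' (i) (x : T.limit.Play) :
      (stage i).proj ((c (stage i) i).proj (x.1 (i + 1))) = H.proj (x.1 0) := hproj (i + 1) x
  -- In the limit each `A i` is decided at a finite stage, so the union is open.
  have hclosed : T.limit.IsClosedSet {x | H.proj (x.1 0) ∈ ⋃ i, A i}ᶜ := by
    intro x hx
    obtain ⟨i, hi⟩ := mem_iUnion.1 (not_not.1 hx)
    refine ⟨N (stage i) i, fun y hy => not_not.2 (mem_iUnion.2 ⟨i, ?_⟩)⟩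
    have hdec := hN (stage i) i _ _ (hy (i + 1))
    simp only [mem_preimage, hproj'] at hdec
    exact hdec.2 hi
  obtain ⟨J', c', N', hN'⟩ := hclosed.exists_unravels k
  exact ⟨J', c'.trans T.covering, N', fun x y h => not_iff_not.1 (hN' x y h)⟩

end UniversallyUnravelable

end GameSpace

open Filter MeasureTheory Topology TopologicalSpace

/-! ### Borel Wadge games -/

section Sequences

variable {α β : Type*} [TopologicalSpace α] [DiscreteTopology α]

theorem eventually_forall_lt_eq (x : ℕ → α) (m : ℕ) : ∀ᶠ y in 𝓝 x, ∀ j < m, y j = x j :=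
  (PiNat.isOpen_cylinder _ x m).mem_nhds (PiNat.self_mem_cylinder x m)

theorem continuousOn_pi_of_forall_lt_eq [TopologicalSpace β] {C : Set (ℕ → α)}
    {f : (ℕ → α) → ℕ → β}
    (h : ∀ i, ∃ m, ∀ x ∈ C, ∀ y ∈ C, (∀ j < m, y j = x j) → f y i = f x i) : ContinuousOn f C := by
  rw [continuousOn_pi]
  intro i x hx
  obtain ⟨m, hm⟩ := h i
  refine (continuousWithinAt_const (b := f x i)).congr_of_eventuallyEq ?_ rfl
  filter_upwards [nhdsWithin_le_nhds (eventually_forall_lt_eq x m), self_mem_nhdsWithin]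
    with y hy hyC
  exact hm x hx y hyC hy

theorem continuous_pi_of_forall_lt_eq [TopologicalSpace β] {f : (ℕ → α) → ℕ → β}
    (h : ∀ i, ∃ m, ∀ x y, (∀ j < m, y j = x j) → f y i = f x i) : Continuous f :=
  continuousOn_univ.1 <| continuousOn_pi_of_forall_lt_eq fun i =>
    (h i).imp fun _ hm x _ y _ => hm x y

end Sequences

theorem mem_of_isClosed_of_forall_lt_eq {α : Type*} [TopologicalSpace α] {C : Set (ℕ → α)}
    (hC : IsClosed C) {y : ℕ → α}
    (h : ∀ n, ∃ z ∈ C, ∀ j < n, z j = y j) : y ∈ C := by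
  choose z hz hzy using h
  refine hC.mem_of_tendsto (tendsto_pi_nhds.2 fun j => ?_) (.of_forall (f := atTop) hz)
  refine tendsto_const_nhds.congr' ?_
  filter_upwards [eventually_gt_atTop j] with n hn using (hzy n j hn).symm

namespace GameSpace

theorem _root_.Strategy.Consistent.agree {G : GameSpace.{u}} {σ : Strategy G} {b : Fin 2}
    {x y : G.Play} {N : ℕ} (hx : σ.Consistent b x) (hy : σ.Consistent b y)
    (h : ∀ n : ℕ, n < N → n % 2 ≠ b → G.Agree n x y → G.Agree (n + 1) x y) : G.Agree N x y := by
  induction N with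
  | zero => exact G.agree_zero x y
  | succ N ih =>
    have hN := ih fun n hn => h n (hn.trans N.lt_succ_self)
    by_cases hb : N % 2 = b
    · exact (hx N hb).trans ((σ.move_congr hN).trans (hy N hb).symm)
    · exact h N N.lt_succ_self hb hN

theorem _root_.Strategy.exists_consistent {G : GameSpace.{u}} (σ : Strategy G) {b : Fin 2}
    {R : Set G.Play} (hne : R.Nonempty)
    (hR : ∀ n : ℕ, n % 2 = b → ∀ q ∈ R, ∃ q' ∈ R, G.Agree (n + 1) q' (σ.move n q)) :
    ∃ x, σ.Consistent b x ∧ ∀ n, ∃ q ∈ R, G.Agree n q x := by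
  let W : PosSet G := fun n x => (∃ q ∈ R, G.Agree n q x) ∧
    ∀ m : ℕ, m < n → m % 2 = b → G.Agree (m + 1) x (σ.move m x)
  have hW : W.Saturated := by
    rintro n x y h ⟨⟨q, hq, hqx⟩, hx⟩
    refine ⟨⟨q, hq, hqx.trans h⟩, fun m hm hb => ?_⟩
    exact (h.mono hm).symm.trans ((hx m hm hb).trans (σ.move_congr (h.mono hm.le)))
  have hsucc : ∀ n y, 0 ≤ n → W n y → ∃ z, G.Agree n z y ∧ W (n + 1) z := by
    rintro n y - hy
    obtain ⟨q, hq, hqy⟩ := hy.1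
    obtain ⟨q', hq', hagree, hmove⟩ : ∃ q' ∈ R, G.Agree n q' q ∧
        (n % 2 = b → G.Agree (n + 1) q' (σ.move n q')) := by
      by_cases hb : n % 2 = b
      · obtain ⟨q', hq', h⟩ := hR n hb q hq
        have hqq' := h.pred.trans (σ.move_agree n q)
        exact ⟨q', hq', hqq', fun _ => h.trans (σ.move_congr hqq'.symm)⟩
      · exact ⟨q, hq, .refl _ _, fun h => (hb h).elim⟩
    refine ⟨q', hagree.trans hqy, ⟨q', hq', .refl _ _⟩, fun m hm hb => ?_⟩
    obtain hm | rfl := Nat.lt_succ_iff_lt_or_eq.1 hm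
    · exact (hW (hagree.trans hqy).symm hy).2 m hm hb
    · exact hmove hb
  obtain ⟨q, hq⟩ := hne
  obtain ⟨x, -, hx⟩ := exists_forall_posSet hW (fun n y _ ⟨⟨q, hq, hqy⟩, hy⟩ =>
    ⟨⟨q, hq, hqy.pred⟩, fun m hm => hy m (hm.trans n.lt_succ_self)⟩) hsucc le_rfl
    ⟨⟨q, hq, .refl 0 q⟩, fun m hm => (m.not_lt_zero hm).elim⟩
  exact ⟨x, fun n hn => (hx (n + 1) n.succ.zero_le).2 n n.lt_succ_self hn,
    fun n => (hx n n.zero_le).1⟩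

/-- The `σ`-algebra of universally unravelable sets of plays. -/
@[reducible] def unravelableSpace (G : GameSpace.{u}) : MeasurableSpace G.Play where
  MeasurableSet' := G.UniversallyUnravelable
  measurableSet_empty := .of_isClosedSet fun _ _ => ⟨0, fun _ _ => id⟩
  measurableSet_compl _ := .compl
  measurableSet_iUnion _ := .iUnion

end GameSpace

section Wadge

variable {α β : Type u} [Nonempty α] [TopologicalSpace β] {C : Set (ℕ → β)}

/-- Wadge's game: player `0` enumerates a sequence in `α` and player `1` a sequence in `β`, one term
per move, where player `1` has to stay in the closed set `C`. -/
def wadgeGame (hC : IsClosed C) (hne : C.Nonempty) : GameSpace.{u} where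
  Play := (ℕ → α) × C
  Agree n p q := (∀ i, 2 * i < n → p.1 i = q.1 i) ∧ ∀ i, 2 * i + 1 < n → p.2.1 i = q.2.1 i
  agree_refl _ _ := ⟨fun _ _ => rfl, fun _ _ => rfl⟩
  agree_symm h := ⟨fun i hi => (h.1 i hi).symm, fun i hi => (h.2 i hi).symm⟩
  agree_trans h h' :=
    ⟨fun i hi => (h.1 i hi).trans (h'.1 i hi), fun i hi => (h.2 i hi).trans (h'.2 i hi)⟩
  agree_pred h := ⟨fun i hi => h.1 i (by omega), fun i hi => h.2 i (by omega)⟩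
  agree_zero _ _ := ⟨fun i hi => by omega, fun i hi => by omega⟩
  eq_of_agree h := Prod.ext (funext fun i => (h (2 * i + 1)).1 i (by omega))
    (Subtype.ext (funext fun i => (h (2 * i + 2)).2 i (by omega)))
  exists_limit s hs := by
    have stable₁ (i n) (h : 2 * i + 1 ≤ n) : (s (2 * i + 1)).1 i = (s n).1 i := by
      induction n, h using Nat.le_induction with
      | base => rfl
      | succ n hn ih => exact ih.trans ((hs n).1 i (by omega))
    have stable₂ (i n) (h : 2 * i + 2 ≤ n) : (s (2 * i + 2)).2.1 i = (s n).2.1 i := by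
      induction n, h using Nat.le_induction with
      | base => rfl
      | succ n hn ih => exact ih.trans ((hs n).2 i (by omega))
    refine ⟨⟨fun i => (s (2 * i + 1)).1 i, fun i => (s (2 * i + 2)).2.1 i,
      mem_of_isClosed_of_forall_lt_eq hC fun n => ⟨(s (2 * n)).2, (s (2 * n)).2.2, fun i hi => ?_⟩⟩,
      fun n => ⟨fun i hi => stable₁ i n hi, fun i hi => stable₂ i n hi⟩⟩
    exact (stable₂ i (2 * n) (by omega)).symm
  nonempty := have := hne.to_subtype; inferInstance

variable (hC : IsClosed C) (hne : C.Nonempty)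

theorem measurable_fst_wadgeGame [MeasurableSpace α] :
    Measurable[(wadgeGame (α := α) hC hne).unravelableSpace] (Prod.fst : (ℕ → α) × C → ℕ → α) := by
  refine @measurable_pi_lambda _ _ _ (_) _ _ fun i s _ => .of_isClosedSet fun p hp =>
    ⟨2 * i + 1, fun q hq hqs => hp ?_⟩
  have hqi : q.1 i ∈ s := hqs
  rwa [hq.1 i (by omega)] at hqi

theorem measurable_snd_wadgeGame [MeasurableSpace β] :
    Measurable[(wadgeGame (α := α) hC hne).unravelableSpace]
      (fun p : (ℕ → α) × C => (p.2 : ℕ → β)) := by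
  refine @measurable_pi_lambda _ _ _ (_) _ _ fun i s _ => .of_isClosedSet fun p hp =>
    ⟨2 * i + 2, fun q hq hqs => hp ?_⟩
  have hqi : q.2.1 i ∈ s := hqs
  rwa [hq.2 i (by omega)] at hqi

theorem exists_consistent_one_wadgeGame (σ : Strategy (wadgeGame (α := α) hC hne)) (x : ℕ → α) :
    ∃ p : (ℕ → α) × C, σ.Consistent 1 p ∧ p.1 = x := by
  have hreply : ∀ n : ℕ, n % 2 = (1 : Fin 2) → ∀ q ∈ {q : (ℕ → α) × C | q.1 = x},
      ∃ q' ∈ {q : (ℕ → α) × C | q.1 = x}, (wadgeGame hC hne).Agree (n + 1) q' (σ.move n q) := by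
    rintro n hn q rfl
    replace hn : n % 2 = 1 := hn
    exact ⟨(q.1, (σ.move n q).2), rfl, fun i hi => ((σ.move_agree n q).1 i (by omega)).symm,
      fun i _ => rfl⟩
  obtain ⟨p, hp, hpx⟩ := σ.exists_consistent (R := {q | q.1 = x})
    ⟨(x, ⟨hne.some, hne.some_mem⟩), rfl⟩ hreply
  refine ⟨p, hp, funext fun i => ?_⟩
  obtain ⟨q, rfl, hq⟩ := hpx (2 * i + 1)
  exact (hq.1 i (by omega)).symm

theorem exists_consistent_zero_wadgeGame (σ : Strategy (wadgeGame (α := α) hC hne)) {y : ℕ → β}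
    (hy : y ∈ C) : ∃ p : (ℕ → α) × C, σ.Consistent 0 p ∧ p.2 = y := by
  have hreply : ∀ n : ℕ, n % 2 = (0 : Fin 2) → ∀ q ∈ {q : (ℕ → α) × C | q.2 = y},
      ∃ q' ∈ {q : (ℕ → α) × C | q.2 = y}, (wadgeGame hC hne).Agree (n + 1) q' (σ.move n q) := by
    rintro n hn q rfl
    replace hn : n % 2 = 0 := hn
    exact ⟨((σ.move n q).1, q.2), rfl, fun i _ => rfl,
      fun i hi => ((σ.move_agree n q).2 i (by omega)).symm⟩
  obtain ⟨p, hp, hpy⟩ := σ.exists_consistent (R := {q | q.2 = y})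
    ⟨(fun _ => Classical.arbitrary α, ⟨y, hy⟩), rfl⟩ hreply
  refine ⟨p, hp, funext fun i => ?_⟩
  obtain ⟨q, rfl, hq⟩ := hpy (2 * i + 2)
  exact (hq.2 i (by omega)).symm

theorem wadge_dichotomy [MeasurableSpace α] [MeasurableSpace β] [TopologicalSpace α]
    [DiscreteTopology α] [DiscreteTopology β] {A : Set (ℕ → α)} {B : Set (ℕ → β)}
    (hC : IsClosed C) (hne : C.Nonempty) (hA : MeasurableSet A) (hB : MeasurableSet B) :
    (∃ f : (ℕ → α) → ℕ → β, Continuous f ∧ ∀ x, f x ∈ C ∧ (f x ∈ B ↔ x ∈ A)) ∨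
      ∃ f : (ℕ → β) → ℕ → α, ContinuousOn f C ∧ ∀ y ∈ C, (f y ∈ A ↔ y ∉ B) := by
  have hwin : (wadgeGame hC hne).UniversallyUnravelable {p | ¬ (p.1 ∈ A ↔ p.2.1 ∈ B)} := by
    have h := ((measurable_fst_wadgeGame hC hne hA).symmDiff (measurable_snd_wadgeGame hC hne hB))
    convert! h using 1
    ext p
    simp only [mem_ofPred_eq, mem_symmDiff]
    tauto
  rcases hwin.determined with ⟨σ, hσ⟩ | ⟨σ, hσ⟩
  · right
    have : Nonempty ((ℕ → α) × C) := (wadgeGame hC hne).nonempty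
    choose! p hp hpy using fun y (hy : y ∈ C) =>
      exists_consistent_zero_wadgeGame hC hne σ hy
    refine ⟨fun y => (p y).1, continuousOn_pi_of_forall_lt_eq fun i =>
      ⟨i, fun y hy z hz hyz => ?_⟩, fun y hy => ?_⟩
    · refine ((hp z hz).agree (hp y hy) (N := 2 * i + 1) fun n hn hb h =>
        ⟨fun j hj => h.1 j ?_, fun j hj => ?_⟩).1 i (by omega)
      · have : n % 2 ≠ 0 := hb
        omega
      · rw [hpy z hz, hpy y hy, hyz j (by omega)]
    · have h : ¬ ((p y).1 ∈ A ↔ (p y).2.1 ∈ B) := hσ _ (hp y hy)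
      rw [hpy y hy] at h
      tauto
  · left
    choose p hp hpx using exists_consistent_one_wadgeGame hC hne σ
    refine ⟨fun x => (p x).2, continuous_pi_of_forall_lt_eq fun i =>
      ⟨i + 1, fun x y hxy => ?_⟩, fun x => ⟨(p x).2.2, ?_⟩⟩
    · refine ((hp y).agree (hp x) (N := 2 * i + 2) fun n hn hb h =>
        ⟨fun j hj => ?_, fun j hj => h.2 j ?_⟩).2 i (by omega)
      · rw [hpx y, hpx x, hxy j (by omega)]
      · have : n % 2 ≠ 1 := hb
        omega
    · have h : ¬ ¬ ((p x).1 ∈ A ↔ (p x).2.1 ∈ B) := hσ _ (hp x)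
      rw [hpx x] at h
      tauto

end Wadge

/-! ### Ranked sets and partial continuous maps -/

section Ranked

variable {E E' : Type*} [TopologicalSpace E] [TopologicalSpace E'] {A B : Set E}

theorem isGδ_inter_preimage {D : Set E} {f : E → E'} {T : Set E'} (hD : IsGδ D)
    (hf : ContinuousOn f D) (hT : IsGδ T) : IsGδ (D ∩ f ⁻¹' T) := by
  obtain ⟨U, hU, rfl⟩ := isGδ_iff_eq_iInter_nat.1 hT
  choose V hV hUV using fun n => continuousOn_iff'.1 hf (U n) (hU n)
  have h : D ∩ f ⁻¹' (⋂ n, U n) = D ∩ ⋂ n, V n := by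
    rw [preimage_iInter, inter_iInter, inter_iInter]
    exact iInter_congr fun n => by rw [inter_comm, hUV n, inter_comm]
  exact h ▸ hD.inter (.iInter fun n => (hV n).isGδ)

/-- `A` is determined by a rank function `g` for which each `{x | k < g x}` is `Gδ`, that is, `A` is
a union of differences of consecutive members of an increasing sequence of `Fσ` sets covering the
space. In the Cantor space these are the members of `Δ`. -/
def IsGδRanked (A : Set E) : Prop :=
  ∃ (g : E → ℕ) (S : Set ℕ), (∀ k, IsGδ {x | k < g x}) ∧ A = g ⁻¹' S

namespace IsGδRanked

open Classical in
theorem of_isGδ (h : IsGδ A) : IsGδRanked A := by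
  refine ⟨fun x => if x ∈ A then 1 else 0, {1}, fun k => ?_, by ext x; simp⟩
  rcases k with _ | k
  · simpa [Nat.pos_iff_ne_zero] using h
  · convert! IsGδ.empty using 1
    ext x
    by_cases hx : x ∈ A <;> simp [hx]

theorem compl (h : IsGδRanked A) : IsGδRanked Aᶜ := by
  obtain ⟨g, S, hg, rfl⟩ := h
  exact ⟨g, Sᶜ, hg, rfl⟩

theorem inter (hA : IsGδRanked A) (hB : IsGδRanked B) : IsGδRanked (A ∩ B) := by
  obtain ⟨g, S, hg, rfl⟩ := hA
  obtain ⟨g', S', hg', rfl⟩ := hB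
  refine ⟨fun x => Nat.pair (g x) (g' x), {n | n.unpair.1 ∈ S ∧ n.unpair.2 ∈ S'}, fun k => ?_,
    by ext x; simp⟩
  have hmono {a a' b b' : ℕ} (ha : a ≤ a') (hb : b ≤ b') : Nat.pair a b ≤ Nat.pair a' b' :=
    ((StrictMono.monotone (f := (Nat.pair · b)) fun _ _ h => Nat.pair_lt_pair_left b h) ha).trans
      ((StrictMono.monotone (f := Nat.pair a') fun _ _ h => Nat.pair_lt_pair_right a' h) hb)
  have h : {x | k < Nat.pair (g x) (g' x)} =
      ⋂ j ∈ {j | j ≤ k}, ({x | j.unpair.1 < g x} ∪ {x | j.unpair.2 < g' x}) := by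
    ext x
    simp only [mem_ofPred_eq, mem_iInter, mem_union]
    refine ⟨fun h j hj => ?_, fun h => ?_⟩
    · by_contra! hle
      have := hmono hle.1 hle.2
      rw [Nat.pair_unpair] at this
      omega
    · by_contra! hle
      simpa using h _ hle
  rw [h]
  exact .biInter (Set.finite_le_nat k).countable fun j _ => (hg _).union (hg' _)

theorem union (hA : IsGδRanked A) (hB : IsGδRanked B) : IsGδRanked (A ∪ B) := by
  simpa [compl_inter] using (hA.compl.inter hB.compl).compl

theorem diff (hA : IsGδRanked A) (hB : IsGδRanked B) : IsGδRanked (A \ B) := hA.inter hB.compl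

theorem empty : IsGδRanked (∅ : Set E) := of_isGδ .empty

theorem iUnion {ι : Type*} [Finite ι] {A : ι → Set E} (h : ∀ i, IsGδRanked (A i)) :
    IsGδRanked (⋃ i, A i) := by
  rw [← biUnion_univ]
  exact Set.finite_univ.induction_on _ (by simpa using empty) fun _ _ ih => by
    simpa using (h _).union ih

open Classical in
theorem inter_preimage {D : Set E} {f : E → E'} {B : Set E'} (hB : IsGδRanked B) (hD : IsGδ D)
    (hf : ContinuousOn f D) : IsGδRanked (D ∩ f ⁻¹' B) := by
  obtain ⟨g, S, hg, rfl⟩ := hB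
  refine ⟨fun x => if x ∈ D then g (f x) + 1 else 0, (· + 1) '' S, fun k => ?_, ?_⟩
  · rcases k with _ | k
    · convert! hD using 1
      ext x
      by_cases hx : x ∈ D <;> simp [hx]
    · convert! isGδ_inter_preimage hD hf (hg k) using 1
      ext x
      by_cases hx : x ∈ D <;> simp [hx]
  · ext x
    by_cases hx : x ∈ D <;> simp [hx]

theorem compl_diff {D : Set E} (hD : IsGδ D) (h : IsGδRanked (A \ D)) : IsGδRanked (Aᶜ \ D) := by
  convert! (of_isGδ hD).compl.diff h using 1
  ext x
  simp only [Set.mem_sdiff, mem_compl_iff]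
  tauto

end IsGδRanked

theorem isFsigma_of_isGδ_compl {A : Set Cantor} (h : IsGδ Aᶜ) : IsFsigma A := by
  obtain ⟨U, hU, hAU⟩ := isGδ_iff_eq_iInter_nat.1 h
  exact ⟨fun n => (U n)ᶜ, fun n => (hU n).isClosed_compl,
    by rw [← compl_iInter, ← hAU, compl_compl]⟩

open Classical in
theorem IsGδRanked.dOmegaSigmaTwo {A : Set Cantor} (hA : IsGδRanked A) : DOmegaSigmaTwo A := by
  obtain ⟨g, S, hg, rfl⟩ := hA
  -- The `k`-th odd difference is `{g < k + 1} \ {g < k}` for `k ∈ S` and empty for `k ∉ S`.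
  let c : ℕ → ℕ := fun n => if Even n ∧ n / 2 ∈ S then n / 2 else n / 2 + 1
  have hc_ge (n : ℕ) : n / 2 ≤ c n := by simp only [c]; split_ifs <;> omega
  have hc_le (n : ℕ) : c n ≤ n / 2 + 1 := by simp only [c]; split_ifs <;> omega
  have hc_odd {n : ℕ} (hn : Odd n) : c n = n / 2 + 1 :=
    if_neg fun h => Nat.not_even_iff_odd.2 hn h.1
  refine ⟨fun n => {x | g x < c n}, fun n => isFsigma_of_isGδ_compl ?_, ?_, ?_⟩
  · rcases h : c n with _ | k
    · simp [h]
    · simpa [compl_ofPred, h, Nat.succ_le_iff] using hg k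
  · refine monotone_nat_of_le_succ fun n x (hx : g x < c n) => hx.trans_le (?_ : c n ≤ c (n + 1))
    rcases Nat.even_or_odd n with hn | hn
    · rw [hc_odd hn.add_one]
      have := hc_le n
      omega
    · rw [hc_odd hn]
      have := hc_ge (n + 1)
      obtain ⟨k, rfl⟩ := hn
      omega
  · ext x
    simp only [mem_preimage, mem_iUnion, Set.mem_sdiff, mem_ofPred_eq, exists_prop, not_exists,
      not_and, not_lt]
    refine ⟨fun hx => ⟨2 * g x + 1, odd_two_mul_add_one _, ?_, fun m hm => ?_⟩, ?_⟩
    · rw [hc_odd (odd_two_mul_add_one _)]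
      omega
    · rcases eq_or_lt_of_le (Nat.lt_succ_iff.1 hm) with rfl | hm
      · simp [c, hx]
      · exact (hc_le m).trans (by omega)
    · rintro ⟨n, ⟨k, rfl⟩, hlt, hle⟩
      rw [hc_odd (odd_two_mul_add_one _)] at hlt
      have hk := hle (2 * k) (by omega)
      by_cases hkS : k ∈ S
      · have : c (2 * k) = k := by simp [c, hkS]
        rwa [show g x = k by omega]
      · have : c (2 * k) = k + 1 := by simp [c, hkS]
        omega

theorem IsGδRanked.inDelta {A : Set Cantor} (hA : IsGδRanked A) : InDelta A :=
  ⟨hA.dOmegaSigmaTwo, hA.compl.dOmegaSigmaTwo⟩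

end Ranked

section GδMap

/-- A partial continuous map defined on a `Gδ` set; the values of `toFun` outside `dom` are junk. -/
structure GδMap (E E' : Type*) [TopologicalSpace E] [TopologicalSpace E'] where
  dom : Set E
  toFun : E → E'
  isGδ_dom : IsGδ dom
  continuousOn : ContinuousOn toFun dom

namespace GδMap

variable {E E' E'' : Type*} [TopologicalSpace E] [TopologicalSpace E'] [TopologicalSpace E'']

instance : CoeFun (GδMap E E') fun _ => E → E' := ⟨toFun⟩

/-- The identity map, defined everywhere. -/
def id (E : Type*) [TopologicalSpace E] : GδMap E E where
  dom := univ
  toFun x := x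
  isGδ_dom := .univ
  continuousOn := continuousOn_id

/-- Composition, on the largest domain where it makes sense. -/
def comp (g : GδMap E' E'') (f : GδMap E E') : GδMap E E'' where
  dom := f.dom ∩ f ⁻¹' g.dom
  toFun x := g (f x)
  isGδ_dom := isGδ_inter_preimage f.isGδ_dom f.continuousOn g.isGδ_dom
  continuousOn := g.continuousOn.comp (f.continuousOn.mono inter_subset_left) inter_subset_right

/-- On its domain, `f` is a reduction of `A` to `B`. -/
def Reduces (f : GδMap E E') (A : Set E) (B : Set E') : Prop := ∀ x ∈ f.dom, f x ∈ B ↔ x ∈ A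

namespace Reduces

variable {f : GδMap E E'} {g : GδMap E' E''} {A : Set E} {B : Set E'} {C : Set E''}

theorem compl (hf : f.Reduces A B) : f.Reduces Aᶜ Bᶜ := fun x hx => not_congr (hf x hx)

theorem comp (hg : g.Reduces B C) (hf : f.Reduces A B) : (g.comp f).Reduces A C :=
  fun x hx => (hg _ hx.2).trans (hf x hx.1)

theorem isGδRanked_diff_dom_comp (hf : f.Reduces A B) (hA : IsGδRanked (A \ f.dom))
    (hB : IsGδRanked (B \ g.dom)) : IsGδRanked (A \ (g.comp f).dom) := by
  convert! hA.union (hB.inter_preimage f.isGδ_dom f.continuousOn) using 1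
  ext x
  by_cases hx : x ∈ f.dom
  · simp [GδMap.comp, hx, hf x hx]
  · simp [GδMap.comp, hx]

end Reduces

theorem exists_glue {s : ℕ → Set E} (hs : ∀ i, IsClopen (s i)) (f : ℕ → GδMap E E') :
    ∃ F : GδMap E E', F.dom = {x | ∃ i, x ∈ disjointed s i ∧ x ∈ (f i).dom} ∧
      ∀ i, EqOn F (f i) (disjointed s i) := by
  have hd (i) : IsClopen (disjointed s i) :=
    disjointedRec (p := IsClopen) (fun _ _ h => h.diff (hs _)) (hs i)
  have hunique {i j x} (hi : x ∈ disjointed s i) (hj : x ∈ disjointed s j) : j = i :=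
    by_contra fun h => disjoint_left.1 (disjoint_disjointed s h) hj hi
  have hpick (x) : ∃ j, ∀ i, x ∈ disjointed s i → j = i := by
    by_cases hx : ∃ j, x ∈ disjointed s j
    · exact hx.imp fun j hj i hi => hunique hi hj
    · exact ⟨0, fun i hi => (hx ⟨i, hi⟩).elim⟩
  choose ι hι using hpick
  refine ⟨⟨{x | ∃ i, x ∈ disjointed s i ∧ x ∈ (f i).dom}, fun x => f (ι x) x, ?_, ?_⟩, rfl,
    fun i x hx => by simp only [hι x i hx]⟩
  · have h : {x | ∃ i, x ∈ disjointed s i ∧ x ∈ (f i).dom} =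
        (⋃ i, disjointed s i) ∩ ⋂ i, ((disjointed s i)ᶜ ∪ (f i).dom) := by
      ext x
      simp only [mem_ofPred_eq, mem_inter_iff, mem_iUnion, mem_iInter, mem_union, mem_compl_iff]
      refine ⟨fun ⟨i, hi, hif⟩ => ⟨⟨i, hi⟩, fun j => ?_⟩, fun ⟨⟨i, hi⟩, h⟩ =>
        ⟨i, hi, (h i).resolve_left (not_not.2 hi)⟩⟩
      exact or_iff_not_imp_left.2 fun hj => by rwa [hunique hi (not_not.1 hj)]
    rw [h]
    exact (isOpen_iUnion fun i => (hd i).isOpen).isGδ.inter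
      (.iInter fun i => (hd i).compl.isOpen.isGδ.union (f i).isGδ_dom)
  · rintro x ⟨i, hi, hif⟩
    have hnear : ∀ᶠ y in 𝓝 x, y ∈ disjointed s i := (hd i).isOpen.mem_nhds hi
    refine ((((f i).continuousOn x hif).mono_of_mem_nhdsWithin ?_)).congr_of_eventuallyEq
      (nhdsWithin_le_nhds <| hnear.mono fun y hy => by simp only [hι y i hy])
      (by simp only [hι x i hi])
    filter_upwards [nhdsWithin_le_nhds hnear, self_mem_nhdsWithin] with y hy ⟨j, hj, hjf⟩
    rwa [← hunique hy hj]

end GδMap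

end GδMap

section Lavrentiev

open Uniformity

variable {E E' : Type*} [TopologicalSpace E] [TopologicalSpace E']

theorem isGδ_setOf_cauchy_map_nhdsWithin {E' : Type*} [PseudoMetrizableSpace E] [UniformSpace E']
    [(𝓤 E').IsCountablyGenerated] (A : Set E) (f : E → E') :
    IsGδ {x | Cauchy (map f (𝓝[A] x))} := by
  obtain ⟨V, hV⟩ := (𝓤 E').exists_antitone_basis
  let O (n : ℕ) : Set E := ⋃₀ {U | IsOpen U ∧ ∀ y ∈ U ∩ A, ∀ z ∈ U ∩ A, (f y, f z) ∈ V n}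
  have hO (n x) : x ∈ O n ↔ ∃ T ∈ map f (𝓝[A] x), ∀ y ∈ T, ∀ z ∈ T, (y, z) ∈ V n := by
    refine ⟨fun ⟨U, ⟨hU, hUV⟩, hx⟩ => ⟨f '' (U ∩ A), image_mem_map ?_, ?_⟩,
      fun ⟨T, hT, hTV⟩ => ?_⟩
    · exact inter_mem (nhdsWithin_le_nhds (hU.mem_nhds hx)) self_mem_nhdsWithin
    · rintro _ ⟨y, hy, rfl⟩ _ ⟨z, hz, rfl⟩
      exact hUV y hy z hz
    · obtain ⟨U, hU, hxU, hUT⟩ := mem_nhdsWithin.1 hT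
      exact ⟨U, ⟨hU, fun y hy z hz => hTV _ (hUT hy) _ (hUT hz)⟩, hxU⟩
  have h : {x | Cauchy (map f (𝓝[A] x))} = closure A ∩ ⋂ n, O n := by
    ext x
    simp only [mem_ofPred_eq, hV.1.cauchy_iff, mem_inter_iff, mem_iInter, hO, map_neBot_iff,
      mem_closure_iff_nhdsWithin_neBot, true_imp_iff]
  rw [h]
  let := pseudoMetrizableSpacePseudoMetric E
  exact isClosed_closure.isGδ.inter (.iInter fun n => (isOpen_sUnion fun U hU => hU.1).isGδ)

theorem exists_gδMap_extends [PseudoMetrizableSpace E] [IsCompletelyMetrizableSpace E']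
    {A : Set E} {f : E → E'} (hf : ContinuousOn f A) :
    ∃ F : GδMap E E', A ⊆ F.dom ∧ EqOn F f A := by
  let := upgradeIsCompletelyMetrizable E'
  refine ⟨⟨{x | Cauchy (map f (𝓝[A] x))}, extendFrom A f, isGδ_setOf_cauchy_map_nhdsWithin A f,
    continuousOn_extendFrom (fun x hx => ?_) fun x hx => CompleteSpace.complete hx⟩,
    fun x hx => ?_, fun x hx => extendFrom_eq (subset_closure hx) (hf x hx)⟩
  · exact mem_closure_iff_nhdsWithin_neBot.2 (map_neBot_iff f |>.1 hx.1)
  · have := mem_closure_iff_nhdsWithin_neBot.1 (subset_closure hx)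
    exact (hf x hx).cauchy_map

theorem exists_gδMap_extends_subtype [PseudoMetrizableSpace E] [IsCompletelyMetrizableSpace E']
    [Nonempty E'] {A : Set E} {f : A → E'} (hf : Continuous f) :
    ∃ F : GδMap E E', A ⊆ F.dom ∧ ∀ x : A, F x = f x := by
  let g : E → E' := Function.extend (↑) f fun _ => Classical.arbitrary E'
  have hg (x : A) : g x = f x := Subtype.val_injective.extend_apply f _ x
  obtain ⟨F, hdom, hF⟩ := exists_gδMap_extends (A := A) (f := g) <| by
    rw [continuousOn_iff_continuous_domRestrict]
    exact hf.congr fun x => (hg x).symm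
  exact ⟨F, hdom, fun x => (hF x.2).trans (hg x)⟩

theorem lavrentiev [IsCompletelyMetrizableSpace E] [IsCompletelyMetrizableSpace E'] [Nonempty E]
    [Nonempty E'] {X : Set E} {Y : Set E'} (h : X ≃ₜ Y) :
    ∃ F : GδMap E E', X ⊆ F.dom ∧ (∀ x : X, F x = h x) ∧ F.Reduces X Y := by
  obtain ⟨F, hXF, hF⟩ := exists_gδMap_extends_subtype (continuous_subtype_val.comp h.continuous)
  obtain ⟨F', hYF', hF'⟩ :=
    exists_gδMap_extends_subtype (continuous_subtype_val.comp h.symm.continuous)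
  have hFh (x : X) : F x = h x := hF x
  have hinv (x : X) : F' (F x) = x := by simp [hFh, hF']
  have hdiag : IsGδ (diagonal E) := by
    let := upgradeIsCompletelyMetrizable E
    exact isClosed_diagonal.isGδ
  let D := (F'.comp F).dom
  refine ⟨⟨D ∩ (fun x => (F' (F x), x)) ⁻¹' diagonal E, F, isGδ_inter_preimage
    (F'.comp F).isGδ_dom ((F'.comp F).continuousOn.prodMk continuousOn_id) hdiag,
    F.continuousOn.mono fun x hx => hx.1.1⟩, fun x hx => ⟨⟨hXF hx, ?_⟩, hinv ⟨x, hx⟩⟩, hFh, ?_⟩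
  · exact hYF' (hFh ⟨x, hx⟩ ▸ (h ⟨x, hx⟩).2)
  · rintro x ⟨-, hx⟩
    refine ⟨fun hY => ?_, fun hX => hFh ⟨x, hX⟩ ▸ (h ⟨x, hX⟩).2⟩
    have hx : F' (F x) = x := hx
    have hmem := (h.symm ⟨F x, hY⟩).2
    rwa [← show F' (F x) = h.symm ⟨F x, hY⟩ from hF' ⟨F x, hY⟩, hx] at hmem

end Lavrentiev

theorem IsHomogeneous.exists_gδMap {Y t : Set Cantor} (hY : IsHomogeneous Y) (ht : IsClopen t)
    (hne : (Y ∩ t).Nonempty) :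
    ∃ F : GδMap Cantor Cantor, Y ⊆ F.dom ∧ F.Reduces Y Y ∧ ∀ z ∈ F.dom, F z ∈ t := by
  obtain ⟨p, hpY, hpt⟩ := hne
  choose h hh using fun y : Y => hY y ⟨p, hpY⟩
  choose G hYG hGh hG using fun y : Y => lavrentiev (h y)
  have hnhd (y : Y) : ∃ O : Set Cantor, IsClopen O ∧ (y : Cantor) ∈ O ∧
      ∀ z ∈ O, z ∈ (G y).dom → G y z ∈ t := by
    obtain ⟨U, hU, htU⟩ := continuousOn_iff'.1 (G y).continuousOn t ht.isOpen
    have hmem {z} (hz : z ∈ (G y).dom) : G y z ∈ t ↔ z ∈ U := by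
      simpa [hz] using congrArg (z ∈ ·) htU
    obtain ⟨O, hO, hyO, hOU⟩ := compact_exists_isClopen_in_isOpen hU
      ((hmem (hYG y y.2)).1 (by simpa [hGh, hh] using hpt))
    exact ⟨O, hO, hyO, fun z hz hzG => (hmem hzG).2 (hOU hz)⟩
  choose O hO hyO hOt using hnhd
  obtain ⟨T, hT, hTO⟩ := isOpen_iUnion_countable O fun y => (hO y).isOpen
  have hpT : T.Nonempty := by
    by_contra! hempty
    have hp : p ∈ ⋃ y ∈ T, O y := hTO ▸ mem_iUnion.2 ⟨⟨p, hpY⟩, hyO _⟩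
    simp [hempty] at hp
  obtain ⟨e, rfl⟩ := hT.exists_eq_range hpT
  obtain ⟨F, hdom, hF⟩ := GδMap.exists_glue (fun i => hO (e i)) fun i => G (e i)
  refine ⟨F, fun y hy => ?_, fun z hz => ?_, fun z hz => ?_⟩
  · have hyU : y ∈ ⋃ i, disjointed (fun i => O (e i)) i := by
      rw [iUnion_disjointed, ← biUnion_range (g := O), hTO]
      exact mem_iUnion.2 ⟨⟨y, hy⟩, hyO _⟩
    obtain ⟨i, hi⟩ := mem_iUnion.1 hyU
    exact hdom ▸ ⟨i, hi, hYG _ hy⟩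
  · obtain ⟨i, hi, hiG⟩ := hdom ▸ hz
    rw [hF i hi]
    exact hG _ z hiG
  · obtain ⟨i, hi, hiG⟩ := hdom ▸ hz
    rw [hF i hi]
    exact hOt _ z (disjointed_subset (fun i => O (e i)) i hi) hiG

/-! ### The Martin–Monk argument -/

theorem exists_seq_of_forall_update {α : Type*} [Nonempty α] {P : ℕ → (ℕ → α) → Prop}
    (hloc : ∀ m T T', (∀ i ≤ m, T i = T' i) → P m T → P m T')
    (hstep : ∀ m T, (∀ i < m, P i T) → ∃ a, P m (Function.update T m a)) : ∃ T, ∀ m, P m T := by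
  choose! a ha using hstep
  let G (m : ℕ) : ℕ → α :=
    m.rec (fun _ => Classical.arbitrary α) fun m T => Function.update T m (a m T)
  have hG (i d : ℕ) : G (i + 1 + d) i = G (i + 1) i := by
    induction d with
    | zero => rfl
    | succ d ih => exact (Function.update_of_ne (by change i ≠ i + 1 + d; omega) _ _).trans ih
  have hG_lt {i m : ℕ} (h : i < m) : G (i + 1) i = G m i := by
    obtain ⟨d, rfl⟩ := Nat.exists_eq_add_of_le h
    exact (hG i d).symm
  refine ⟨fun i => G (i + 1) i, fun m => m.strong_induction_on fun m ih => ?_⟩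
  exact hloc m (G (m + 1)) _ (fun i hi => (hG_lt (Nat.lt_succ_of_le hi)).symm)
    (ha m (G m) fun i hi => hloc i _ _ (fun j hj => hG_lt (hj.trans_lt hi)) (ih i hi))

theorem exists_nhds_forall_tendsto {E : Type*} [TopologicalSpace E] [IsCompletelyMetrizableSpace E]
    {D : Set E} (hD : IsGδ D) : ∃ V : ℕ → E → Set E, (∀ m, ∀ x ∈ D, V m x ∈ 𝓝 x) ∧
      ∀ (N : ℕ) (u : ℕ → E), (∀ m ≥ N, u m ∈ D ∧ ∀ m' ≥ m, u m' ∈ V m (u m)) →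
        ∃ x ∈ D, Tendsto u atTop (𝓝 x) := by
  let := upgradeIsCompletelyMetrizable E
  obtain ⟨O, hO, rfl⟩ := isGδ_iff_eq_iInter_nat.1 hD
  have hr (m : ℕ) (x : E) : ∃ r, x ∈ ⋂ n, O n → 0 < r ∧
      Metric.closedBall x r ⊆ Metric.ball x ((1 / 2) ^ m) ∩ ⋂ n ≤ m, O n := by
    by_cases hx : x ∈ ⋂ n, O n
    · have hopen : IsOpen (Metric.ball x ((1 / 2) ^ m) ∩ ⋂ n ≤ m, O n) :=
        Metric.isOpen_ball.inter ((Set.finite_le_nat m).isOpen_biInter fun n _ => hO n)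
      have hx' : x ∈ Metric.ball x ((1 / 2) ^ m) ∩ ⋂ n ≤ m, O n :=
        ⟨Metric.mem_ball_self (by positivity), mem_iInter₂.2 fun n _ => mem_iInter.1 hx n⟩
      exact (Metric.nhds_basis_closedBall.mem_iff.1 (hopen.mem_nhds hx')).imp fun r hr _ => hr
    · exact ⟨0, fun h => (hx h).elim⟩
  choose r hr using hr
  refine ⟨fun m x => Metric.closedBall x (r m x),
    fun m x hx => Metric.closedBall_mem_nhds x (hr m x hx).1, fun N u hu => ?_⟩
  have hcauchy : CauchySeq u := by
    refine Metric.cauchySeq_iff'.2 fun ε hε => ?_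
    obtain ⟨k, hk⟩ := exists_pow_lt_of_lt_one hε (show (1 / 2 : ℝ) < 1 by norm_num)
    have h := hu (max N k) (le_max_left _ _)
    refine ⟨max N k, fun n hn => (Metric.mem_ball.1 ((hr _ _ h.1).2 (h.2 n hn)).1).trans ?_⟩
    exact (pow_le_pow_of_le_one (by norm_num) (by norm_num) (le_max_right _ _)).trans_lt hk
  obtain ⟨x, hx⟩ := cauchySeq_tendsto_of_complete hcauchy
  refine ⟨x, mem_iInter.2 fun n => ?_, hx⟩
  have h := hu (max N n) (le_max_left _ _)
  have hmem : x ∈ Metric.closedBall (u (max N n)) (r (max N n) (u (max N n))) :=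
    Metric.isClosed_closedBall.mem_of_tendsto hx (eventually_atTop.2 ⟨_, h.2⟩)
  exact mem_iInter₂.1 ((hr _ _ h.1).2 hmem).2 n (le_max_right _ _)

theorem finite_range_of_forall_lt_eq {α β : Type*} [Finite α] [Inhabited α] {h : (ℕ → α) → β}
    {m : ℕ} (hm : ∀ z z', (∀ i < m, z i = z' i) → h z = h z') : (range h).Finite := by
  refine (finite_range fun s : Fin m → α => h fun i => if hi : i < m then s ⟨i, hi⟩ else default)
    |>.subset ?_
  rintro _ ⟨z, rfl⟩
  exact ⟨fun i => z i, hm _ _ fun i hi => by simp [hi]⟩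

namespace GδMap

section Chain

variable {E E' E'' E''' : Type*} [TopologicalSpace E] [TopologicalSpace E'] [TopologicalSpace E'']
  [TopologicalSpace E''']

theorem comp_assoc (h : GδMap E'' E''') (g : GδMap E' E'') (f : GδMap E E') :
    (h.comp g).comp f = h.comp (g.comp f) := by
  simp only [comp, mk.injEq, and_true]
  exact (inter_assoc _ _ _).symm

theorem id_comp (f : GδMap E E') : (id E').comp f = f := by
  cases f
  simp [comp, id]

/-- The composition `F n ∘ F (n + 1) ∘ ⋯ ∘ F (n + k - 1)`. -/
def chain (F : ℕ → GδMap E E) : ℕ → ℕ → GδMap E E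
  | _, 0 => id E
  | n, k + 1 => (F n).comp (chain F (n + 1) k)

theorem chain_add (F : ℕ → GδMap E E) (n j k : ℕ) :
    chain F n (j + k) = (chain F n j).comp (chain F (n + j) k) := by
  induction j generalizing n with
  | zero => simp [chain, id_comp]
  | succ j ih =>
    rw [show j + 1 + k = (j + k) + 1 by omega, chain, chain, ih, comp_assoc,
      show n + 1 + j = n + (j + 1) by omega]

theorem chain_congr {F F' : ℕ → GδMap E E} {n k : ℕ}
    (h : ∀ i, n ≤ i → i < n + k → F i = F' i) : chain F n k = chain F' n k := by
  induction k generalizing n with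
  | zero => rfl
  | succ k ih =>
    rw [chain, chain, h n le_rfl (by omega), ih fun i hi hik => h i (by omega) (by omega)]

/-- The point `p` and the set `t` can be used at stage `m` of the construction of an orbit of `F`:
`p` is in the domain of all compositions ending with `F (m - 1)`, and on `t` these compositions
stay within the prescribed neighbourhoods `V` of their values at `p`. -/
def IsStage (V : GδMap E E → ℕ → E → Set E) (F : ℕ → GδMap E E) (m : ℕ) (t : Set E) (p : E) :
    Prop :=
  ∀ n k, n + 1 + k = m → p ∈ (chain F n (k + 1)).dom ∧
    ∀ q ∈ t, q ∈ (chain F n (k + 1)).dom →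
      chain F (n + 1) k q ∈ V (F n) m (chain F (n + 1) k p)

theorem IsStage.congr {V : GδMap E E → ℕ → E → Set E} {F F' : ℕ → GδMap E E} {m : ℕ} {t : Set E}
    {p : E} (h : IsStage V F m t p) (hF : ∀ i < m, F i = F' i) : IsStage V F' m t p := by
  intro n k hnk
  rw [← hF n (by omega), ← chain_congr fun i _ _ => hF i (by omega),
    ← chain_congr fun i _ _ => hF i (by omega)]
  exact h n k hnk

section Limit

variable {V : GδMap E E → ℕ → E → Set E} {F : ℕ → GδMap E E} {t : ℕ → Set E} {p : ℕ → E}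

theorem IsStage.mem_dom_chain (h : ∀ m, IsStage V F m (t m) (p m)) (n k : ℕ) :
    p (n + k) ∈ (chain F n k).dom := by
  rcases k with _ | k
  · trivial
  · exact (h (n + (k + 1)) n k (by omega)).1

theorem IsStage.exists_tendsto_chain
    (hV : ∀ (f : GδMap E E) (N : ℕ) (u : ℕ → E),
      (∀ m ≥ N, u m ∈ f.dom ∧ ∀ m' ≥ m, u m' ∈ V f m (u m)) → ∃ x ∈ f.dom, Tendsto u atTop (𝓝 x))
    (hF : ∀ n, MapsTo (F n) (F n).dom (t n)) (hpt : ∀ m, p m ∈ t m)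
    (h : ∀ m, IsStage V F m (t m) (p m)) (n : ℕ) :
    ∃ y ∈ (F n).dom, Tendsto (fun k => chain F (n + 1) k (p (n + 1 + k))) atTop (𝓝 y) := by
  have hmem (n k) : chain F n k (p (n + k)) ∈ t n := by
    rcases k with _ | k
    · exact hpt n
    · exact hF n (mem_dom_chain h n (k + 1)).2
  let u (m : ℕ) : E := chain F (n + 1) (m - (n + 1)) (p m)
  obtain ⟨y, hy, hyu⟩ := hV (F n) (n + 1) u fun m hm => by
    obtain ⟨k, rfl⟩ := Nat.exists_eq_add_of_le hm
    simp only [u, Nat.add_sub_cancel_left]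
    obtain ⟨h1, h2⟩ := h _ n k rfl
    refine ⟨h1.2, fun m' hm' => ?_⟩
    obtain ⟨j, rfl⟩ := Nat.exists_eq_add_of_le hm'
    have hd := mem_dom_chain h n (k + 1 + j)
    rw [show n + 1 + k + j - (n + 1) = k + j by omega, chain_add]
    rw [chain_add, show n + (k + 1 + j) = n + 1 + k + j by omega,
      show n + (k + 1) = n + 1 + k by omega] at hd
    exact h2 _ (hmem _ _) hd.2
  refine ⟨y, hy, (hyu.comp (tendsto_add_atTop_nat (n + 1))).congr fun k => ?_⟩
  simp [u, add_comm k]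

theorem IsStage.exists_tendsto [T2Space E]
    (hV : ∀ (f : GδMap E E) (N : ℕ) (u : ℕ → E),
      (∀ m ≥ N, u m ∈ f.dom ∧ ∀ m' ≥ m, u m' ∈ V f m (u m)) → ∃ x ∈ f.dom, Tendsto u atTop (𝓝 x))
    (hF : ∀ n, MapsTo (F n) (F n).dom (t n)) (hpt : ∀ m, p m ∈ t m)
    (h : ∀ m, IsStage V F m (t m) (p m)) :
    ∃ x : ℕ → E, (∀ n, Tendsto (fun k => chain F n k (p (n + k))) atTop (𝓝 (x n))) ∧
      ∀ n, x (n + 1) ∈ (F n).dom ∧ F n (x (n + 1)) = x n := by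
  choose y hy hyu using exists_tendsto_chain hV hF hpt h
  have hstep (n) : Tendsto (fun k => chain F n k (p (n + k))) atTop (𝓝 (F n (y n))) := by
    refine (tendsto_add_atTop_iff_nat 1).1 ?_
    refine (((F n).continuousOn _ (hy n)).tendsto.comp (tendsto_nhdsWithin_iff.2
      ⟨hyu n, .of_forall fun k => ?_⟩)).congr fun k => ?_
    · have := (mem_dom_chain h n (k + 1)).2
      rwa [show n + (k + 1) = n + 1 + k by omega] at this
    · rw [show n + (k + 1) = n + 1 + k by omega]
      rfl
  have hxy (n) : F (n + 1) (y (n + 1)) = y n := tendsto_nhds_unique (hstep (n + 1)) (hyu n)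
  exact ⟨fun n => F n (y n), hstep, fun n => by simp only [hxy]; exact ⟨hy n, trivial⟩⟩

end Limit

end Chain

/-- `f` preserves membership in `Y` or complements it, and is defined on `Y` up to a ranked set. -/
def IsSymmetry (f : GδMap Cantor Cantor) (Y : Set Cantor) : Prop :=
  (f.Reduces Y Y ∨ f.Reduces Y Yᶜ) ∧ IsGδRanked (Y \ f.dom)

namespace IsSymmetry

variable {f g : GδMap Cantor Cantor} {Y : Set Cantor}

theorem id (Y : Set Cantor) : (GδMap.id Cantor).IsSymmetry Y :=
  ⟨.inl fun _ _ => Iff.rfl, by simpa [GδMap.id] using IsGδRanked.empty⟩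

theorem comp (hg : g.IsSymmetry Y) (hf : f.IsSymmetry Y) : (g.comp f).IsSymmetry Y := by
  rcases hf with ⟨hf | hf, hfY⟩
  · exact ⟨hg.1.imp (·.comp hf) (·.comp hf), hf.isGδRanked_diff_dom_comp hfY hg.2⟩
  · refine ⟨?_, hf.isGδRanked_diff_dom_comp hfY (hg.2.compl_diff g.isGδ_dom)⟩
    refine hg.1.symm.imp (fun h => ?_) fun h => h.compl.comp hf
    simpa using h.compl.comp hf

theorem chain {F : ℕ → GδMap Cantor Cantor} {n k : ℕ}
    (h : ∀ i, n ≤ i → i < n + k → (F i).IsSymmetry Y) : (chain F n k).IsSymmetry Y := by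
  induction k generalizing n with
  | zero => exact id Y
  | succ k ih => exact (h n le_rfl (by omega)).comp (ih fun i hi hik => h i (by omega) (by omega))

end IsSymmetry

end GδMap

theorem exists_isClopen_forall_mem_nhds {Y : Set Cantor} (hY : ¬ IsGδRanked Y)
    {V : GδMap Cantor Cantor → Cantor → Set Cantor} (hV : ∀ f, ∀ x ∈ f.dom, V f x ∈ 𝓝 x)
    {S : Set (GδMap Cantor Cantor × GδMap Cantor Cantor)} (hS : S.Finite)
    (h : ∀ s ∈ S, IsGδRanked (Y \ (s.1.comp s.2).dom)) :
    ∃ t p, IsClopen t ∧ p ∈ Y ∩ t ∧ ∀ s ∈ S, p ∈ (s.1.comp s.2).dom ∧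
      ∀ q ∈ t, q ∈ (s.1.comp s.2).dom → s.2 q ∈ V s.1 (s.2 p) := by
  have : Finite S := hS
  obtain ⟨p, hpY, hp⟩ : ∃ p ∈ Y, ∀ s : S, p ∈ (s.1.1.comp s.1.2).dom := by
    by_contra! hcover
    refine hY ?_
    convert! IsGδRanked.iUnion fun s : S => h s s.2 using 1
    ext y
    simp only [mem_iUnion, Set.mem_sdiff, exists_and_left]
    exact ⟨fun hy => ⟨hy, hcover y hy⟩, And.left⟩
  have hnear : ∀ᶠ q in 𝓝 p, ∀ s : S, q ∈ s.1.2.dom → s.1.2 q ∈ V s.1.1 (s.1.2 p) := by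
    refine eventually_all.2 fun s => ?_
    rw [← eventually_nhdsWithin_iff]
    exact (s.1.2.continuousOn p (hp s).1).eventually (hV _ _ (hp s).2)
  obtain ⟨U, hU, hUo, hpU⟩ := eventually_nhds_iff.1 hnear
  obtain ⟨t, ht, hpt, htU⟩ := compact_exists_isClopen_in_isOpen hUo hpU
  exact ⟨t, p, ht, ⟨hpY, hpt⟩, fun s hs => ⟨hp ⟨s, hs⟩, fun q hq hqs =>
    hU q (htU hq) ⟨s, hs⟩ hqs.1⟩⟩

section Flip

theorem not_measurableSet_of_forall_update_not_mem {B : Set Cantor}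
    (h : ∀ n z, Function.update z n (!z n) ∈ B ↔ z ∉ B) : ¬ MeasurableSet B := by
  intro hB
  let flip (n : ℕ) : Cantor ≃ₜ Cantor :=
    Homeomorph.piCongrRight fun i => if i = n then Equiv.boolNot.toHomeomorphOfDiscrete else .refl _
  have hflip (n z) : flip n z = Function.update z n (!z n) := by
    funext i
    by_cases hi : i = n
    · subst hi
      simp [flip, Equiv.toHomeomorphOfDiscrete]
    · simp [flip, hi]
  obtain ⟨U, hU, hBU⟩ := MeasurableSet.residualEq_isOpen hB
  have hR : {z | z ∈ B ↔ z ∈ U} ∈ residual Cantor := by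
    filter_upwards [hBU] with z hz using iff_of_eq hz
  have hdense (n) : Dense {z | (z ∈ B ↔ z ∈ U) ∧ (flip n z ∈ B ↔ flip n z ∈ U)} :=
    dense_of_mem_residual (inter_mem hR (by rwa [← (flip n).residual_map_eq] at hR))
  rcases U.eq_empty_or_nonempty with rfl | ⟨u, hu⟩
  · obtain ⟨z, hz, hz'⟩ := (hdense 0).nonempty
    rw [hflip, h] at hz'
    tauto
  · obtain ⟨_, ⟨v, m, rfl⟩, huv, hvU⟩ :=
      (PiNat.isTopologicalBasis_cylinders _).exists_subset_of_mem_open hu hU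
    obtain ⟨z, hzv, hz, hz'⟩ := (hdense m).inter_open_nonempty _ (PiNat.isOpen_cylinder _ v m)
      ⟨u, huv⟩
    have hzv' : flip m z ∈ PiNat.cylinder v m := fun i hi => by
      simpa [hflip, hi.ne] using hzv i hi
    have := h m z
    rw [← hflip] at this
    have := hvU hzv
    have := hvU hzv'
    tauto

end Flip

theorem IsHomogeneous.exists_reduces_compl {Y t : Set Cantor} (hY : IsHomogeneous Y)
    (ht : IsClopen t) (hne : (Y ∩ t).Nonempty) {f : GδMap Cantor Cantor} (hf : f.Reduces Y Yᶜ)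
    (hfY : IsGδRanked ((Y ∩ t) \ f.dom)) :
    ∃ g : GδMap Cantor Cantor, g.Reduces Y Yᶜ ∧ IsGδRanked (Y \ g.dom) := by
  obtain ⟨F, hdom, hF, hFt⟩ := hY.exists_gδMap ht hne
  refine ⟨f.comp F, hf.comp hF, ?_⟩
  convert! hfY.inter_preimage F.isGδ_dom F.continuousOn using 1
  ext z
  by_cases hz : z ∈ F.dom
  · simp [GδMap.comp, hz, hF z hz, hFt z hz]
  · simpa [GδMap.comp, hz] using fun h => hz (hdom h)

theorem GδMap.exists_orbits {V : GδMap Cantor Cantor → ℕ → Cantor → Set Cantor}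
    (hV : ∀ (f : GδMap Cantor Cantor) (N : ℕ) (u : ℕ → Cantor),
      (∀ m ≥ N, u m ∈ f.dom ∧ ∀ m' ≥ m, u m' ∈ V f m (u m)) → ∃ x ∈ f.dom, Tendsto u atTop (𝓝 x))
    {f : ℕ → Bool → GδMap Cantor Cantor} {t : ℕ → Set Cantor} {p : ℕ → Cantor}
    (hf : ∀ n b, MapsTo (f n b) (f n b).dom (t n)) (hpt : ∀ m, p m ∈ t m)
    (h : ∀ (z : Cantor) m, IsStage V (fun i => f i (z i)) m (t m) (p m)) :
    ∃ x : Cantor → ℕ → Cantor, Measurable (x · 0) ∧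
      (∀ n z z', (∀ i, n ≤ i → z i = z' i) → x z n = x z' n) ∧
      ∀ z n, x z (n + 1) ∈ (f n (z n)).dom ∧ f n (z n) (x z (n + 1)) = x z n := by
  choose x hx hxdom using fun z => IsStage.exists_tendsto hV (fun n => hf n (z n)) hpt (h z)
  refine ⟨x, ?_, fun n z z' hz => ?_, hxdom⟩
  · refine measurable_of_tendsto_metrizable (fun k => Continuous.measurable ?_)
      (tendsto_pi_nhds.2 fun z => hx z 0)
    refine continuous_pi_of_forall_lt_eq fun i => ⟨k, fun z z' hz => ?_⟩
    rw [chain_congr fun i _ hi => by rw [hz i (by omega)]]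
  · refine tendsto_nhds_unique (hx z n) ((hx z' n).congr fun k => ?_)
    rw [chain_congr fun i hi _ => by rw [← hz i hi]]

theorem not_measurableSet_of_orbits {E : Type*} [MeasurableSpace E] {Y : Set E}
    {x : Cantor → ℕ → E} (hx : Measurable (x · 0))
    (hloc : ∀ n z z', (∀ i, n ≤ i → z i = z' i) → x z n = x z' n)
    (hmem : ∀ z n, x z n ∈ Y ↔ (x z (n + 1) ∈ Y ↔ z n = false)) : ¬ MeasurableSet Y := by
  intro hY
  refine not_measurableSet_of_forall_update_not_mem (B := (x · 0) ⁻¹' Y) (fun n z => ?_) (hx hY)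
  have hflip {k : ℕ} (hk : k ≤ n) : x (Function.update z n (!z n)) k ∈ Y ↔ x z k ∉ Y := by
    induction hk using Nat.decreasingInduction with
    | self =>
      have htail : x (Function.update z n (!z n)) (n + 1) = x z (n + 1) :=
        hloc _ _ _ fun i hi => Function.update_of_ne (by omega) _ _
      rw [hmem z n, hmem, htail, Function.update_self]
      cases z n <;> simp
    | of_succ k hk ih =>
      rw [hmem z k, hmem, ih, Function.update_of_ne hk.ne]
      tauto
  exact hflip n.zero_le

theorem IsHomogeneous.exists_flips {Y t : Set Cantor} (hY : IsHomogeneous Y) (ht : IsClopen t)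
    (hne : (Y ∩ t).Nonempty) {g : GδMap Cantor Cantor} (hg : g.Reduces Y Yᶜ)
    (hgY : IsGδRanked (Y \ g.dom)) :
    ∃ f : Bool → GδMap Cantor Cantor, ∀ b, (f b).IsSymmetry Y ∧ MapsTo (f b) (f b).dom t ∧
      ∀ x ∈ (f b).dom, f b x ∈ Y ↔ (x ∈ Y ↔ b = false) := by
  obtain ⟨F, hdom, hF, hFt⟩ := hY.exists_gδMap ht hne
  have hFsymm : F.IsSymmetry Y := ⟨.inl hF, by simpa [sdiff_eq_empty.2 hdom] using .empty⟩
  refine ⟨fun b => bif b then F.comp g else F, Bool.forall_bool.2 ⟨⟨hFsymm, hFt, fun x hx => ?_⟩,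
    hFsymm.comp ⟨.inr hg, hgY⟩, fun x hx => hFt _ hx.2, fun x hx => ?_⟩⟩
  · simpa using hF x hx
  · have h := (hF _ hx.2).trans (not_iff_not.1 (by simpa using hg x hx.1) : g x ∈ Y ↔ x ∉ Y)
    simpa [GδMap.comp] using h

theorem exists_isStage {Y : Set Cantor} (hY : ¬ IsGδRanked Y)
    {V : GδMap Cantor Cantor → ℕ → Cantor → Set Cantor} (hV : ∀ f m, ∀ x ∈ f.dom, V f m x ∈ 𝓝 x)
    {f : ℕ → Bool → GδMap Cantor Cantor} {m : ℕ} (hf : ∀ i < m, ∀ b, (f i b).IsSymmetry Y) :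
    ∃ t p, IsClopen t ∧ p ∈ Y ∩ t ∧ ∀ z : Cantor, GδMap.IsStage V (fun i => f i (z i)) m t p := by
  let F (z : Cantor) (i : ℕ) : GδMap Cantor Cantor := f i (z i)
  let s (n : ℕ) (z : Cantor) : GδMap Cantor Cantor × GδMap Cantor Cantor :=
    (F z n, GδMap.chain (F z) (n + 1) (m - (n + 1)))
  have hfin : (⋃ n ∈ Iio m, range (s n)).Finite :=
    (finite_Iio m).biUnion fun n (hn : n < m) => finite_range_of_forall_lt_eq (m := m)
      fun z z' hz => Prod.ext (by simp only [s, F, hz n hn])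
        (GδMap.chain_congr fun i _ hi => by simp only [F, hz i (by omega)])
  have hsymm (g) (hg : g ∈ ⋃ n ∈ Iio m, range (s n)) :
      IsGδRanked (Y \ (g.1.comp g.2).dom) := by
    simp only [mem_iUnion, mem_range, mem_Iio] at hg
    obtain ⟨n, hn, z, rfl⟩ := hg
    exact ((hf n hn _).comp (.chain fun i _ hi => hf i (by omega) _)).2
  obtain ⟨t, p, ht, hp, h⟩ := exists_isClopen_forall_mem_nhds hY (fun g => hV g m) hfin hsymm
  refine ⟨t, p, ht, hp, fun z n k hnk => ?_⟩
  have hk : m - (n + 1) = k := by omega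
  have := h (s n z) (mem_biUnion (show n < m by omega) ⟨z, rfl⟩)
  rwa [show s n z = (F z n, GδMap.chain (F z) (n + 1) k) by simp only [s, hk]] at this

theorem IsHomogeneous.not_reduces_compl {Y : Set Cantor} (hY : IsHomogeneous Y)
    (hYB : MeasurableSet Y) (hYr : ¬ IsGδRanked Y) {g : GδMap Cantor Cantor}
    (hgY : IsGδRanked (Y \ g.dom)) : ¬ g.Reduces Y Yᶜ := by
  intro hg
  choose V hV hVlim using fun f : GδMap Cantor Cantor => exists_nhds_forall_tendsto f.isGδ_dom
  choose f hf using fun t : {t : Set Cantor // IsClopen t ∧ (Y ∩ t).Nonempty} =>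
    hY.exists_flips t.2.1 t.2.2 hg hgY
  have hYne : (Y ∩ univ).Nonempty := by
    by_contra! hempty
    exact hYr ((inter_univ Y).symm.trans hempty ▸ .empty)
  have : Nonempty {t : Set Cantor // IsClopen t ∧ (Y ∩ t).Nonempty} :=
    ⟨⟨univ, isClopen_univ, hYne⟩⟩
  let P (m : ℕ) (T : ℕ → {t : Set Cantor // IsClopen t ∧ (Y ∩ t).Nonempty}) : Prop :=
    ∃ p ∈ (T m).1, ∀ z : Cantor, GδMap.IsStage V (fun i => f (T i) (z i)) m (T m) p
  obtain ⟨T, hT⟩ : ∃ T, ∀ m, P m T := by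
    refine exists_seq_of_forall_update (fun m T T' hT h => ?_) fun m T _ => ?_
    · obtain ⟨p, hp, h⟩ := h
      rw [hT m le_rfl] at hp h
      exact ⟨p, hp, fun z => (h z).congr fun i hi => by rw [hT i hi.le]⟩
    · obtain ⟨t, p, ht, hp, h⟩ := exists_isStage hYr hV (m := m) fun i _ b => (hf (T i) b).1
      refine ⟨⟨t, ht, p, hp⟩, p, by simpa using hp.2, fun z => ?_⟩
      rw [Function.update_self]
      exact (h z).congr fun i hi => by rw [Function.update_of_ne hi.ne]
  choose p hpT hp using hT
  obtain ⟨x, hx, hloc, hxf⟩ := GδMap.exists_orbits hVlim (fun n b => (hf (T n) b).2.1) hpT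
    fun z m => hp m z
  refine not_measurableSet_of_orbits hx hloc (fun z n => ?_) hYB
  simpa only [(hxf z n).2] using (hf (T n) (z n)).2.2 _ (hxf z n).1

/-! ### Coding by marked words -/

section MarkedWord

/-- Infinite words over `Bool × Bool` code points of the Cantor space: the first component of a
letter says whether the letter is marked, and the point is read off from the second components of
the marked letters. -/
abbrev MarkedWord := ℕ → Bool × Bool

theorem isGδ_setOf_frequently {α : Type*} [TopologicalSpace α] [DiscreteTopology α] (S : Set α) :
    IsGδ {y : ℕ → α | ∃ᶠ n in atTop, y n ∈ S} := by
  simp only [frequently_atTop, ofPred_forall]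
  refine .iInter fun N => IsOpen.isGδ ?_
  have h : {y : ℕ → α | ∃ n ≥ N, y n ∈ S} = ⋃ n ≥ N, (fun y => y n) ⁻¹' S := by
    ext y
    simp
  rw [h]
  exact isOpen_biUnion fun n _ => (isOpen_discrete S).preimage (continuous_apply n)

/-- The words with infinitely many marked letters. -/
def infinitelyMarked : Set MarkedWord := {y | ∃ᶠ n in atTop, (y n).1 = true}

/-- The words that are eventually constant with value `(false, true)`. -/
def eventuallyTrue : Set MarkedWord := {y | ∀ᶠ n in atTop, y n = (false, true)}

theorem isGδ_infinitelyMarked : IsGδ infinitelyMarked :=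
  isGδ_setOf_frequently {a : Bool × Bool | a.1 = true}

theorem isGδ_compl_eventuallyTrue : IsGδ eventuallyTrueᶜ := by
  simpa only [eventuallyTrue, compl_ofPred, not_eventually, mem_ofPred_eq] using
    isGδ_setOf_frequently {a : Bool × Bool | a ≠ (false, true)}

theorem disjoint_infinitelyMarked_eventuallyTrue : Disjoint infinitelyMarked eventuallyTrue :=
  disjoint_left.2 fun _ hy hy' => by
    obtain ⟨n, hn, hn'⟩ := (Frequently.and_eventually hy hy').exists
    simp [hn'] at hn

/-- The sequence of second components of the marked letters; junk outside `infinitelyMarked`. -/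
noncomputable def markedBits (y : MarkedWord) : Cantor :=
  fun j => (y (Nat.nth (fun n => (y n).1 = true) j)).2

theorem continuousOn_markedBits : ContinuousOn markedBits infinitelyMarked := by
  refine continuousOn_pi.2 fun j y hy => ?_
  let p (z : MarkedWord) (n : ℕ) : Prop := (z n).1 = true
  have hp : {n | p y n}.Infinite := Nat.frequently_atTop_iff_infinite.1 hy
  let n := Nat.nth (p y) j
  have hmark : p y n := Nat.nth_mem_of_infinite hp j
  refine continuousWithinAt_const.congr_of_eventuallyEq (?_ : _ =ᶠ[_] fun _ => (y n).2) rfl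
  filter_upwards [nhdsWithin_le_nhds (eventually_forall_lt_eq y (n + 1))] with z hz
  have hcount : Nat.count (p z) n = j := by
    rw [← Nat.count_nth_of_infinite hp j, Nat.count_eq_card_filter_range,
      Nat.count_eq_card_filter_range]
    refine congrArg Finset.card (Finset.filter_congr fun i hi => ?_)
    simp only [p, hz i ((Finset.mem_range.1 hi).trans n.lt_succ_self)]
  have hmark' : p z n := by
    simp only [p, hz n n.lt_succ_self]
    exact hmark
  have hnth : Nat.nth (p z) j = n := hcount ▸ Nat.nth_count hmark'
  change (z (Nat.nth (p z) j)).2 = (y n).2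
  rw [hnth, hz n n.lt_succ_self]

theorem markedBits_eq {y : MarkedWord} {x : Cantor} {a : ℕ → ℕ} (ha : StrictMono a)
    (hy : ∀ n, (y n).1 = true → n ∈ range a) (hx : ∀ n, y (a n) = (true, x n)) :
    markedBits y = x := by
  have hinf : {n | (y n).1 = true}.Infinite :=
    (infinite_range_of_injective ha.injective).mono <| range_subset_iff.2 fun n =>
      congrArg Prod.fst (hx n)
  funext n
  have hnth := Nat.nth_comp_of_strictMono (n := n) ha hy fun h => absurd h hinf
  simp only [hx, Nat.nth_true] at hnth
  rw [markedBits, ← hnth, hx]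

/-- A copy of `X` among the words with infinitely many marks, padded with the words eventually equal
to `(false, true)` so that the bit written in unmarked letters decides membership of every word
that is eventually constant and unmarked. -/
def markedCode (X : Set Cantor) : Set MarkedWord :=
  infinitelyMarked ∩ markedBits ⁻¹' X ∪ eventuallyTrue

variable {X : Set Cantor} {y : MarkedWord}

theorem mem_markedCode_iff_markedBits_mem (hy : y ∈ infinitelyMarked) :
    y ∈ markedCode X ↔ markedBits y ∈ X := by
  simp [markedCode, hy, disjoint_left.1 disjoint_infinitelyMarked_eventuallyTrue hy]

theorem mem_markedCode_iff_mem_eventuallyTrue (hy : y ∉ infinitelyMarked) :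
    y ∈ markedCode X ↔ y ∈ eventuallyTrue := by
  simp [markedCode, hy]

theorem measurableSet_markedCode (hX : MeasurableSet X) : MeasurableSet (markedCode X) := by
  refine .union ?_ isGδ_compl_eventuallyTrue.measurableSet.of_compl
  rw [← Subtype.image_preimage_val]
  exact isGδ_infinitelyMarked.measurableSet.subtype_image
    (continuousOn_markedBits.domRestrict.measurable hX)

end MarkedWord

section Harrington

variable {X Y t : Set Cantor}

theorem isGδRanked_compl_markedCode_diff (X : Set Cantor) :
    IsGδRanked ((markedCode X)ᶜ \ infinitelyMarked) := by
  refine .compl_diff isGδ_infinitelyMarked ?_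
  have h : markedCode X \ infinitelyMarked = eventuallyTrueᶜᶜ := by
    rw [compl_compl, markedCode, union_sdiff_distrib, sdiff_eq_empty.2 inter_subset_left,
      empty_union, disjoint_infinitelyMarked_eventuallyTrue.symm.sdiff_eq_left]
  exact h ▸ (IsGδRanked.of_isGδ isGδ_compl_eventuallyTrue).compl

theorem IsHomogeneous.not_reduces_compl_markedCode (hY : IsHomogeneous Y)
    (hYB : MeasurableSet Y) (hYr : ¬ IsGδRanked Y) (ht : IsClopen t) (hne : (Y ∩ t).Nonempty)
    (hXY : WadgeLe X Y) {f : GδMap Cantor MarkedWord} (hdom : f.dom = closure Y ∩ t) :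
    ¬ f.Reduces Y (markedCode X)ᶜ := by
  intro hf
  obtain ⟨r, hr, rfl⟩ := hXY
  let g : GδMap MarkedWord Cantor :=
    ⟨infinitelyMarked, fun w => r (markedBits w), isGδ_infinitelyMarked,
      hr.comp_continuousOn continuousOn_markedBits⟩
  have hg : g.Reduces (markedCode (r ⁻¹' Y)) Y :=
    fun w hw => (mem_markedCode_iff_markedBits_mem (X := r ⁻¹' Y) hw).symm
  have hft : f.Reduces (Y ∩ t) (markedCode (r ⁻¹' Y))ᶜ := fun x hx =>
    (hf x hx).trans (and_iff_left (hdom ▸ hx : x ∈ closure Y ∩ t).2).symm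
  have hft_dom : IsGδRanked ((Y ∩ t) \ f.dom) := by
    rw [hdom, sdiff_eq_empty.2 (inter_subset_inter_left t subset_closure)]
    exact .empty
  obtain ⟨k, hk, hkY⟩ := hY.exists_reduces_compl ht hne (hg.compl.comp hf)
    (hft.isGδRanked_diff_dom_comp hft_dom (isGδRanked_compl_markedCode_diff _))
  exact hY.not_reduces_compl hYB hYr hkY hk

theorem IsHomogeneous.exists_continuous_markedCode (hX : MeasurableSet X) (hY : IsHomogeneous Y)
    (hYB : MeasurableSet Y) (hYr : ¬ IsGδRanked Y) (ht : IsClopen t) (hne : (Y ∩ t).Nonempty)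
    (hXY : WadgeLe X Y) :
    ∃ ρ : MarkedWord → Cantor, Continuous ρ ∧
      ∀ w, ρ w ∈ closure Y ∩ t ∧ (ρ w ∈ Y ↔ w ∈ markedCode X) := by
  have hC : IsClosed (closure Y ∩ t) := isClosed_closure.inter ht.isClosed
  refine (wadge_dichotomy hC (hne.mono (inter_subset_inter_left t subset_closure))
    (measurableSet_markedCode hX) hYB).resolve_right fun ⟨f, hf, hfY⟩ => ?_
  let := metrizableSpaceMetric Cantor
  refine hY.not_reduces_compl_markedCode hYB hYr ht hne hXY
    (f := ⟨closure Y ∩ t, f, hC.isGδ, hf⟩) rfl fun y hy => ?_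
  exact (not_congr (hfY y hy)).trans not_not

theorem WadgeLe.of_homeomorph (e : X ≃ₜ Y) (hX : MeasurableSet X) (hY : IsHomogeneous Y)
    (hYB : MeasurableSet Y) (hYr : ¬ IsGδRanked Y) : WadgeLe X Y := by
  rcases wadge_dichotomy isClosed_univ univ_nonempty hX hYB with ⟨f, hf, hfX⟩ | ⟨f, hf, hfY⟩
  · exact ⟨f, hf, Set.ext fun x => (hfX x).2.symm⟩
  obtain ⟨F, hXF, -, hF⟩ := lavrentiev e
  let f' : GδMap Cantor Cantor := ⟨univ, f, .univ, hf⟩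
  have hf' : f'.Reduces Y Xᶜ := fun y hy => (not_congr (hfY y hy)).trans not_not
  refine (hY.not_reduces_compl hYB hYr (hf'.isGδRanked_diff_dom_comp ?_ ?_)
    (hF.compl.comp hf')).elim
  · simpa [f'] using .empty
  · exact .compl_diff F.isGδ_dom (by simpa [sdiff_eq_empty.2 hXF] using .empty)

end Harrington

section MarkedPrefix

/-- A finite string of letters, encoded by a word of which only the first `s.2` letters count. -/
abbrev MarkedPrefix := MarkedWord × ℕ

/-- The word that continues a finite string with unmarked letters carrying the bit `b`. -/
def MarkedPrefix.pad (s : MarkedPrefix) (b : Bool) : MarkedWord :=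
  fun i => if i < s.2 then s.1 i else (false, b)

variable {X Y : Set Cantor} {ρ : MarkedWord → Cantor}

theorem MarkedPrefix.pad_apply_of_lt {s : MarkedPrefix} {i : ℕ} (hi : i < s.2) (b : Bool) :
    s.pad b i = s.1 i :=
  if_pos hi

theorem MarkedPrefix.pad_apply_of_le {s : MarkedPrefix} {i : ℕ} (hi : s.2 ≤ i) (b : Bool) :
    s.pad b i = (false, b) :=
  if_neg hi.not_gt

theorem MarkedPrefix.pad_mem_markedCode (s : MarkedPrefix) (b : Bool) :
    s.pad b ∈ markedCode X ↔ b = true := by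
  have hs : ∀ᶠ n in atTop, s.pad b n = (false, b) :=
    (eventually_ge_atTop s.2).mono fun n hn => s.pad_apply_of_le hn b
  rw [mem_markedCode_iff_mem_eventuallyTrue]
  · refine ⟨fun h => ?_, fun hb => hb ▸ hs⟩
    obtain ⟨n, hn, hn'⟩ := (hs.and h).exists
    simpa only [hn, Prod.mk.injEq, true_and] using hn'
  · exact fun h => by
      obtain ⟨n, hn, hn'⟩ := (h.and_eventually hs).exists
      simp only [hn', Bool.false_eq_true] at hn

theorem MarkedPrefix.exists_cylinder_separated (hρ : Continuous ρ)
    (hρY : ∀ w, ρ w ∈ Y ↔ w ∈ markedCode X) (s : MarkedPrefix) :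
    ∃ N ≥ s.2, ∀ b b' y y', (∀ i < N, y i = s.pad b i) → (∀ i < N, y' i = s.pad b' i) →
      ρ y = ρ y' → b = b' := by
  have hne : ρ (s.pad false) ≠ ρ (s.pad true) := fun h => by
    simpa [hρY, s.pad_mem_markedCode] using congrArg (· ∈ Y) h
  obtain ⟨i, hi⟩ := Function.ne_iff.1 hne
  have hloc (b : Bool) : ∃ N, ∀ y, (∀ j < N, y j = s.pad b j) → ρ y i = ρ (s.pad b) i := by
    have hopen : IsOpen {y | ρ y i = ρ (s.pad b) i} :=
      (isOpen_discrete {ρ (s.pad b) i}).preimage ((continuous_apply i).comp hρ)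
    obtain ⟨_, ⟨v, N, rfl⟩, hv, hvU⟩ :=
      (PiNat.isTopologicalBasis_cylinders _).exists_subset_of_mem_open
        (mem_ofPred_eq.mpr rfl : s.pad b ∈ {y | ρ y i = ρ (s.pad b) i}) hopen
    rw [← PiNat.mem_cylinder_iff_eq.1 hv] at hvU
    exact ⟨N, fun y hy => hvU (PiNat.mem_cylinder_iff.2 hy)⟩
  choose N hN using hloc
  refine ⟨max s.2 (max (N false) (N true)), le_max_left _ _, fun b b' y y' hy hy' h => ?_⟩
  have hNle (c : Bool) : N c ≤ max s.2 (max (N false) (N true)) := by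
    cases c <;> omega
  have hb := hN b y fun j hj => hy j (hj.trans_le (hNle b))
  have hb' := hN b' y' fun j hj => hy' j (hj.trans_le (hNle b'))
  have heq : ρ (s.pad b) i = ρ (s.pad b') i := by rw [← hb, ← hb', h]
  cases b <;> cases b' <;> first | rfl | exact absurd heq hi | exact absurd heq.symm hi

end MarkedPrefix

section MarkedEncoding

variable (N : MarkedPrefix → ℕ)

/-- The strings obtained from the empty one by successively padding with the bit `x n` up to the
length prescribed by `N` and appending the marked letter `(true, x n)`. -/
def markedPrefix (x : Cantor) : ℕ → MarkedPrefix
  | 0 => (fun _ => (false, false), 0)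
  | n + 1 =>
    let s := markedPrefix x n
    (Function.update (s.pad (x n)) (N s) (true, x n), N s + 1)

/-- The limit of the strings `markedPrefix N x n`. -/
def markedEncoding (x : Cantor) : MarkedWord :=
  fun i => (markedPrefix N x (i + 1)).1 i

variable {N} {x x' : Cantor} {n : ℕ}

theorem markedPrefix_congr (h : ∀ i < n, x i = x' i) :
    markedPrefix N x n = markedPrefix N x' n := by
  induction n with
  | zero => rfl
  | succ n ih =>
    have hs := ih fun i hi => h i (hi.trans n.lt_succ_self)
    simp only [markedPrefix, hs, h n n.lt_succ_self]

theorem continuous_markedEncoding : Continuous (markedEncoding N) :=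
  continuous_pi_of_forall_lt_eq fun i => ⟨i + 1, fun _ _ h => by
    rw [markedEncoding, markedEncoding, markedPrefix_congr h]⟩

theorem strictMono_length_markedPrefix (hN : ∀ s : MarkedPrefix, s.2 ≤ N s) (x : Cantor) :
    StrictMono fun n => (markedPrefix N x n).2 :=
  strictMono_nat_of_lt_succ fun _ => Nat.lt_succ_of_le (hN _)

theorem markedPrefix_apply_eq_of_le (hN : ∀ s : MarkedPrefix, s.2 ≤ N s)
    {m i : ℕ} (hi : i < (markedPrefix N x n).2) (hnm : n ≤ m) :
    (markedPrefix N x m).1 i = (markedPrefix N x n).1 i := by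
  induction m, hnm using Nat.le_induction with
  | base => rfl
  | succ m hnm ih =>
    have hi' := hi.trans_le ((strictMono_length_markedPrefix hN x).monotone hnm)
    exact (Function.update_of_ne (hi'.trans_le (hN _)).ne _ _).trans <|
      (MarkedPrefix.pad_apply_of_lt hi' _).trans ih

theorem markedEncoding_apply (hN : ∀ s : MarkedPrefix, s.2 ≤ N s)
    {i : ℕ} (hi : i < (markedPrefix N x n).2) :
    markedEncoding N x i = (markedPrefix N x n).1 i := by
  have hi' : i < (markedPrefix N x (i + 1)).2 :=
    i.lt_succ_self.trans_le ((strictMono_length_markedPrefix hN x).le_apply)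
  rcases le_total n (i + 1) with h | h
  · exact markedPrefix_apply_eq_of_le hN hi h
  · exact (markedPrefix_apply_eq_of_le hN hi' h).symm

theorem markedEncoding_apply_of_lt (hN : ∀ s : MarkedPrefix, s.2 ≤ N s)
    {i : ℕ} (hi : i < N (markedPrefix N x n)) :
    markedEncoding N x i = (markedPrefix N x n).pad (x n) i := by
  rw [markedEncoding_apply hN (n := n + 1) (hi.trans (Nat.lt_succ_self _))]
  exact Function.update_of_ne hi.ne _ _

theorem markedEncoding_apply_mark (hN : ∀ s : MarkedPrefix, s.2 ≤ N s) (x : Cantor) (n : ℕ) :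
    markedEncoding N x (N (markedPrefix N x n)) = (true, x n) := by
  rw [markedEncoding_apply hN (n := n + 1) (Nat.lt_succ_self _)]
  exact Function.update_self _ _ _

theorem strictMono_markedPrefix_mark (hN : ∀ s : MarkedPrefix, s.2 ≤ N s) (x : Cantor) :
    StrictMono fun n => N (markedPrefix N x n) :=
  strictMono_nat_of_lt_succ fun n => Nat.lt_of_succ_le (hN (markedPrefix N x (n + 1)))

theorem exists_eq_mark_of_markedEncoding (hN : ∀ s : MarkedPrefix, s.2 ≤ N s)
    {i : ℕ} (h : (markedEncoding N x i).1 = true) :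
    i ∈ range fun n => N (markedPrefix N x n) := by
  suffices ∀ n, i < (markedPrefix N x n).2 → i ∈ range fun n => N (markedPrefix N x n) from
    this _ (i.lt_succ_self.trans_le (strictMono_length_markedPrefix hN x).le_apply)
  intro n
  induction n with
  | zero => exact fun hi => absurd hi i.not_lt_zero
  | succ n ih =>
    intro hi
    rcases (Nat.lt_succ_iff.1 hi).eq_or_lt with rfl | hlt
    · exact ⟨n, rfl⟩
    refine ih (not_le.1 fun hle => ?_)
    simp [markedEncoding_apply_of_lt hN hlt, MarkedPrefix.pad_apply_of_le hle] at h

theorem markedBits_markedEncoding (hN : ∀ s : MarkedPrefix, s.2 ≤ N s)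
    (x : Cantor) : markedBits (markedEncoding N x) = x :=
  markedBits_eq (strictMono_markedPrefix_mark hN x)
    (fun _ => exists_eq_mark_of_markedEncoding hN) (markedEncoding_apply_mark hN x)

theorem markedEncoding_mem_infinitelyMarked (hN : ∀ s : MarkedPrefix, s.2 ≤ N s) (x : Cantor) :
    markedEncoding N x ∈ infinitelyMarked :=
  Nat.frequently_atTop_iff_infinite.2 <|
    (infinite_range_of_injective (strictMono_markedPrefix_mark hN x).injective).mono <|
      range_subset_iff.2 fun n => congrArg Prod.fst (markedEncoding_apply_mark hN x n)

theorem markedEncoding_mem_markedCode (hN : ∀ s : MarkedPrefix, s.2 ≤ N s)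
    {X : Set Cantor} (x : Cantor) :
    markedEncoding N x ∈ markedCode X ↔ x ∈ X := by
  rw [mem_markedCode_iff_markedBits_mem (markedEncoding_mem_infinitelyMarked hN x),
    markedBits_markedEncoding hN]

end MarkedEncoding

section Harrington

variable {X Y t : Set Cantor}

/-- Harrington's theorem: `markedEncoding` chooses among the words coding a given point one that
leaves enough room for the values of the reduction to separate points. -/
theorem IsHomogeneous.exists_injective_reduction (hX : MeasurableSet X) (hY : IsHomogeneous Y)
    (hYB : MeasurableSet Y) (hYr : ¬ IsGδRanked Y) (ht : IsClopen t) (hne : (Y ∩ t).Nonempty)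
    (hXY : WadgeLe X Y) :
    ∃ F : Cantor → Cantor, Continuous F ∧ Function.Injective F ∧
      ∀ x, F x ∈ closure Y ∩ t ∧ (F x ∈ Y ↔ x ∈ X) := by
  obtain ⟨ρ, hρ, hρY⟩ := hY.exists_continuous_markedCode hX hYB hYr ht hne hXY
  choose N hN hsep using
    MarkedPrefix.exists_cylinder_separated hρ fun w => (hρY w).2
  refine ⟨fun x => ρ (markedEncoding N x), hρ.comp continuous_markedEncoding,
    fun x x' h => ?_, fun x => ⟨(hρY _).1, ?_⟩⟩
  · by_contra hxx'
    refine PiNat.apply_firstDiff_ne hxx' (hsep _ _ _ _ _ (fun i => markedEncoding_apply_of_lt hN)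
      (fun i hi => ?_) h)
    have hs : markedPrefix N x (PiNat.firstDiff x x') = markedPrefix N x' (PiNat.firstDiff x x') :=
      markedPrefix_congr fun i => PiNat.apply_eq_of_lt_firstDiff
    rw [hs] at hi ⊢
    exact markedEncoding_apply_of_lt hN hi
  · rw [(hρY _).2, markedEncoding_mem_markedCode hN]

end Harrington

/-! ### Extension of homeomorphisms -/

section KnasterReichbach

theorem range_cons_eq {α β : Type*} {p : α → List Bool} {q : β → List Bool} {a : α → Bool}
    {b : β → Bool} (h : ∀ w, a '' (p ⁻¹' {w}) = b '' (q ⁻¹' {w})) :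
    range (fun x => a x :: p x) = range fun y => b y :: q y := by
  ext (- | ⟨i, w⟩)
  · simp
  · simpa [and_comm] using Set.ext_iff.1 (h w) i

variable {α β : Type*} [TopologicalSpace α] [TopologicalSpace β]

theorem exists_continuous_injective_cantor [CompactSpace α] [T2Space α]
    [TotallyDisconnectedSpace α] [SecondCountableTopology α] :
    ∃ ι : α → Cantor, Continuous ι ∧ Function.Injective ι := by
  have : Countable (Clopens α) := Clopens.countable_iff_secondCountable.2 inferInstance
  obtain ⟨U, hU⟩ := exists_surjective_nat (Clopens α)
  refine ⟨fun x n => (U n : Set α).boolIndicator x, continuous_pi fun n =>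
    (continuous_boolIndicator_iff_isClopen _).2 (U n).isClopen, fun x y hxy => ?_⟩
  by_contra hne
  obtain ⟨V, hV, hxV, hyV⟩ := compact_exists_isClopen_in_isOpen isOpen_compl_singleton hne
  obtain ⟨n, hn⟩ := hU ⟨V, hV⟩
  have hx : x ∈ (U n : Set α) := hn ▸ hxV
  refine hyV (?_ : y ∈ V) rfl
  have hy : y ∈ (U n : Set α) := (mem_iff_boolIndicator _ _).2
    ((congrFun hxy n).symm.trans ((mem_iff_boolIndicator _ _).1 hx))
  rwa [hn] at hy

theorem isLocallyConstant_coord {ι : α → Cantor} (hι : Continuous ι) (n : ℕ) :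
    IsLocallyConstant fun x => ι x n :=
  (IsLocallyConstant.iff_continuous _).2 ((continuous_apply n).comp hι)

theorem exists_mem_iInter_of_antitone [CompactSpace β] {R : ℕ → Set (α × β)} (hR : Antitone R)
    (hclosed : ∀ n, IsClosed (R n)) {x : α} (hx : ∀ n, ∃ y, (x, y) ∈ R n) :
    ∃ y, (x, y) ∈ ⋂ n, R n := by
  have hsec (n : ℕ) : IsClosed (Prod.mk x ⁻¹' R n) :=
    (hclosed n).preimage (Continuous.prodMk_right x)
  have hanti : Antitone fun n => Prod.mk x ⁻¹' R n := fun _ _ h => preimage_mono (hR h)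
  obtain ⟨y, hy⟩ := IsCompact.nonempty_iInter_of_directed_nonempty_isCompact_isClosed
    (fun n => Prod.mk x ⁻¹' R n) hanti.directed_ge hx
    (fun n => (hsec n).isCompact) hsec
  exact ⟨y, by simpa using hy⟩

theorem exists_homeomorph_of_antitone [CompactSpace α] [T2Space α] [CompactSpace β] [T2Space β]
    {R : ℕ → Set (α × β)} (hR : Antitone R) (hclosed : ∀ n, IsClosed (R n))
    (hfst : ∀ n x, ∃ y, (x, y) ∈ R n) (hsnd : ∀ n y, ∃ x, (x, y) ∈ R n)
    (hinjfst : InjOn Prod.fst (⋂ n, R n)) (hinjsnd : InjOn Prod.snd (⋂ n, R n)) :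
    ∃ h : α ≃ₜ β, ∀ z : α × β, h z.1 = z.2 ↔ z ∈ ⋂ n, R n := by
  let S : Set (α × β) := ⋂ n, R n
  have : CompactSpace S := isCompact_iff_compactSpace.1 (isClosed_iInter hclosed).isCompact
  have hfst' : Function.Bijective fun z : S => z.1.1 :=
    ⟨hinjfst.injective, fun x =>
      let ⟨y, hy⟩ := exists_mem_iInter_of_antitone hR hclosed fun n => hfst n x
      ⟨⟨(x, y), hy⟩, rfl⟩⟩
  have hsnd' : Function.Bijective fun z : S => z.1.2 :=
    ⟨hinjsnd.injective, fun y =>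
      let ⟨x, hx⟩ := exists_mem_iInter_of_antitone (R := fun n => Prod.swap ⁻¹' R n)
        (fun _ _ h => preimage_mono (hR h)) (fun n => (hclosed n).preimage continuous_swap)
        fun n => hsnd n y
      ⟨⟨(x, y), by simpa [S] using hx⟩, rfl⟩⟩
  let e₁ : S ≃ₜ α := Continuous.homeoOfEquivCompactToT2 (f := .ofBijective _ hfst')
    (continuous_fst.comp continuous_subtype_val)
  let e₂ : S ≃ₜ β := Continuous.homeoOfEquivCompactToT2 (f := .ofBijective _ hsnd')
    (continuous_snd.comp continuous_subtype_val)
  refine ⟨e₁.symm.trans e₂, fun z => ⟨fun hz => ?_, fun hz => ?_⟩⟩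
  · have hz' : (e₁.symm z.1).1 = z := Prod.ext (e₁.apply_symm_apply z.1) hz
    exact hz' ▸ (e₁.symm z.1).2
  · have hz' : e₁.symm z.1 = ⟨z, hz⟩ := e₁.symm_apply_eq.2 rfl
    exact congrArg e₂ hz'

theorem interior_image_eq_empty {e : α → β} (he : Continuous e) (hinj : Function.Injective e)
    {F : Set α} (hF : interior F = ∅) : interior (e '' F) = ∅ := by
  have h : e ⁻¹' interior (e '' F) ⊆ interior F :=
    interior_maximal ((preimage_mono interior_subset).trans (preimage_image_eq F hinj).subset)
      (isOpen_interior.preimage he)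
  rw [hF, subset_empty_iff] at h
  refine eq_empty_of_forall_notMem fun y hy => ?_
  obtain ⟨x, -, rfl⟩ := interior_subset hy
  exact (h ▸ hy : x ∈ (∅ : Set α))

theorem exists_isClopen_split [CompactSpace β] [T2Space β] [TotallyDisconnectedSpace β]
    [PerfectSpace β] {Q F₀ F₁ : Set β} (hQ : IsOpen Q) (hQne : Q.Nonempty) (hF₀ : IsClosed F₀)
    (hF₁ : IsClosed F₁) (hF : Disjoint F₀ F₁) (hint : interior (F₀ ∪ F₁) = ∅) :
    ∃ W, IsClopen W ∧ F₁ ⊆ W ∧ Disjoint F₀ W ∧ (Q ∩ W).Nonempty ∧ (Q \ W).Nonempty := by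
  have hopen : IsOpen (Q \ (F₀ ∪ F₁)) := hQ.sdiff (hF₀.union hF₁)
  obtain ⟨u, hu⟩ : (Q \ (F₀ ∪ F₁)).Nonempty := by
    refine sdiff_nonempty.2 fun h => hQne.ne_empty (subset_empty_iff.1 ?_)
    exact hint ▸ interior_maximal h hQ
  obtain ⟨v, hv, hvu⟩ := ((frequently_iff_neBot.2 (PerfectSpace.not_isolated u)).and_eventually
    (hopen.mem_nhds hu)).exists.imp fun v h => h.symm
  have hsub : F₁ ∪ {v} ⊆ (F₀ ∪ {u})ᶜ := by
    rintro x hx hx'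
    rcases hx with hx | rfl <;> rcases hx' with hx' | rfl
    · exact disjoint_left.1 hF hx' hx
    · exact hu.2 (Or.inr hx)
    · exact hv.2 (Or.inl hx')
    · exact hvu rfl
  obtain ⟨W, hW, hW₁, hW₀⟩ := exists_clopen_of_closed_subset_open (hF₁.union isClosed_singleton)
    (hF₀.union isClosed_singleton).isOpen_compl hsub
  have hW₀' : Disjoint (F₀ ∪ {u}) W := (disjoint_left.2 hW₀).symm
  exact ⟨W, hW, subset_union_left.trans hW₁, hW₀'.mono_left subset_union_left,
    ⟨v, hv.1, hW₁ (Or.inr rfl)⟩, ⟨u, hu.1, disjoint_left.1 hW₀' (Or.inr rfl)⟩⟩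

theorem exists_isLocallyConstant_image_eq [CompactSpace β] [T2Space β]
    [TotallyDisconnectedSpace β] [PerfectSpace β] {Q : Set β} (hQ : IsOpen Q) {F : Bool → Set β}
    (hF : ∀ i, IsClosed (F i)) (hdisj : Disjoint (F false) (F true))
    (hint : interior (F false ∪ F true) = ∅) {A : Set Bool} (hA : A.Nonempty ↔ Q.Nonempty)
    (hFA : ∀ i, (F i ∩ Q).Nonempty → i ∈ A) :
    ∃ b : β → Bool, IsLocallyConstant b ∧ (∀ i, ∀ y ∈ F i ∩ Q, b y = i) ∧ b '' Q = A := by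
  by_cases hA' : A = univ
  · subst hA'
    obtain ⟨W, hW, hFW, hWF, ⟨v, hvQ, hvW⟩, ⟨u, huQ, huW⟩⟩ :=
      exists_isClopen_split hQ (hA.1 univ_nonempty) (hF false) (hF true) hdisj hint
    refine ⟨W.boolIndicator, (IsLocallyConstant.iff_continuous _).2
      ((continuous_boolIndicator_iff_isClopen W).2 hW), ?_, eq_univ_of_forall ?_⟩
    · rintro (- | -) y ⟨hy, -⟩
      · exact (notMem_iff_boolIndicator _ _).1 (disjoint_left.1 hWF hy)
      · exact (mem_iff_boolIndicator _ _).1 (hFW hy)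
    · rintro (- | -)
      · exact ⟨u, huQ, (notMem_iff_boolIndicator _ _).1 huW⟩
      · exact ⟨v, hvQ, (mem_iff_boolIndicator _ _).1 hvW⟩
  · obtain ⟨i, hi⟩ := (ne_univ_iff_exists_notMem A).1 hA'
    have hAi (j : Bool) (hj : j ∈ A) : (!i) = j :=
      (Bool.eq_not.2 (by rintro rfl; exact hi hj)).symm
    refine ⟨fun _ => !i, .const _, fun j y hy => hAi j (hFA j ⟨y, hy⟩), ?_⟩
    ext j
    constructor
    · rintro ⟨y, hy, rfl⟩
      obtain ⟨k, hk⟩ := hA.2 ⟨y, hy⟩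
      exact hAi k hk ▸ hk
    · intro hj
      obtain ⟨y, hy⟩ := hA.1 ⟨j, hj⟩
      exact ⟨y, hy, hAi j hj⟩

/-- The graphs of homeomorphisms between closed nowhere dense sets (in compact spaces). -/
structure IsThinMatching (G : Set (α × β)) : Prop where
  isClosed : IsClosed G
  injOn_fst : InjOn Prod.fst G
  injOn_snd : InjOn Prod.snd G
  interior_fst : interior (Prod.fst '' G) = ∅
  interior_snd : interior (Prod.snd '' G) = ∅

/-- Two locally constant colourings by finite words, describing clopen partitions of the two spaces
whose pieces are put in bijection by their colour; the relation `G` respects this bijection. -/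
structure IsWordMatching (G : Set (α × β)) (p : α → List Bool) (q : β → List Bool) : Prop where
  isLocallyConstant_left : IsLocallyConstant p
  isLocallyConstant_right : IsLocallyConstant q
  range_eq : range p = range q
  eq_of_mem : ∀ z ∈ G, p z.1 = q z.2

variable {G : Set (α × β)} {p : α → List Bool} {q : β → List Bool}

theorem IsThinMatching.swap (hG : IsThinMatching G) : IsThinMatching (Prod.swap ⁻¹' G) where
  isClosed := hG.isClosed.preimage continuous_swap
  injOn_fst := fun _ hz _ hz' h => Prod.swap_injective (hG.injOn_snd hz hz' h)
  injOn_snd := fun _ hz _ hz' h => Prod.swap_injective (hG.injOn_fst hz hz' h)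
  interior_fst := by simpa [← image_swap_eq_preimage_swap, image_image] using hG.interior_snd
  interior_snd := by simpa [← image_swap_eq_preimage_swap, image_image] using hG.interior_fst

theorem IsWordMatching.swap (h : IsWordMatching G p q) :
    IsWordMatching (Prod.swap ⁻¹' G) q p where
  isLocallyConstant_left := h.isLocallyConstant_right
  isLocallyConstant_right := h.isLocallyConstant_left
  range_eq := h.range_eq.symm
  eq_of_mem := fun _ hz => (h.eq_of_mem _ hz).symm

theorem IsWordMatching.of_homeomorph (f : α ≃ₜ β) (hq : IsLocallyConstant q)
    (hG : ∀ z ∈ G, q (f z.1) = q z.2) : IsWordMatching G (fun x => q (f x)) q where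
  isLocallyConstant_left := hq.comp_continuous f.continuous
  isLocallyConstant_right := hq
  range_eq := f.surjective.range_comp q
  eq_of_mem := hG

theorem IsWordMatching.isClosed_setOf_eq (h : IsWordMatching G p q) :
    IsClosed {z : α × β | p z.1 = q z.2} := by
  have hloc := (h.isLocallyConstant_left.comp_continuous continuous_fst).comp₂
    (h.isLocallyConstant_right.comp_continuous continuous_snd) Eq
  simpa only [Function.comp_apply, eq_iff_iff, iff_true] using hloc.isClosed_fiber True

theorem IsWordMatching.exists_homeomorph_iff [CompactSpace α] [T2Space α] [CompactSpace β]
    [T2Space β] {p : ℕ → α → List Bool} {q : ℕ → β → List Bool}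
    (h : ∀ n, IsWordMatching G (p n) (q n))
    (hsucc : ∀ n x y, p (n + 1) x = q (n + 1) y → p n x = q n y)
    (hp : ∀ x x', (∀ n, p n x = p n x') → x = x')
    (hq : ∀ y y', (∀ n, q n y = q n y') → y = y') :
    ∃ g : α ≃ₜ β, ∀ x y, g x = y ↔ ∀ n, p n x = q n y := by
  let R (n : ℕ) : Set (α × β) := {z | p n z.1 = q n z.2}
  have hR {z : α × β} (hz : z ∈ ⋂ n, R n) (n : ℕ) : p n z.1 = q n z.2 := mem_iInter.1 hz n
  have hfst : InjOn Prod.fst (⋂ n, R n) := fun z hz z' hz' hzz =>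
    Prod.ext hzz (hq _ _ fun n => (hR hz n).symm.trans ((congrArg (p n) hzz).trans (hR hz' n)))
  have hsnd : InjOn Prod.snd (⋂ n, R n) := fun z hz z' hz' hzz =>
    Prod.ext (hp _ _ fun n => (hR hz n).trans ((congrArg (q n) hzz).trans (hR hz' n).symm)) hzz
  obtain ⟨g, hg⟩ := exists_homeomorph_of_antitone (R := R)
    (antitone_nat_of_succ_le fun n z => hsucc n _ _) (fun n => (h n).isClosed_setOf_eq)
    (fun n x => ((Set.ext_iff.1 (h n).range_eq _).1 ⟨x, rfl⟩).imp fun _ => Eq.symm)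
    (fun n y => (Set.ext_iff.1 (h n).range_eq _).2 ⟨y, rfl⟩) hfst hsnd
  exact ⟨g, fun x y => (hg (x, y)).trans mem_iInter⟩

theorem IsWordMatching.exists_color [CompactSpace α] [CompactSpace β] [T2Space β]
    [TotallyDisconnectedSpace β] [PerfectSpace β] (hG : IsThinMatching G)
    (h : IsWordMatching G p q) {a : α → Bool} (ha : IsLocallyConstant a) (w : List Bool) :
    ∃ b : β → Bool, IsLocallyConstant b ∧ (∀ z ∈ G, q z.2 = w → b z.2 = a z.1) ∧
      b '' (q ⁻¹' {w}) = a '' (p ⁻¹' {w}) := by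
  let F (i : Bool) : Set β := Prod.snd '' (G ∩ {z | a z.1 = i})
  have hF (i : Bool) : IsClosed (F i) :=
    ((hG.isClosed.inter ((ha.isClosed_fiber i).preimage continuous_fst)).isCompact.image
      continuous_snd).isClosed
  have hdisj : Disjoint (F false) (F true) := by
    refine disjoint_left.2 ?_
    rintro _ ⟨z, ⟨hz, hza⟩, rfl⟩ ⟨z', ⟨hz', hza'⟩, hzz'⟩
    obtain rfl := hG.injOn_snd hz' hz hzz'
    exact Bool.false_ne_true (hza.symm.trans hza')
  have hint : interior (F false ∪ F true) = ∅ :=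
    subset_empty_iff.1 <| hG.interior_snd ▸ interior_mono
      (union_subset (image_mono inter_subset_left) (image_mono inter_subset_left))
  have hne : (a '' (p ⁻¹' {w})).Nonempty ↔ (q ⁻¹' {w}).Nonempty :=
    image_nonempty.trans (Set.ext_iff.1 h.range_eq w)
  obtain ⟨b, hb, hbF, hbQ⟩ := exists_isLocallyConstant_image_eq
    (h.isLocallyConstant_right.isOpen_fiber w) hF hdisj hint hne (by
      rintro i ⟨_, ⟨z, ⟨hz, rfl⟩, rfl⟩, hzw⟩
      exact mem_image_of_mem a ((h.eq_of_mem z hz).trans hzw))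
  exact ⟨b, hb, fun z hz hzw => hbF _ _ ⟨⟨z, ⟨hz, rfl⟩, rfl⟩, hzw⟩, hbQ⟩

theorem IsWordMatching.exists_cons [CompactSpace α] [CompactSpace β] [T2Space β]
    [TotallyDisconnectedSpace β] [PerfectSpace β] (hG : IsThinMatching G)
    (h : IsWordMatching G p q) {a : α → Bool} (ha : IsLocallyConstant a) :
    ∃ b : β → Bool, IsWordMatching G (fun x => a x :: p x) (fun y => b y :: q y) := by
  choose b hb hbG hbq using h.exists_color hG ha
  have hloc : IsLocallyConstant fun y => b (q y) y := by
    refine (IsLocallyConstant.iff_eventually_eq _).2 fun y => ?_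
    filter_upwards [h.isLocallyConstant_right.eventually_eq y, (hb (q y)).eventually_eq y]
      with y' hq hb
    rw [hq, hb]
  refine ⟨fun y => b (q y) y, ha.comp₂ h.isLocallyConstant_left _,
    hloc.comp₂ h.isLocallyConstant_right _, range_cons_eq fun w => ?_, fun z hz => ?_⟩
  · rw [← hbq w]
    exact image_congr fun y hy => by rw [show q y = w from hy]
  · simp only [hbG _ z hz rfl, h.eq_of_mem z hz]

theorem IsWordMatching.exists_refinement [CompactSpace α] [T2Space α]
    [TotallyDisconnectedSpace α] [PerfectSpace α] [CompactSpace β] [T2Space β]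
    [TotallyDisconnectedSpace β] [PerfectSpace β] (hG : IsThinMatching G)
    (h : IsWordMatching G p q) {a : α → Bool} (ha : IsLocallyConstant a) {b : β → Bool}
    (hb : IsLocallyConstant b) :
    ∃ p' q', IsWordMatching G p' q' ∧ (∀ x y, p' x = q' y → p x = q y) ∧
      (∀ x x', p' x = p' x' → a x = a x') ∧ ∀ y y', q' y = q' y' → b y = b y' := by
  obtain ⟨b', h'⟩ := h.exists_cons hG ha
  obtain ⟨a', h''⟩ := h'.swap.exists_cons hG.swap hb
  refine ⟨_, _, h''.swap, fun x y hxy => ?_, fun x x' hx => ?_, fun y y' hy => ?_⟩ <;>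
    simp_all only [List.cons.injEq]

/-- The Knaster–Reichbach extension theorem. -/
theorem IsWordMatching.exists_homeomorph [CompactSpace α] [T2Space α]
    [TotallyDisconnectedSpace α] [PerfectSpace α] [SecondCountableTopology α] [CompactSpace β]
    [T2Space β] [TotallyDisconnectedSpace β] [PerfectSpace β] [SecondCountableTopology β]
    (hG : IsThinMatching G) (h : IsWordMatching G p q) :
    ∃ g : α ≃ₜ β, (∀ z ∈ G, g z.1 = z.2) ∧ ∀ x, q (g x) = p x := by
  obtain ⟨ι, hι, hιinj⟩ := exists_continuous_injective_cantor (α := α)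
  obtain ⟨κ, hκ, hκinj⟩ := exists_continuous_injective_cantor (α := β)
  let State := {s : (α → List Bool) × (β → List Bool) // IsWordMatching G s.1 s.2}
  have hstep (n : ℕ) (s : State) : ∃ s' : State,
      (∀ x y, s'.1.1 x = s'.1.2 y → s.1.1 x = s.1.2 y) ∧
      (∀ x x', s'.1.1 x = s'.1.1 x' → ι x n = ι x' n) ∧
      ∀ y y', s'.1.2 y = s'.1.2 y' → κ y n = κ y' n :=
    let ⟨p', q', h', hpq⟩ := s.2.exists_refinement hG (isLocallyConstant_coord hι n)
      (isLocallyConstant_coord hκ n)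
    ⟨⟨(p', q'), h'⟩, hpq⟩
  choose next hnext hnextι hnextκ using hstep
  let s (n : ℕ) : State := n.rec ⟨(p, q), h⟩ next
  have hιs (n : ℕ) (x x' : α) (hx : (s (n + 1)).1.1 x = (s (n + 1)).1.1 x') : ι x n = ι x' n :=
    hnextι n (s n) x x' hx
  have hκs (n : ℕ) (y y' : β) (hy : (s (n + 1)).1.2 y = (s (n + 1)).1.2 y') : κ y n = κ y' n :=
    hnextκ n (s n) y y' hy
  obtain ⟨g, hg⟩ := IsWordMatching.exists_homeomorph_iff (fun n => (s n).2)
    (fun n => hnext n (s n))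
    (fun x x' hx => hιinj (funext fun n => hιs n x x' (hx (n + 1))))
    (fun y y' hy => hκinj (funext fun n => hκs n y y' (hy (n + 1))))
  exact ⟨g, fun z hz => (hg _ _).2 fun n => (s n).2.eq_of_mem z hz,
    fun x => (((hg x (g x)).1 rfl) 0).symm⟩

end KnasterReichbach

section ShrinkingPartition

variable {α β : Type*} [TopologicalSpace α] [TopologicalSpace β]

/-- The sets `P x`, for `x ∉ E`, are the pieces of a partition of the complement of `E` into open
sets which get arbitrarily small near the points of `E`. -/
structure IsShrinkingPartition (E : Set α) (P : α → Set α) : Prop where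
  mem_self : ∀ x ∉ E, x ∈ P x
  isOpen : ∀ x ∉ E, IsOpen (P x)
  disjoint : ∀ x ∉ E, Disjoint (P x) E
  eq_of_mem : ∀ x ∉ E, ∀ x' ∈ P x, P x' = P x
  eventually_subset : ∀ x ∈ E, ∀ U ∈ 𝓝 x, ∀ᶠ x' in 𝓝 x, x' ∉ E → P x' ⊆ U

/-- The union of the cylinders around `x` which avoid `S`. -/
def avoidingCylinder (S : Set Cantor) (x : Cantor) : Set Cantor :=
  {y | ∃ n, y ∈ PiNat.cylinder x n ∧ Disjoint S (PiNat.cylinder x n)}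

theorem avoidingCylinder_subset_of_mem {S : Set Cantor} {x y : Cantor}
    (h : y ∈ avoidingCylinder S x) : avoidingCylinder S x ⊆ avoidingCylinder S y := by
  obtain ⟨n, hyn, hn⟩ := h
  rintro z ⟨m, hzm, hm⟩
  rcases le_total m n with hmn | hnm
  · have hy := PiNat.mem_cylinder_iff_eq.1 (PiNat.cylinder_anti x hmn hyn)
    exact ⟨m, hy.symm ▸ hzm, hy.symm ▸ hm⟩
  · have hy := PiNat.mem_cylinder_iff_eq.1 hyn
    exact ⟨n, hy.symm ▸ PiNat.cylinder_anti x hnm hzm, hy.symm ▸ hn⟩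

theorem mem_avoidingCylinder_comm {S : Set Cantor} {x y : Cantor} :
    y ∈ avoidingCylinder S x ↔ x ∈ avoidingCylinder S y := by
  suffices h : ∀ {x y}, y ∈ avoidingCylinder S x → x ∈ avoidingCylinder S y from ⟨h, h⟩
  rintro x y ⟨n, hyn, hn⟩
  exact ⟨n, (PiNat.mem_cylinder_comm _ _ _).1 hyn, PiNat.mem_cylinder_iff_eq.1 hyn ▸ hn⟩

theorem isShrinkingPartition_avoidingCylinder {S : Set Cantor} (hS : IsClosed S) :
    IsShrinkingPartition S (avoidingCylinder S) where
  mem_self x hx := (PiNat.exists_disjoint_cylinder hS hx).imp fun n hn =>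
    ⟨PiNat.self_mem_cylinder _ _, hn⟩
  isOpen x _ := isOpen_iff_mem_nhds.2 fun y ⟨n, hyn, hn⟩ =>
    mem_of_superset ((PiNat.isOpen_cylinder _ x n).mem_nhds hyn) fun _ hz => ⟨n, hz, hn⟩
  disjoint x _ := disjoint_left.2 fun _ ⟨_, hyn, hn⟩ hy => disjoint_left.1 hn hy hyn
  eq_of_mem x _ x' hx' := (avoidingCylinder_subset_of_mem
    (mem_avoidingCylinder_comm.1 hx')).antisymm (avoidingCylinder_subset_of_mem hx')
  eventually_subset x hx U hU := by
    obtain ⟨V, hVU, hV, hxV⟩ := mem_nhds_iff.1 hU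
    obtain ⟨_, ⟨v, m, rfl⟩, hxv, hvV⟩ :=
      (PiNat.isTopologicalBasis_cylinders _).exists_subset_of_mem_open hxV hV
    filter_upwards [(PiNat.isOpen_cylinder _ v m).mem_nhds hxv] with x' hx' _
    have hcyl : PiNat.cylinder x' m = PiNat.cylinder v m := PiNat.mem_cylinder_iff_eq.1 hx'
    rintro y ⟨n, hyn, hn⟩
    have hmn : m ≤ n := le_of_not_ge fun hnm =>
      disjoint_left.1 hn hx (PiNat.cylinder_anti x' hnm (hcyl ▸ hxv))
    exact hVU (hvV (hcyl ▸ PiNat.cylinder_anti x' hmn hyn))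

theorem IsShrinkingPartition.preimage_inter {E : Set α} {P : β → Set β} {ι : α → β}
    (hι : IsEmbedding ι) (h : IsShrinkingPartition (ι '' E) P) {γ : Type*} {p : α → γ}
    (hp : IsLocallyConstant p) :
    IsShrinkingPartition E fun x => ι ⁻¹' P (ι x) ∩ p ⁻¹' {p x} := by
  have hmem {x : α} (hx : x ∉ E) : ι x ∉ ι '' E := fun hx' => hx (hι.injective.mem_set_image.1 hx')
  constructor
  · exact fun x hx => ⟨h.mem_self _ (hmem hx), rfl⟩
  · exact fun x hx => ((h.isOpen _ (hmem hx)).preimage hι.continuous).inter (hp.isOpen_fiber _)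
  · exact fun x hx => disjoint_left.2 fun x' hx' hE =>
      disjoint_left.1 (h.disjoint _ (hmem hx)) hx'.1 (mem_image_of_mem ι hE)
  · rintro x hx x' ⟨hx', hpx'⟩
    rw [h.eq_of_mem _ (hmem hx) _ hx', show p x' = p x from hpx']
  · intro x hx U hU
    obtain ⟨V, hV, hVU⟩ := (hι.isInducing.nhds_eq_comap x ▸ mem_comap.1 :
      U ∈ 𝓝 x → _) hU
    filter_upwards [hι.continuous.continuousAt.eventually
      (h.eventually_subset _ (mem_image_of_mem ι hx) V hV)] with x' hx' hE
    exact inter_subset_left.trans ((preimage_mono (hx' (hmem hE))).trans hVU)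

theorem exists_isShrinkingPartition [CompactSpace α] [T2Space α] [TotallyDisconnectedSpace α]
    [SecondCountableTopology α] {E : Set α} (hE : IsClosed E) {γ : Type*} {p : α → γ}
    (hp : IsLocallyConstant p) :
    ∃ P : α → Set α, IsShrinkingPartition E P ∧ ∀ x, ∀ x' ∈ P x, p x' = p x := by
  obtain ⟨ι, hι, hinj⟩ := exists_continuous_injective_cantor (α := α)
  have hι' := hι.isClosedEmbedding hinj
  exact ⟨_, (isShrinkingPartition_avoidingCylinder (hι'.isClosedMap E hE)).preimage_inter
    hι'.isEmbedding hp, fun x x' hx' => hx'.2⟩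

variable {E : Set α} {P : α → Set α} {f : α ≃ₜ β} {e : α → β}

theorem IsShrinkingPartition.continuous (hP : IsShrinkingPartition E P)
    (heE : EqOn e f E) (heP : ∀ x ∉ E, e x ∈ f '' P x) (hcont : ∀ x ∉ E, ContinuousOn e (P x)) :
    Continuous e := by
  refine continuous_iff_continuousAt.2 fun x => ?_
  by_cases hx : x ∈ E
  · refine tendsto_def.2 fun V hV => ?_
    rw [heE hx] at hV
    have hfV : f ⁻¹' V ∈ 𝓝 x := f.continuous.continuousAt hV
    filter_upwards [hfV, hP.eventually_subset x hx _ hfV] with x' hx'V hx'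
    by_cases hx'E : x' ∈ E
    · exact (heE hx'E ▸ hx'V : e x' ∈ V)
    · exact image_subset_iff.2 (hx' hx'E) (heP x' hx'E)
  · exact (hcont x hx).continuousAt ((hP.isOpen x hx).mem_nhds (hP.mem_self x hx))

theorem IsShrinkingPartition.injective (hP : IsShrinkingPartition E P) (heE : EqOn e f E)
    (heP : ∀ x ∉ E, e x ∈ f '' P x) (hinj : ∀ x ∉ E, InjOn e (P x)) : Function.Injective e := by
  have hne {x x' : α} (hx : x ∈ E) (hx' : x' ∉ E) : e x ≠ e x' := by
    obtain ⟨z, hz, hzx'⟩ := heP x' hx'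
    rw [heE hx, ← hzx']
    rintro hxz
    exact disjoint_left.1 (hP.disjoint x' hx') hz (f.injective hxz ▸ hx)
  intro x x' hxx'
  by_cases hx : x ∈ E <;> by_cases hx' : x' ∈ E
  · exact f.injective (by rwa [← heE hx, ← heE hx'])
  · exact absurd hxx' (hne hx hx')
  · exact absurd hxx'.symm (hne hx' hx)
  · obtain ⟨z, hz, hzx⟩ := heP x hx
    obtain ⟨z', hz', hzx'⟩ := heP x' hx'
    obtain rfl := f.injective (hzx.trans (hxx'.trans hzx'.symm))
    refine hinj x hx (hP.mem_self x hx) ?_ hxx'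
    rw [← hP.eq_of_mem x hx z hz, hP.eq_of_mem x' hx' z hz']
    exact hP.mem_self x' hx'

end ShrinkingPartition

section Reductions

variable {α β : Type*} [TopologicalSpace α] [TopologicalSpace β] {X : Set α} {Y : Set β}

/-- Every nonempty open subset of `β` receives an injective continuous reduction of `X` to `Y`. -/
def EmbedsEverywhere (X : Set α) (Y : Set β) : Prop :=
  ∀ O : Set β, IsOpen O → O.Nonempty → ∃ F : α → β,
    Continuous F ∧ Function.Injective F ∧ (∀ x, F x ∈ O) ∧ ∀ x, x ∈ X ↔ F x ∈ Y

theorem EmbedsEverywhere.compl (h : EmbedsEverywhere X Y) : EmbedsEverywhere Xᶜ Yᶜ :=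
  fun O hO hne =>
  let ⟨F, hF, hinj, hFO, hFX⟩ := h O hO hne
  ⟨F, hF, hinj, hFO, fun x => not_congr (hFX x)⟩

theorem EmbedsEverywhere.exists_eqOn [CompactSpace α] [T2Space α] [TotallyDisconnectedSpace α]
    [SecondCountableTopology α] (h : EmbedsEverywhere X Y) (f : α ≃ₜ β) {E : Set α}
    (hE : IsClosed E) (hEX : ∀ x ∈ E, x ∈ X ↔ f x ∈ Y) {γ : Type*} {q : β → γ}
    (hq : IsLocallyConstant q) :
    ∃ e : α → β, Continuous e ∧ Function.Injective e ∧ EqOn e f E ∧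
      (∀ x, q (e x) = q (f x)) ∧ ∀ x, x ∈ X ↔ e x ∈ Y := by
  obtain ⟨P, hP, hPq⟩ := exists_isShrinkingPartition hE (hq.comp_continuous f.continuous)
  have hF (O : Set α) : ∃ F : α → β, IsOpen O → O.Nonempty → Continuous F ∧
      Function.Injective F ∧ (∀ x, F x ∈ f '' O) ∧ ∀ x, x ∈ X ↔ F x ∈ Y := by
    by_cases hO : IsOpen O ∧ O.Nonempty
    · exact (h _ (f.isOpenMap _ hO.1) (hO.2.image f)).imp fun F hF _ _ => hF
    · exact ⟨f, fun hopen hne => absurd ⟨hopen, hne⟩ hO⟩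
  choose F hF using hF
  have hFP {x : α} (hx : x ∉ E) := hF (P x) (hP.isOpen x hx) ⟨x, hP.mem_self x hx⟩
  classical
  let e (x : α) : β := if x ∈ E then f x else F (P x) x
  have heE : EqOn e f E := fun x hx => if_pos hx
  have heF {x : α} (hx : x ∉ E) : EqOn e (F (P x)) (P x) := fun x' hx' => by
    simp only [e, if_neg (disjoint_left.1 (hP.disjoint x hx) hx'), hP.eq_of_mem x hx x' hx']
  have he {x : α} (hx : x ∉ E) : e x = F (P x) x := heF hx (hP.mem_self x hx)
  have heP (x : α) (hx : x ∉ E) : e x ∈ f '' P x := he hx ▸ (hFP hx).2.2.1 x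
  refine ⟨e, hP.continuous heE heP fun x hx => (hFP hx).1.continuousOn.congr (heF hx),
    hP.injective heE heP fun x hx => ((hFP hx).2.1.injOn).congr (heF hx).symm, heE,
    fun x => ?_, fun x => ?_⟩ <;> by_cases hx : x ∈ E
  · rw [heE hx]
  · obtain ⟨z, hz, hze⟩ := heP x hx
    rw [← hze]
    exact hPq x z hz
  · rw [heE hx]
    exact hEX x hx
  · rw [he hx]
    exact (hFP hx).2.2.2 x

theorem exists_homeomorph_eqOn [CompactSpace α] [T2Space α]
    [TotallyDisconnectedSpace α] [PerfectSpace α] [SecondCountableTopology α] [CompactSpace β]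
    [T2Space β] [TotallyDisconnectedSpace β] [PerfectSpace β] [SecondCountableTopology β]
    (f : α ≃ₜ β) {q : β → List Bool} (hq : IsLocallyConstant q) {F : Set α} (hF : IsClosed F)
    (hFint : interior F = ∅) {e : α → β} (he : Continuous e) (hinj : Function.Injective e)
    (hqe : ∀ x ∈ F, q (e x) = q (f x)) :
    ∃ g : α ≃ₜ β, EqOn g e F ∧ ∀ x, q (g x) = q (f x) := by
  let G : Set (α × β) := {z | z.1 ∈ F ∧ e z.1 = z.2}
  have hfst : Prod.fst '' G = F := by
    ext x
    exact ⟨by rintro ⟨z, hz, rfl⟩; exact hz.1, fun hx => ⟨(x, e x), ⟨hx, rfl⟩, rfl⟩⟩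
  have hsnd : Prod.snd '' G = e '' F := by
    ext y
    constructor
    · rintro ⟨z, ⟨hz, hez⟩, rfl⟩
      exact ⟨z.1, hz, hez⟩
    · rintro ⟨x, hx, rfl⟩
      exact ⟨(x, e x), ⟨hx, rfl⟩, rfl⟩
  have hG : IsThinMatching G :=
    { isClosed := (hF.preimage continuous_fst).inter
        (isClosed_eq (he.comp continuous_fst) continuous_snd)
      injOn_fst := fun z hz z' hz' h => Prod.ext h (hz.2.symm.trans ((congrArg e h).trans hz'.2))
      injOn_snd := fun z hz z' hz' h => Prod.ext (hinj (hz.2.trans (h.trans hz'.2.symm))) h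
      interior_fst := hfst ▸ hFint
      interior_snd := hsnd ▸ interior_image_eq_empty he hinj hFint }
  obtain ⟨g, hgG, hgq⟩ := (IsWordMatching.of_homeomorph f hq
    fun z (hz : z ∈ G) => (hqe _ hz.1).symm.trans (congrArg q hz.2)).exists_homeomorph hG
  exact ⟨g, fun x hx => hgG (x, e x) ⟨hx, rfl⟩, hgq⟩

end Reductions

/-! ### Category and the back-and-forth construction -/

section BackAndForth

theorem exists_isClosed_cover_of_isMeagre {α : Type*} [TopologicalSpace α] {M : Set α}
    (hM : IsMeagre M) :
    ∃ K : ℕ → Set α, (∀ n, IsClosed (K n)) ∧ (∀ n, interior (K n) = ∅) ∧ M ⊆ ⋃ n, K n := by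
  obtain ⟨S, hS, hcount, hMS⟩ := isMeagre_iff_countable_union_isNowhereDense.1 hM
  obtain ⟨K, hK⟩ := (hcount.insert ∅).exists_eq_range (insert_nonempty _ _)
  have hnwd (n : ℕ) : IsNowhereDense (K n) := by
    rcases hK ▸ mem_range_self n with h | h
    · exact h ▸ isNowhereDense_empty
    · exact hS _ h
  refine ⟨fun n => closure (K n), fun n => isClosed_closure, hnwd, hMS.trans ?_⟩
  rintro x ⟨t, ht, hx⟩
  obtain ⟨n, rfl⟩ := hK ▸ mem_insert_of_mem ∅ ht
  exact mem_iUnion.2 ⟨n, subset_closure hx⟩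

variable {α β : Type*} [TopologicalSpace α] [TopologicalSpace β] {X : Set α} {Y : Set β}

/-- A stage in the construction of a homeomorphism `h` with `h ⁻¹' Y = X`: a homeomorphism which is
correct on the closed nowhere dense set `dom`, where it will not be changed any more, and a
locally constant colouring `word` of the target; later stages may only move the value at a point
within its colour. -/
structure PartialMatching (X : Set α) (Y : Set β) where
  toHomeo : α ≃ₜ β
  dom : Set α
  word : β → List Bool
  isClosed_dom : IsClosed dom
  interior_dom : interior dom = ∅
  mem_iff : ∀ x ∈ dom, x ∈ X ↔ toHomeo x ∈ Y
  isLocallyConstant_word : IsLocallyConstant word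

namespace PartialMatching

instance : Preorder (PartialMatching X Y) where
  le s t := s.dom ⊆ t.dom ∧ EqOn t.toHomeo s.toHomeo s.dom ∧
    ∀ x y, t.word (t.toHomeo x) = t.word y → s.word (s.toHomeo x) = s.word y
  le_refl s := ⟨Subset.rfl, eqOn_refl _ _, fun _ _ h => h⟩
  le_trans s t u hst htu := ⟨hst.1.trans htu.1, (htu.2.1.mono hst.1).trans hst.2.1,
    fun x y h => hst.2.2 x y (htu.2.2 x y h)⟩

variable {s : PartialMatching X Y}

theorem isWordMatching (s : PartialMatching X Y) :
    IsWordMatching ∅ (fun x => s.word (s.toHomeo x)) s.word :=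
  .of_homeomorph s.toHomeo s.isLocallyConstant_word (by simp)

/-- The inverse of a partial matching. -/
def symm (s : PartialMatching X Y) : PartialMatching Y X where
  toHomeo := s.toHomeo.symm
  dom := s.toHomeo '' s.dom
  word x := s.word (s.toHomeo x)
  isClosed_dom := s.toHomeo.isClosedMap _ s.isClosed_dom
  interior_dom := interior_image_eq_empty s.toHomeo.continuous s.toHomeo.injective s.interior_dom
  mem_iff := by
    rintro _ ⟨x, hx, rfl⟩
    rw [s.toHomeo.symm_apply_apply]
    exact (s.mem_iff x hx).symm
  isLocallyConstant_word := s.isLocallyConstant_word.comp_continuous s.toHomeo.continuous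

theorem le_symm_of_symm_le {t : PartialMatching Y X} (h : s.symm ≤ t) : s ≤ t.symm := by
  have heq {x : α} (hx : x ∈ s.dom) : t.toHomeo (s.toHomeo x) = x :=
    (h.2.1 ⟨x, hx, rfl⟩).trans (s.toHomeo.symm_apply_apply x)
  refine ⟨fun x hx => ⟨s.toHomeo x, h.1 ⟨x, hx, rfl⟩, heq hx⟩,
    fun x hx => t.toHomeo.symm_apply_eq.2 (heq hx).symm, fun x y hxy => ?_⟩
  have hyx := h.2.2 y x (by simpa [symm] using hxy.symm)
  simpa [symm] using hyx.symm

theorem exists_ge_word (s : PartialMatching X Y) {a : α → Bool} (ha : IsLocallyConstant a)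
    {b : β → Bool} (hb : IsLocallyConstant b) :
    ∃ t, s ≤ t ∧ (∀ x x', t.word (t.toHomeo x) = t.word (t.toHomeo x') → a x = a x') ∧
      ∀ y y', t.word y = t.word y' → b y = b y' := by
  have ha' := ha.comp_continuous s.toHomeo.symm.continuous
  refine ⟨{ s with
    word := fun y => a (s.toHomeo.symm y) :: b y :: s.word y
    isLocallyConstant_word := ha'.comp₂ (hb.comp₂ s.isLocallyConstant_word _) _ },
    ⟨Subset.rfl, eqOn_refl _ _, fun x y hxy => ?_⟩, fun x x' hxx' => ?_, fun y y' hyy' => ?_⟩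
  · exact (List.cons.inj (List.cons.inj hxy).2).2
  · simpa using (List.cons.inj hxx').1
  · exact (List.cons.inj (List.cons.inj hyy').2).1

theorem exists_homeomorph_of_monotone [CompactSpace α] [T2Space α] [CompactSpace β]
    [T2Space β] {s : ℕ → PartialMatching X Y} (hs : Monotone s)
    (hX : X ⊆ ⋃ n, (s n).dom) (hY : Y ⊆ ⋃ n, (s n).toHomeo '' (s n).dom)
    (hsep : ∀ x x', (∀ n, (s n).word ((s n).toHomeo x) = (s n).word ((s n).toHomeo x')) → x = x')
    (hsep' : ∀ y y', (∀ n, (s n).word y = (s n).word y') → y = y') :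
    ∃ h : α ≃ₜ β, ∀ x, x ∈ X ↔ h x ∈ Y := by
  obtain ⟨h, hh⟩ := IsWordMatching.exists_homeomorph_iff (fun n => (s n).isWordMatching)
    (fun n => (hs n.le_succ).2.2) hsep hsep'
  have hdom (n : ℕ) : EqOn h (s n).toHomeo (s n).dom := fun x hx => (hh _ _).2 fun m => by
    refine (hs (le_max_left m n)).2.2 x _ (congrArg _ ?_)
    exact (hs (le_max_right m n)).2.1 hx
  refine ⟨h, fun x => ⟨fun hx => ?_, fun hx => ?_⟩⟩
  · obtain ⟨n, hn⟩ := mem_iUnion.1 (hX hx)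
    exact hdom n hn ▸ ((s n).mem_iff x hn).1 hx
  · obtain ⟨n, x', hx', hxx'⟩ := mem_iUnion.1 (hY hx)
    obtain rfl := h.injective ((hdom n hx').trans hxx')
    exact ((s n).mem_iff x' hx').2 (hxx' ▸ hx)

end PartialMatching

variable [CompactSpace α] [T2Space α] [TotallyDisconnectedSpace α] [PerfectSpace α]
  [SecondCountableTopology α] [CompactSpace β] [T2Space β] [TotallyDisconnectedSpace β]
  [PerfectSpace β] [SecondCountableTopology β]

theorem PartialMatching.exists_ge_dom (hXY : EmbedsEverywhere X Y) (s : PartialMatching X Y)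
    {K : Set α} (hK : IsClosed K) (hKint : interior K = ∅) : ∃ t, s ≤ t ∧ K ⊆ t.dom := by
  obtain ⟨e, he, hinj, hes, heq, heX⟩ :=
    hXY.exists_eqOn s.toHomeo s.isClosed_dom s.mem_iff s.isLocallyConstant_word
  have hdom := s.isClosed_dom.union hK
  have hint : interior (s.dom ∪ K) = ∅ := by
    rw [interior_union_isClosed_of_interior_empty s.isClosed_dom hKint, s.interior_dom]
  obtain ⟨g, hg, hgq⟩ := exists_homeomorph_eqOn s.toHomeo s.isLocallyConstant_word hdom hint he
    hinj fun x _ => heq x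
  refine ⟨{ s with
    toHomeo := g
    dom := s.dom ∪ K
    isClosed_dom := hdom
    interior_dom := hint
    mem_iff := fun x hx => by rw [hg hx]; exact heX x },
    ⟨subset_union_left, (hg.mono subset_union_left).trans hes, fun x y hxy => ?_⟩,
    subset_union_right⟩
  exact (hgq x).symm.trans hxy

theorem PartialMatching.exists_ge (hXY : EmbedsEverywhere X Y) (hYX : EmbedsEverywhere Y X)
    (s : PartialMatching X Y) {K : Set α} (hK : IsClosed K) (hKint : interior K = ∅) {L : Set β}
    (hL : IsClosed L) (hLint : interior L = ∅) {a : α → Bool} (ha : IsLocallyConstant a)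
    {b : β → Bool} (hb : IsLocallyConstant b) :
    ∃ t, s ≤ t ∧ K ⊆ t.dom ∧ L ⊆ t.toHomeo '' t.dom ∧
      (∀ x x', t.word (t.toHomeo x) = t.word (t.toHomeo x') → a x = a x') ∧
      ∀ y y', t.word y = t.word y' → b y = b y' := by
  obtain ⟨t₁, hst₁, hKt₁⟩ := s.exists_ge_dom hXY hK hKint
  obtain ⟨t₂, ht₁₂, hLt₂⟩ := t₁.symm.exists_ge_dom hYX hL hLint
  obtain ⟨t, ht₂, hta, htb⟩ := t₂.symm.exists_ge_word ha hb
  have ht₁ : t₁ ≤ t₂.symm := PartialMatching.le_symm_of_symm_le ht₁₂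
  have ht₂' : t₂ ≤ t.symm := PartialMatching.le_symm_of_symm_le ht₂
  exact ⟨t, hst₁.trans (ht₁.trans ht₂), hKt₁.trans (ht₁.trans ht₂).1, hLt₂.trans ht₂'.1, hta, htb⟩

theorem nonempty_homeomorph [Nonempty α] [Nonempty β] : Nonempty (α ≃ₜ β) := by
  have hG : IsThinMatching (∅ : Set (α × β)) := by constructor <;> simp
  have h : IsWordMatching (∅ : Set (α × β)) (fun _ => []) fun _ => [] :=
    ⟨.const _, .const _, by simp only [range_const], by simp⟩
  exact (h.exists_homeomorph hG).nonempty

theorem exists_homeomorph_of_embedsEverywhere [Nonempty α] [Nonempty β]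
    (hX : IsMeagre X) (hY : IsMeagre Y) (hXY : EmbedsEverywhere X Y) (hYX : EmbedsEverywhere Y X) :
    ∃ h : α ≃ₜ β, ∀ x, x ∈ X ↔ h x ∈ Y := by
  obtain ⟨K, hK, hKint, hXK⟩ := exists_isClosed_cover_of_isMeagre hX
  obtain ⟨L, hL, hLint, hYL⟩ := exists_isClosed_cover_of_isMeagre hY
  obtain ⟨ι, hι, hιinj⟩ := exists_continuous_injective_cantor (α := α)
  obtain ⟨κ, hκ, hκinj⟩ := exists_continuous_injective_cantor (α := β)
  obtain ⟨f⟩ := nonempty_homeomorph (α := α) (β := β)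
  choose next hle hKn hLn hsep hsep' using fun n (s : PartialMatching X Y) =>
    s.exists_ge hXY hYX (hK n) (hKint n) (hL n) (hLint n) (isLocallyConstant_coord hι n)
      (isLocallyConstant_coord hκ n)
  let s (n : ℕ) : PartialMatching X Y := n.rec
    { toHomeo := f
      dom := ∅
      word := fun _ => []
      isClosed_dom := isClosed_empty
      interior_dom := interior_empty
      mem_iff := fun _ h => h.elim
      isLocallyConstant_word := .const _ } next
  refine PartialMatching.exists_homeomorph_of_monotone (s := s)
    (monotone_nat_of_le_succ fun n => hle n (s n)) ?_ ?_ ?_ ?_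
  · exact hXK.trans (iUnion_subset fun n => subset_iUnion_of_subset (n + 1) (hKn n (s n)))
  · exact hYL.trans (iUnion_subset fun n => subset_iUnion_of_subset (n + 1) (hLn n (s n)))
  · exact fun x x' h => hιinj (funext fun n => hsep n (s n) x x' (h (n + 1)))
  · exact fun y y' h => hκinj (funext fun n => hsep' n (s n) y y' (h (n + 1)))

end BackAndForth

section Category

variable {Z W : Type*} [TopologicalSpace Z] [TopologicalSpace W]

theorem firstCategory_iff_isMeagre_univ : FirstCategory Z ↔ IsMeagre (univ : Set Z) := by
  constructor
  · rintro ⟨f, hf, hu⟩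
    exact hu ▸ isMeagre_iUnion fun n => IsNowhereDense.isMeagre (hf n)
  · intro h
    obtain ⟨K, hK, hKint, hu⟩ := exists_isClosed_cover_of_isMeagre h
    exact ⟨K, fun n => (hK n).closure_eq.symm ▸ hKint n, hu.antisymm (subset_univ _)⟩

theorem FirstCategory.of_homeomorph (e : Z ≃ₜ W) (h : FirstCategory Z) : FirstCategory W :=
  firstCategory_iff_isMeagre_univ.2 <| (firstCategory_iff_isMeagre_univ.1 h).preimage_of_isOpenMap
    e.symm.continuous e.symm.isOpenMap

theorem IsHomogeneous.firstCategory_or_baireSpace [SecondCountableTopology Z]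
    (hZ : IsHomogeneous Z) : FirstCategory Z ∨ BaireSpace Z := by
  refine or_iff_not_imp_right.2 fun hnot => firstCategory_iff_isMeagre_univ.2 ?_
  obtain ⟨f, hf, hfd, hnd⟩ : ∃ f : ℕ → Set Z, (∀ n, IsOpen (f n)) ∧ (∀ n, Dense (f n)) ∧
      ¬ Dense (⋂ n, f n) := by
    by_contra! h
    exact hnot ⟨h⟩
  let O : Set Z := (closure (⋂ n, f n))ᶜ
  have hO : IsOpen O := isClosed_closure.isOpen_compl
  obtain ⟨z, hz⟩ : O.Nonempty :=
    nonempty_compl.2 fun h => hnd (dense_iff_closure_eq.2 h)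
  have hmeagre : IsMeagre O := by
    rw [IsMeagre, compl_compl]
    exact mem_of_superset
      (countable_iInter_mem.2 fun n => residual_of_dense_open (hf n) (hfd n)) subset_closure
  obtain ⟨T, hT, hTO⟩ := isOpen_iUnion_countable (fun h : Z ≃ₜ Z => h ⁻¹' O)
    fun h => hO.preimage h.continuous
  have hcover : ⋃ h : Z ≃ₜ Z, h ⁻¹' O = univ := eq_univ_of_forall fun x => by
    obtain ⟨h, hh⟩ := hZ x z
    exact mem_iUnion.2 ⟨h, (hh ▸ hz : h x ∈ O)⟩
  rw [← hcover, ← hTO]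
  exact isMeagre_biUnion hT fun h _ => hmeagre.preimage_of_isOpenMap h.continuous h.isOpenMap

theorem IsHomogeneous.perfectSpace [SecondCountableTopology Z] (hZ : IsHomogeneous Z)
    [Uncountable Z] : PerfectSpace Z := by
  refine perfectSpace_iff_forall_not_isolated.2 fun z => ?_
  by_contra hz
  have hopen : IsOpen {z} := isOpen_singleton_iff_punctured_nhds z |>.2 (not_neBot.1 hz)
  have : DiscreteTopology Z := discreteTopology_iff_isOpen_singleton.2 fun x => by
    obtain ⟨h, rfl⟩ := hZ x z
    simpa [← image_singleton, h.injective.preimage_image] using hopen.preimage h.continuous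
  exact not_countable (α := Z) countable_of_Lindelof_of_discrete

variable {i : Z → W}

theorem perfectSpace_of_isDenseEmbedding [PerfectSpace Z] (hi : IsDenseEmbedding i) :
    PerfectSpace W := by
  refine perfectSpace_iff_forall_not_isolated.2 fun w => ?_
  by_contra hw
  have hopen : IsOpen {w} := isOpen_singleton_iff_punctured_nhds w |>.2 (not_neBot.1 hw)
  obtain ⟨z, rfl⟩ := hi.dense.exists_mem_open hopen (singleton_nonempty w)
  have hz : IsOpen {z} := by
    simpa [← image_singleton, hi.injective.preimage_image] using hopen.preimage hi.continuous
  exact (PerfectSpace.not_isolated z).ne ((isOpen_singleton_iff_punctured_nhds z).1 hz)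

theorem isMeagre_preimage_of_isDenseInducing (hi : IsDenseInducing i) {M : Set W}
    (hM : IsMeagre M) : IsMeagre (i ⁻¹' M) := by
  have htendsto : Tendsto i (residual Z) (residual W) := by
    refine le_countableGenerate_iff_of_countableInterFilter.2 fun O ⟨hO, hOd⟩ =>
      residual_of_dense_open (hO.preimage hi.continuous) (hi.dense_image.1 ?_)
    rw [image_preimage_eq_inter_range]
    exact hOd.inter_of_isOpen_left hi.dense hO
  exact htendsto hM

theorem isMeagre_range_of_firstCategory (hi : IsInducing i) (hZ : FirstCategory Z) :
    IsMeagre (range i) :=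
  image_univ ▸ hi.isMeagre_image (firstCategory_iff_isMeagre_univ.1 hZ)

theorem isMeagre_compl_range_of_baireSpace [MeasurableSpace W] [BorelSpace W] [BaireSpace Z]
    (hi : IsDenseInducing i) (hrange : MeasurableSet (range i)) : IsMeagre (range i)ᶜ := by
  obtain ⟨u, hu, hru⟩ := hrange.residualEq_isOpen
  have hru' : ∀ᶠ w in residual W, w ∈ range i ↔ w ∈ u := hru.mono fun _ h => iff_of_eq h
  have hdense : Dense u := by
    by_contra hnd
    let O : Set W := (closure u)ᶜ
    have hO : IsOpen O := isClosed_closure.isOpen_compl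
    have hmeagre : IsMeagre (range i ∩ O) :=
      hru'.mono fun w hw hw' => hw'.2 (subset_closure (hw.1 hw'.1))
    obtain ⟨z, hz⟩ := hi.dense.exists_mem_open hO
      (nonempty_compl.2 fun h => hnd (dense_iff_closure_eq.2 h))
    refine not_isMeagre_of_isOpen (hO.preimage hi.continuous) ⟨z, hz⟩ ?_
    simpa using isMeagre_preimage_of_isDenseInducing hi hmeagre
  rw [IsMeagre, compl_compl]
  filter_upwards [hru', residual_of_dense_open hu hdense] with w hw hwu using hw.2 hwu

end Category

section Closure

variable {X Y : Set Cantor}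

/-- The set `X`, regarded as a subset of the compact space `closure X`. -/
def traceOnClosure (X : Set Cantor) : Set (closure X) :=
  {x | x.1 ∈ X}

theorem range_inclusion_closure (X : Set Cantor) :
    range (inclusion (subset_closure (s := X))) = traceOnClosure X :=
  range_inclusion _

theorem isDenseEmbedding_inclusion_closure (X : Set Cantor) :
    IsDenseEmbedding (inclusion (subset_closure (s := X))) where
  toIsInducing := (IsEmbedding.inclusion subset_closure).isInducing
  dense := (denseRange_inclusion_iff _).2 Subset.rfl
  injective := inclusion_injective _

theorem isMeagre_traceOnClosure (hX : FirstCategory X) : IsMeagre (traceOnClosure X) :=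
  range_inclusion_closure X ▸
    isMeagre_range_of_firstCategory (isDenseEmbedding_inclusion_closure X).isInducing hX

theorem isMeagre_compl_traceOnClosure (hX : MeasurableSet X) [BaireSpace X] :
    IsMeagre (traceOnClosure X)ᶜ := by
  rw [← range_inclusion_closure]
  refine isMeagre_compl_range_of_baireSpace
    (isDenseEmbedding_inclusion_closure X).isDenseInducing ?_
  rw [range_inclusion_closure]
  exact measurable_subtype_coe hX

theorem uncountable_of_not_isGδRanked (hX : ¬ IsGδRanked X) : Uncountable X := by
  refine (uncountable_iff_not_countable _).2 fun (hc : X.Countable) => hX ?_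
  exact compl_compl X ▸ (IsGδRanked.of_isGδ hc.isGδ_compl).compl

theorem IsHomogeneous.perfectSpace_closure (hX : IsHomogeneous X) (hXr : ¬ IsGδRanked X) :
    PerfectSpace (closure X) :=
  have := uncountable_of_not_isGδRanked hXr
  have := hX.perfectSpace
  perfectSpace_of_isDenseEmbedding (isDenseEmbedding_inclusion_closure X)

theorem IsHomogeneous.embedsEverywhere (hX : MeasurableSet X) (hY : IsHomogeneous Y)
    (hYB : MeasurableSet Y) (hYr : ¬ IsGδRanked Y) (hXY : WadgeLe X Y) :
    EmbedsEverywhere (traceOnClosure X) (traceOnClosure Y) := by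
  intro O hO hne
  obtain ⟨O', hO', rfl⟩ := isOpen_induced_iff.1 hO
  obtain ⟨y, hy⟩ := (isDenseEmbedding_inclusion_closure Y).dense.exists_mem_open hO hne
  obtain ⟨t, ht, hyt, htO⟩ := compact_exists_isClopen_in_isOpen hO' hy
  obtain ⟨F, hF, hinj, hFX⟩ := hY.exists_injective_reduction hX hYB hYr ht ⟨y, y.2, hyt⟩ hXY
  exact ⟨fun x => ⟨F x, (hFX x).1.1⟩, (hF.comp continuous_subtype_val).subtype_mk _,
    fun x x' h => Subtype.ext (hinj (congrArg Subtype.val h)), fun x => htO (hFX x).1.2,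
    fun x => (hFX x).2.symm⟩

/-- The homeomorphism of a subset of the Cantor space with its trace on its closure. -/
noncomputable def homeomorphTraceOnClosure (X : Set Cantor) : X ≃ₜ traceOnClosure X :=
  (IsEmbedding.inclusion subset_closure).toHomeomorph.trans
    (.setCongr (range_inclusion_closure X))

theorem nonempty_homeomorph_of_wadgeEquiv (hX : MeasurableSet X) (hY : MeasurableSet Y)
    (hXhom : IsHomogeneous X) (hYhom : IsHomogeneous Y) (hXr : ¬ IsGδRanked X)
    (hYr : ¬ IsGδRanked Y) (hXY : WadgeEquiv X Y)
    (hcat : FirstCategory X ∧ FirstCategory Y ∨ BaireSpace X ∧ BaireSpace Y) :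
    Nonempty (X ≃ₜ Y) := by
  have : CompactSpace (closure X) := isCompact_iff_compactSpace.1 isClosed_closure.isCompact
  have : CompactSpace (closure Y) := isCompact_iff_compactSpace.1 isClosed_closure.isCompact
  have : PerfectSpace (closure X) := hXhom.perfectSpace_closure hXr
  have : PerfectSpace (closure Y) := hYhom.perfectSpace_closure hYr
  have := uncountable_of_not_isGδRanked hXr
  have := uncountable_of_not_isGδRanked hYr
  have : Nonempty (closure X) := .map (inclusion subset_closure) (inferInstanceAs (Nonempty X))
  have : Nonempty (closure Y) := .map (inclusion subset_closure) (inferInstanceAs (Nonempty Y))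
  have hXY' := hYhom.embedsEverywhere hX hY hYr hXY.1
  have hYX' := hXhom.embedsEverywhere hY hX hXr hXY.2
  rcases hcat with ⟨hXc, hYc⟩ | ⟨hXc, hYc⟩
  · obtain ⟨h, hh⟩ := exists_homeomorph_of_embedsEverywhere (isMeagre_traceOnClosure hXc)
      (isMeagre_traceOnClosure hYc) hXY' hYX'
    exact ⟨(homeomorphTraceOnClosure X).trans ((h.subtype hh).trans
      (homeomorphTraceOnClosure Y).symm)⟩
  · obtain ⟨h, hh⟩ := exists_homeomorph_of_embedsEverywhere (isMeagre_compl_traceOnClosure hX)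
      (isMeagre_compl_traceOnClosure hY) hXY'.compl hYX'.compl
    exact ⟨(homeomorphTraceOnClosure X).trans ((h.subtype fun x => not_iff_not.1 (hh x)).trans
      (homeomorphTraceOnClosure Y).symm)⟩

end Closure

/-- Steel's homeomorphism criterion for homogeneous Borel spaces outside Δ. -/
theorem steel_consequence (X Y : Set Cantor)
    (hXB : @MeasurableSet Cantor (borel Cantor) X)
    (hYB : @MeasurableSet Cantor (borel Cantor) Y)
    (hXhom : IsHomogeneous X) (hYhom : IsHomogeneous Y)
    (hXdel : ¬ InDelta X) (hYdel : ¬ InDelta Y) :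
    Nonempty (X ≃ₜ Y) ↔
      (WadgeEquiv X Y ∧
        ((FirstCategory X ∧ FirstCategory Y) ∨ (BaireSpace X ∧ BaireSpace Y))) := by
  rw [← BorelSpace.measurable_eq] at hXB hYB
  have hXr : ¬ IsGδRanked X := fun h => hXdel h.inDelta
  have hYr : ¬ IsGδRanked Y := fun h => hYdel h.inDelta
  constructor
  · rintro ⟨e⟩
    refine ⟨⟨.of_homeomorph e hXB hYhom hYB hYr, .of_homeomorph e.symm hYB hXhom hXB hXr⟩, ?_⟩
    rcases hXhom.firstCategory_or_baireSpace with hX | hX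
    · exact .inl ⟨hX, hX.of_homeomorph e⟩
    · exact .inr ⟨hX, e.symm.isOpenEmbedding.baireSpace⟩
  · rintro ⟨hXY, hcat⟩
    exact nonempty_homeomorph_of_wadgeEquiv hXB hYB hXhom hYhom hXr hYr hXY hcat
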